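/- (Discrete regularity) Let u ∈ C(B₁) be a normalized viscosity solution of D(x,∇u)F(x,D²u) = f(x) in B₁ ⊂ ℝⁿ with u(0) = 0 and u differentiable at 0, where F is (λ,Λ)-elliptic and D is a degeneracy law with exponent γ ∈ (0,1). Fix θ ∈ (0,1) and β ∈ (0,α₀) ∩ (0,(1+θ)/(1+γ)]. Then there exist η* > 0 and ρ ∈ (0,1/2), depending only on n, λ, Λ, λ̃, Λ̃, γ and β, such that if ‖ω_F‖_{L^∞(B₁)} + ‖f‖_{L^∞(B₁)} < η* and |∇u(0)| < η*, then sup_{B_ρ} |u| ≤ ρ^{1+β}. -/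

import Mathlib

/-!
The proof works in a class `Sol` of normalized functions `v` satisfying the shifted inequalities
`| |∇v - ξ| ^ γ F(x, D²v) | ≤ η` with coefficient oscillation at most `η`, where the shift `ξ ∈ ℝⁿ`
is arbitrary. The given `u` belongs to it with `ξ = 0` (`sol_of_viscosity`), and the class is
stable under subtracting affine functions and zooming in (`Sol.scale`).

*Compactness.* Members of the class satisfy an interior `C^{0,1/2}` estimate uniform in `ξ`
(`holder_est`). It is proved by the Ishii–Lions doubling of variables with the modulus
`L √t + 70 min(t, t*)`: the break point `t*` is chosen so that the slope of the modulus stays at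
distance at least `35` from `|ξ|`, and hence the gradients of the doubled test function stay away
from the degeneracy point `ξ`. The theorem on sums is derived from a Jensen–Alexandrov lemma for
semiconvex functions (`jensen_alexandrov`), whose proof uses only planes touching the function
from above, so that the contact slope is a Lipschitz function and Rademacher's theorem applies.

*Approximation.* If the approximation by solutions of `G(D²h) = 0` failed, there would be members
of the class with `η → 0` that are not close to such solutions. Limits along an ultrafilter satisfy
the homogeneous equation for all test gradients except the limit of the shifts (`stability`), and
a single exceptional gradient is removable (`jets_all`); this contradiction gives `approximation`.

*Affine approximation and gradient bound.* The `C^{1,α₀}` hypothesis turns the approximation into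
`|v - p·x| ≤ C₁ r^{1+α₀} + 2ε` on `B_r` (`affine_approx`). Iterating it over the geometric
scales `ρ ^ k`
with exponent `α₀ / 2` bounds `|∇v(0)|` uniformly over the class (`gradient_bound`).

*Conclusion.* For `u` itself, let `p` be the slope from `affine_approx`. The gradient bound applied
to the rescaled difference `(u(r x) - r p·x) / a` bounds `|∇u(0) - p|` by `C₂ a / r`, which is small
for suitable `r` and `ε`. Since `|∇u(0)|` is small, so is `p`, and `|u| ≤ |p| ρ + C₁ ρ^{1+α₀} + 2ε`
on `B_ρ` gives the claim.
-/

open Metric Set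
open scoped RealInnerProductSpace

noncomputable section

attribute [local instance] Matrix.normedAddCommGroup

/-- Euclidean space ℝⁿ. -/
abbrev En (n : ℕ) := EuclideanSpace ℝ (Fin n)

/-- The Hessian matrix of `ψ` at `x`, given by second iterated Fréchet derivatives
in coordinate directions. -/
def hessMat {n : ℕ} (ψ : En n → ℝ) (x : En n) : Matrix (Fin n) (Fin n) ℝ :=
  Matrix.of fun i j =>
    iteratedFDeriv ℝ 2 ψ x ![EuclideanSpace.single i 1, EuclideanSpace.single j 1]

/-- The Pucci minimal operator `M⁻_{λ,Λ}`. -/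
def pucciMinus {n : ℕ} (lam Lam : ℝ) (M : Matrix (Fin n) (Fin n) ℝ) : ℝ :=
  sInf { t | ∃ A : Matrix (Fin n) (Fin n) ℝ, A.IsSymm ∧
      (A - lam • (1 : Matrix (Fin n) (Fin n) ℝ)).PosSemidef ∧
      (Lam • (1 : Matrix (Fin n) (Fin n) ℝ) - A).PosSemidef ∧ t = (A * M).trace }

/-- The Pucci maximal operator `M⁺_{λ,Λ}`. -/
def pucciPlus {n : ℕ} (lam Lam : ℝ) (M : Matrix (Fin n) (Fin n) ℝ) : ℝ :=
  - pucciMinus lam Lam (-M)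

/-- `(λ,Λ)`-uniform ellipticity for a variable coefficient operator on `B₁`,
normalized so that `F(x,0) = 0`. -/
def IsUnifElliptic {n : ℕ} (lam Lam : ℝ)
    (F : En n → Matrix (Fin n) (Fin n) ℝ → ℝ) : Prop :=
  (∀ x ∈ ball (0 : En n) 1, ∀ M N : Matrix (Fin n) (Fin n) ℝ, M.IsSymm → N.IsSymm →
      pucciMinus lam Lam (M - N) ≤ F x M - F x N ∧
        F x M - F x N ≤ pucciPlus lam Lam (M - N)) ∧
    ∀ x ∈ ball (0 : En n) 1, F x 0 = 0

/-- `(λ,Λ)`-uniform ellipticity for a constant coefficient operator, normalized. -/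
def IsUnifEllipticConst {n : ℕ} (lam Lam : ℝ)
    (G : Matrix (Fin n) (Fin n) ℝ → ℝ) : Prop :=
  (∀ M N : Matrix (Fin n) (Fin n) ℝ, M.IsSymm → N.IsSymm →
      pucciMinus lam Lam (M - N) ≤ G M - G N ∧ G M - G N ≤ pucciPlus lam Lam (M - N)) ∧
    G 0 = 0

/-- A degeneracy law with exponent `γ`: `λ̃|b|^γ ≤ D(x,b) ≤ Λ̃|b|^γ`. -/
def IsDegeneracyLaw {n : ℕ} (tlam tLam γ : ℝ) (Dg : En n → En n → ℝ) : Prop :=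
  ∀ x ∈ ball (0 : En n) 1, ∀ b : En n,
    tlam * ‖b‖ ^ γ ≤ Dg x b ∧ Dg x b ≤ tLam * ‖b‖ ^ γ

/-- Viscosity solution of `G(x, ∇u, D²u) = f(x)` on a set `Ω`. -/
def IsViscositySolutionOn {n : ℕ} (Ω : Set (En n))
    (G : En n → En n → Matrix (Fin n) (Fin n) ℝ → ℝ) (f : En n → ℝ) (u : En n → ℝ) : Prop :=
  (∀ ψ : En n → ℝ, ContDiff ℝ 2 ψ → ∀ x₀ ∈ Ω,
      IsLocalMax (fun x => u x - ψ x) x₀ →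
        f x₀ ≤ G x₀ (gradient ψ x₀) (hessMat ψ x₀)) ∧
  (∀ ψ : En n → ℝ, ContDiff ℝ 2 ψ → ∀ x₀ ∈ Ω,
      IsLocalMin (fun x => u x - ψ x) x₀ →
        G x₀ (gradient ψ x₀) (hessMat ψ x₀) ≤ f x₀)

/-- Interior `C^{1,α₀}` estimate, with constant `C₀`, for viscosity solutions of
constant-coefficient homogeneous `(λ,Λ)`-elliptic equations `G(D²h) = 0` in `B_{3/4}`
that vanish to first order at the origin. -/
def InteriorC1AlphaEstimate (n : ℕ) (lam Lam α₀ C₀ : ℝ) : Prop :=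
  ∀ G : Matrix (Fin n) (Fin n) ℝ → ℝ, IsUnifEllipticConst lam Lam G →
    ∀ h : En n → ℝ, ContinuousOn h (ball (0 : En n) (3/4)) →
      IsViscositySolutionOn (ball (0 : En n) (3/4)) (fun _ _ M => G M) (fun _ => 0) h →
      (∀ x ∈ ball (0 : En n) (3/4), |h x| ≤ 1) →
      h 0 = 0 → gradient h 0 = 0 →
      ∀ r : ℝ, 0 < r → r ≤ 1/2 → ∀ x ∈ ball (0 : En n) r, |h x| ≤ C₀ * r ^ (1 + α₀)

/-! ### Semiconvex functions: the Jensen–Alexandrov lemma -/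

open Filter Topology MeasureTheory
open scoped Pointwise

/-- Telescoping a modulus of continuity over `N` equal steps of `[0,1]`. -/
lemma telescope_bound (g : ℝ → ℝ) (a b c : ℝ) (N : ℕ) (hN : 0 < N)
    (h : ∀ s ∈ Icc (0:ℝ) 1, ∀ t ∈ Icc (0:ℝ) 1, g t - g s ≤ a * |t - s| + b * (t - s) ^ 2 + c) :
    |g 1 - g 0| ≤ a + b / N + N * c := by
  have hN' : (0:ℝ) < N := by exact_mod_cast hN
  have key : ∀ k : ℕ, k ≤ N →
      |g (k / N) - g 0| ≤ k * (a / N + b / N ^ 2 + c) := by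
    intro k
    induction k with
    | zero => intro _; simp
    | succ k ih =>
      intro hk
      have ih' := ih (by omega)
      have hk' : ((k:ℝ) + 1) ≤ N := by exact_mod_cast hk
      have m1 : ((k:ℝ) / N) ∈ Icc (0:ℝ) 1 :=
        ⟨by positivity, by rw [div_le_one hN']; linarith⟩
      have m2 : (((k + 1 : ℕ):ℝ) / N) ∈ Icc (0:ℝ) 1 := by
        refine ⟨by positivity, ?_⟩
        rw [div_le_one hN']; push_cast; linarith
      have e1 : ((k + 1 : ℕ):ℝ) / N - k / N = 1 / N := by push_cast; field_simp; ring
      have e2 : (k:ℝ) / N - ((k + 1 : ℕ):ℝ) / N = - (1 / N) := by push_cast; field_simp; ring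
      have h1 := h _ m1 _ m2
      have h2 := h _ m2 _ m1
      rw [e1, abs_of_pos (by positivity)] at h1
      rw [e2, abs_neg, abs_of_pos (by positivity)] at h2
      have e3 : a * (1 / N) + b * (1 / (N:ℝ)) ^ 2 + c = a / N + b / N ^ 2 + c := by
        field_simp
      have e4 : a * (1 / N) + b * (-(1 / (N:ℝ))) ^ 2 + c = a / N + b / N ^ 2 + c := by
        field_simp
      rw [e3] at h1; rw [e4] at h2
      have : |g (((k + 1 : ℕ):ℝ) / N) - g (k / N)| ≤ a / N + b / N ^ 2 + c :=
        abs_le.2 ⟨by linarith, h1⟩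
      calc |g (((k + 1 : ℕ):ℝ) / N) - g 0|
          ≤ |g (((k + 1 : ℕ):ℝ) / N) - g (k / N)| + |g (k / N) - g 0| := abs_sub_le _ _ _
        _ ≤ _ := by push_cast at this ⊢; linarith
  have := key N le_rfl
  rw [div_self hN'.ne'] at this
  calc _ ≤ _ := this
    _ = _ := by field_simp

section Jensen

variable {Z : Type*} [NormedAddCommGroup Z] [InnerProductSpace ℝ Z]

/-- At a point where a semiconvex function is touched from above by a plane, the paraboloid
touching it from below has the slope of that plane. -/
lemma touch_slope {w : Z → ℝ} {U : Set Z} (hU : IsOpen U) {C : ℝ} {z p a : Z}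
    (hz : z ∈ U) (hp : ∀ z' ∈ U, w z' ≤ w z + ⟪p, z' - z⟫)
    (ha : ∀ z' ∈ U, w z + ⟪a, z' - z⟫ - C * ‖z' - z‖ ^ 2 ≤ w z') : a = p := by
  by_contra hne
  set d := a - p with hd
  have hd0 : 0 < ‖d‖ := norm_pos_iff.2 (sub_ne_zero.2 hne)
  have hcont : ContinuousAt (fun t : ℝ => z + t • d) 0 := by fun_prop
  have h1 : ∀ᶠ t : ℝ in 𝓝 0, z + t • d ∈ U := hcont (by simpa using hU.mem_nhds hz)
  have h2 : ∀ᶠ t : ℝ in 𝓝[>] 0, z + t • d ∈ U := h1.filter_mono nhdsWithin_le_nhds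
  have h3 : ∀ᶠ t : ℝ in 𝓝[>] 0, C * t < 1 := by
    have : Tendsto (fun t : ℝ => C * t) (𝓝 0) (𝓝 (C * 0)) := by
      exact (continuous_const.mul continuous_id).tendsto 0
    have := (this.eventually (gt_mem_nhds (by simp : C * 0 < 1)))
    exact this.filter_mono nhdsWithin_le_nhds
  obtain ⟨t, ⟨ht1, ht2⟩, ht⟩ := ((h2.and h3).and self_mem_nhdsWithin).exists
  have ht : 0 < t := ht
  have e1 := hp _ ht1
  have e2 := ha _ ht1
  simp only [add_sub_cancel_left, inner_smul_right, norm_smul, Real.norm_eq_abs, abs_of_pos ht]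
    at e1 e2
  have e3 : ⟪a, d⟫ - ⟪p, d⟫ = ‖d‖ ^ 2 := by
    rw [← inner_sub_left, ← hd, real_inner_self_eq_norm_sq]
  have : t * ‖d‖ ^ 2 ≤ C * t * (t * ‖d‖ ^ 2) := by nlinarith
  have h4 : 0 < t * ‖d‖ ^ 2 := by positivity
  nlinarith

/-- The contact slopes of a semiconvex function are a Lipschitz function of the contact point. -/
lemma touch_lipschitz {w : Z → ℝ} {z0 : Z} {r C : ℝ}
    {z1 z2 p1 p2 : Z} (h1 : z1 ∈ ball z0 (r / 3)) (h2 : z2 ∈ ball z0 (r / 3))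
    (t1 : ∀ z' ∈ ball z0 r, w z' ≤ w z1 + ⟪p1, z' - z1⟫)
    (s1 : ∀ z' ∈ ball z0 r, w z1 + ⟪p1, z' - z1⟫ - C * ‖z' - z1‖ ^ 2 ≤ w z')
    (s2 : ∀ z' ∈ ball z0 r, w z2 + ⟪p2, z' - z2⟫ - C * ‖z' - z2‖ ^ 2 ≤ w z')
    (hne : p1 ≠ p2) (hz : z1 ≠ z2) :
    ‖p2 - p1‖ ≤ 2 * C * ‖z2 - z1‖ := by
  have hd : 0 < ‖p2 - p1‖ := norm_pos_iff.2 (sub_ne_zero.2 hne.symm)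
  have hl : 0 < ‖z2 - z1‖ := norm_pos_iff.2 (sub_ne_zero.2 hz.symm)
  rw [mem_ball, dist_eq_norm] at h1 h2
  have hr : 0 < r := by have := norm_nonneg (z1 - z0); linarith
  set l := ‖z2 - z1‖ with hldef
  have hl2 : l < 2 * r / 3 := by
    have : ‖z2 - z1‖ ≤ ‖z2 - z0‖ + ‖z1 - z0‖ := by
      rw [show z2 - z1 = (z2 - z0) - (z1 - z0) by abel]; exact norm_sub_le _ _
    linarith
  set z := z2 + (l / ‖p2 - p1‖) • (p2 - p1) with hzdef
  have hzz : z - z2 = (l / ‖p2 - p1‖) • (p2 - p1) := by rw [hzdef]; abel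
  have hzn : ‖z - z2‖ = l := by
    rw [hzz, norm_smul, Real.norm_eq_abs, abs_of_pos (by positivity), div_mul_cancel₀ _ hd.ne']
  have hzU : z ∈ ball z0 r := by
    rw [mem_ball, dist_eq_norm, show z - z0 = (z - z2) + (z2 - z0) by abel]
    have := norm_add_le (z - z2) (z2 - z0)
    linarith
  have hz2U : z2 ∈ ball z0 r := by rw [mem_ball, dist_eq_norm]; linarith
  have a1 := t1 z hzU
  have a2 := s2 z hzU
  have a3 := s1 z2 hz2U
  rw [hzn] at a2
  have e1 : ⟪p1, z - z1⟫ = ⟪p1, z - z2⟫ + ⟪p1, z2 - z1⟫ := by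
    rw [← inner_add_right]; congr 1; abel
  have e2 : ⟪p2, z - z2⟫ - ⟪p1, z - z2⟫ = l * ‖p2 - p1‖ := by
    rw [← inner_sub_left, hzz, inner_smul_right, real_inner_self_eq_norm_sq]
    field_simp
  have : l * ‖p2 - p1‖ ≤ l * (2 * C * l) := by nlinarith
  exact le_of_mul_le_mul_left this hl

/-- At a density point every nearby point is close, relative to the distance to the centre,
to the set. -/
lemma density_net [FiniteDimensional ℝ Z] [MeasurableSpace Z] [BorelSpace Z]
    (μ : Measure Z) [μ.IsAddHaarMeasure] (K : Set Z) (z : Z)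
    (h : Tendsto (fun r => μ (K ∩ closedBall z r) / μ (closedBall z r)) (𝓝[>] 0) (𝓝 1))
    {ε : ℝ} (hε : 0 < ε) :
    ∀ᶠ r in 𝓝[>] (0:ℝ), ∀ y ∈ closedBall z r, ∃ k ∈ K, ‖k - y‖ ≤ ε * r := by
  have hcomp : IsCompact (closedBall (0:Z) 1) := isCompact_closedBall 0 1
  obtain ⟨t, -, htfin, htcov⟩ :=
    Metric.totallyBounded_iff.1 hcomp.totallyBounded (ε / 2) (by positivity) |>.imp
      (fun t ht => (⟨trivial, ht.1, ht.2⟩ : True ∧ _ ∧ _))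
  have hall : ∀ᶠ r in 𝓝[>] (0:ℝ), ∀ y ∈ t, (K ∩ ({z} + r • ball y (ε / 2))).Nonempty := by
    rw [Filter.eventually_all_finite htfin]
    intro y _
    exact Measure.eventually_nonempty_inter_smul_of_density_one μ K z h _ measurableSet_ball
      (measure_ball_pos μ y (by positivity)).ne'
  filter_upwards [hall, self_mem_nhdsWithin] with r hr (hr0 : 0 < r) y hy
  have hy' : r⁻¹ • (y - z) ∈ closedBall (0:Z) 1 := by
    rw [mem_closedBall_zero_iff, norm_smul, norm_inv, Real.norm_eq_abs, abs_of_pos hr0,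
      inv_mul_le_one₀ hr0]
    rwa [mem_closedBall, dist_eq_norm] at hy
  obtain ⟨c, hc, hyc⟩ := mem_iUnion₂.1 (htcov hy')
  obtain ⟨k, hkK, hk⟩ := hr c hc
  rw [Set.singleton_add, mem_image] at hk
  obtain ⟨k', hk', rfl⟩ := hk
  obtain ⟨k'', hk'', rfl⟩ := hk'
  refine ⟨_, hkK, ?_⟩
  rw [mem_ball, dist_eq_norm] at hk'' hyc
  have : z + r • k'' - y = r • ((k'' - c) - (r⁻¹ • (y - z) - c)) := by
    rw [sub_sub_sub_cancel_right, smul_sub, smul_smul, mul_inv_cancel₀ hr0.ne', one_smul]; abel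
  change ‖z + r • k'' - y‖ ≤ _
  rw [this, norm_smul, Real.norm_eq_abs, abs_of_pos hr0, mul_comm]
  gcongr
  exact (norm_sub_le _ _).trans (by linarith)

/-- The scalar arithmetic behind one telescoping step of `contact_expansion`. -/
lemma step_algebra (A B wa wb p0 pk Q e1 e2 e2' e3 N : ℝ)
    (i3 : wb - wa ≤ (B - A) * pk + e3 * (e2 * N))
    (i7 : (B - A) * (pk - p0 - A * Q) ≤ |B - A| * e1)
    (i8 : -(1 / 2 * (B - A) ^ 2 * Q) ≤ (B - A) ^ 2 * e2') :
    (wb - B * p0 - 1 / 2 * B ^ 2 * Q) - (wa - A * p0 - 1 / 2 * A ^ 2 * Q) ≤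
      e1 * |B - A| + e2' * (B - A) ^ 2 + e3 * e2 * N := by
  linarith

/-- Second-order expansion of `w` at a density point `z1` of its contact set `K` at which an
extension `g` of the slope map is differentiable. For `z, z'` near `z1` and a contact point `k`
close to `z`, the plane touching at `k` and semiconvexity give
`w z' - w z ≤ ⟪g k, z' - z⟫ + C ‖z - k‖²`; telescoping this along a segment yields the
expansion. -/
lemma contact_expansion {w : Z → ℝ} {z0 z1 : Z} {r C : ℝ} {K : Set Z} {g : Z → Z} {S : Z →L[ℝ] Z}
    (hC : 0 ≤ C) (hz1 : z1 ∈ ball z0 r)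
    (hK1 : ∀ k ∈ K, ∀ z' ∈ ball z0 r, w z' ≤ w k + ⟪g k, z' - k⟫)
    (hK2 : ∀ k ∈ K, ∀ z' ∈ ball z0 r, w k + ⟪g k, z' - k⟫ - C * ‖z' - k‖ ^ 2 ≤ w z')
    (hg : HasFDerivAt g S z1)
    (hnet : ∀ ε > (0:ℝ), ∀ᶠ ρ in 𝓝[>] (0:ℝ), ∀ y ∈ closedBall z1 ρ, ∃ k ∈ K, ‖k - y‖ ≤ ε * ρ)
    {δ : ℝ} (hδ : 0 < δ) :
    ∀ᶠ z in 𝓝 z1, |w z - w z1 - ⟪g z1, z - z1⟫ - 1 / 2 * ⟪S (z - z1), z - z1⟫|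
      ≤ δ * ‖z - z1‖ ^ 2 := by
  set s := ‖S‖ with hs
  have hs0 : 0 ≤ s := norm_nonneg _
  obtain ⟨N, hN⟩ := exists_nat_gt (s / δ * 2 + 1)
  have hN0 : 0 < N := by
    have : (0:ℝ) < N := lt_of_le_of_lt (by positivity) hN
    exact_mod_cast this
  have hN' : (0:ℝ) < N := by exact_mod_cast hN0
  -- `τ` bounds the relative error of the contact net and of the linearisation of `g`
  obtain ⟨τ, hτ0, hτ1, hτ2⟩ : ∃ τ : ℝ, 0 < τ ∧ τ ≤ 1 ∧ (s + 2) * τ + N * (C * τ) ≤ δ / 2 := by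
    refine ⟨min 1 (δ / 2 / (s + 2 + N * C)), by positivity, min_le_left _ _, ?_⟩
    have : min 1 (δ / 2 / (s + 2 + N * C)) ≤ δ / 2 / (s + 2 + N * C) := min_le_right _ _
    rw [le_div_iff₀ (by positivity)] at this
    linarith
  have hg' := hg.isLittleO.def hτ0
  obtain ⟨r1, hr1, hr1'⟩ := Metric.eventually_nhds_iff_ball.1 hg'
  obtain ⟨r2, hr2, hr2'⟩ := mem_nhdsGT_iff_exists_Ioo_subset.1 (hnet τ hτ0)
  obtain ⟨r3, hr3, hr3'⟩ := Metric.isOpen_ball.mem_nhds hz1 |> Metric.mem_nhds_iff.1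
  have hr2 : 0 < r2 := hr2
  have hmem : ball z1 (min (r1 / 2) (min r2 r3)) ∈ 𝓝 z1 := ball_mem_nhds _ (by positivity)
  filter_upwards [hmem] with z hz
  rcases eq_or_ne z z1 with rfl | hne
  · simp
  set ζ := z - z1 with hζ
  have hζ0 : 0 < ‖ζ‖ := norm_pos_iff.2 (sub_ne_zero.2 hne)
  rw [mem_ball, dist_eq_norm, ← hζ, lt_min_iff, lt_min_iff] at hz
  obtain ⟨hza, hzb, hzc⟩ := hz
  have hnet' := hr2' ⟨hζ0, hzb⟩
  set G : ℝ → ℝ := fun t => w (z1 + t • ζ) - t * ⟪g z1, ζ⟫ - 1 / 2 * t ^ 2 * ⟪S ζ, ζ⟫ with hG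
  have hball : ∀ t ∈ Icc (0:ℝ) 1, z1 + t • ζ ∈ closedBall z1 ‖ζ‖ := by
    intro t ht
    rw [mem_closedBall, dist_eq_norm, add_sub_cancel_left, norm_smul, Real.norm_eq_abs,
      abs_of_nonneg ht.1]
    exact mul_le_of_le_one_left (norm_nonneg _) ht.2
  have hball' : ∀ t ∈ Icc (0:ℝ) 1, z1 + t • ζ ∈ ball z0 r := by
    intro t ht
    apply hr3'
    exact mem_ball.2 ((mem_closedBall.1 (hball t ht)).trans_lt hzc)
  have hSb : |⟪S ζ, ζ⟫| ≤ s * ‖ζ‖ ^ 2 := by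
    refine (abs_real_inner_le_norm _ _).trans ?_
    have := S.le_opNorm ζ
    nlinarith
  have main := telescope_bound G (((s + 2) * τ) * ‖ζ‖ ^ 2) (s * ‖ζ‖ ^ 2)
    (C * τ ^ 2 * ‖ζ‖ ^ 2) N hN0 ?_
  · have e1 : G 1 - G 0 = w z - w z1 - ⟪g z1, ζ⟫ - 1 / 2 * ⟪S ζ, ζ⟫ := by
      simp [hG, hζ]; ring
    rw [e1] at main
    refine main.trans ?_
    have h1 : s / N ≤ δ / 2 := by
      rw [div_le_iff₀ hN']
      have : s / δ * 2 < N := by linarith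
      rw [div_mul_eq_mul_div, div_lt_iff₀ hδ] at this
      linarith
    have h2 : N * (C * τ ^ 2) ≤ N * (C * τ) := by
      have : τ ^ 2 ≤ τ := by nlinarith
      gcongr
    have h3 : (s + 2) * τ + s / N + N * (C * τ ^ 2) ≤ δ := by linarith
    calc _ = ((s + 2) * τ + s / N + N * (C * τ ^ 2)) * ‖ζ‖ ^ 2 := by ring
      _ ≤ _ := by gcongr
  · intro a ha b hb
    obtain ⟨k, hkK, hk⟩ := hnet' _ (hball a ha)
    have i1 := hK1 k hkK _ (hball' b hb)
    have i2 := hK2 k hkK _ (hball' a ha)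
    have e1 : ⟪g k, z1 + b • ζ - k⟫ - ⟪g k, z1 + a • ζ - k⟫ = (b - a) * ⟪g k, ζ⟫ := by
      rw [← inner_sub_right, ← inner_smul_right]; congr 1
      rw [sub_smul]; abel
    have e2 : ‖z1 + a • ζ - k‖ ^ 2 ≤ τ ^ 2 * ‖ζ‖ ^ 2 := by
      rw [norm_sub_rev, ← mul_pow]; gcongr
    have i3 : w (z1 + b • ζ) - w (z1 + a • ζ) ≤ (b - a) * ⟪g k, ζ⟫ + C * (τ ^ 2 * ‖ζ‖ ^ 2) := by
      have := mul_le_mul_of_nonneg_left e2 hC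
      linarith
    have hkn : ‖k - z1‖ ≤ 2 * ‖ζ‖ := by
      have : k - z1 = (k - (z1 + a • ζ)) + a • ζ := by abel
      rw [this]
      refine (norm_add_le _ _).trans ?_
      rw [norm_smul, Real.norm_eq_abs, abs_of_nonneg ha.1]
      have := ha.2
      nlinarith
    have hkb : k ∈ ball z1 r1 := by rw [mem_ball, dist_eq_norm]; linarith
    have i4 := hr1' k hkb
    -- linearisation of the slope at the contact point `k ≈ z1 + a ζ`
    have i5 : |⟪g k, ζ⟫ - ⟪g z1, ζ⟫ - a * ⟪S ζ, ζ⟫| ≤ (s + 2) * τ * ‖ζ‖ ^ 2 := by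
      have e3 : ⟪g k, ζ⟫ - ⟪g z1, ζ⟫ - a * ⟪S ζ, ζ⟫ =
          ⟪(g k - g z1 - S (k - z1)) + S (k - (z1 + a • ζ)), ζ⟫ := by
        rw [inner_add_left, inner_sub_left, inner_sub_left]
        have : S (k - z1) = S (k - (z1 + a • ζ)) + a • S ζ := by
          rw [← map_smul, ← map_add]; congr 1; abel
        rw [this, inner_add_left, inner_smul_left]
        simp; ring
      rw [e3]
      refine (abs_real_inner_le_norm _ _).trans ?_
      have i6 : ‖(g k - g z1 - S (k - z1)) + S (k - (z1 + a • ζ))‖ ≤ (s + 2) * τ * ‖ζ‖ := by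
        refine (norm_add_le _ _).trans ?_
        have j1 := (S.le_opNorm (k - (z1 + a • ζ))).trans
          (mul_le_mul_of_nonneg_left hk hs0)
        have j2 : τ * ‖k - z1‖ ≤ τ * (2 * ‖ζ‖) := by gcongr
        linarith
      nlinarith
    have i7 : (b - a) * (⟪g k, ζ⟫ - ⟪g z1, ζ⟫ - a * ⟪S ζ, ζ⟫) ≤
        |b - a| * ((s + 2) * τ * ‖ζ‖ ^ 2) := by
      refine (le_abs_self _).trans ?_
      rw [abs_mul]; gcongr
    have i8 : -(1 / 2 * (b - a) ^ 2 * ⟪S ζ, ζ⟫) ≤ (b - a) ^ 2 * (s * ‖ζ‖ ^ 2) := by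
      have j1 : -⟪S ζ, ζ⟫ ≤ s * ‖ζ‖ ^ 2 := (neg_le_abs _).trans hSb
      have j2 : 0 ≤ s * ‖ζ‖ ^ 2 := by positivity
      have j3 := mul_le_mul_of_nonneg_left j1 (sq_nonneg (b - a))
      have j4 := mul_nonneg (sq_nonneg (b - a)) j2
      linarith
    simp only [hG]
    exact step_algebra _ _ _ _ _ _ _ _ _ _ _ _ i3 i7 i8

/-- Jensen's lemma combined with Alexandrov's theorem, in the form needed for doubling variables:
near a strict maximum of a semiconvex function there is a point with a second-order expansion,
small gradient and nonpositive second derivative. The slopes of planes touching `w` from above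
near the maximum fill a small ball, and the contact slope is a Lipschitz function of the contact
point, so the contact set has positive measure; by Rademacher's theorem and the density theorem
some contact point satisfies the hypotheses of `contact_expansion`. -/
theorem jensen_alexandrov [FiniteDimensional ℝ Z] {w : Z → ℝ} {z0 : Z} {r δ C : ℝ}
    (hr : 0 < r) (hδ : 0 < δ) (hC : 0 ≤ C) (hcont : ContinuousOn w (closedBall z0 r))
    (hsc : ∀ z ∈ ball z0 r, ∃ a, ∀ z' ∈ ball z0 r, w z + ⟪a, z' - z⟫ - C * ‖z' - z‖ ^ 2 ≤ w z')
    (hmax : ∀ z ∈ closedBall z0 r, w z ≤ w z0 - δ * ‖z - z0‖ ^ 2) {ε : ℝ} (hε : 0 < ε) :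
    ∃ (z1 p : Z) (S : Z →L[ℝ] Z), ‖z1 - z0‖ < ε ∧ z1 ∈ ball z0 r ∧ ‖p‖ ≤ ε ∧
      (∀ ζ, ⟪S ζ, ζ⟫ ≤ 0) ∧
      ∀ δ' > (0:ℝ), ∀ᶠ z in 𝓝 z1, |w z - w z1 - ⟪p, z - z1⟫ - 1 / 2 * ⟪S (z - z1), z - z1⟫|
        ≤ δ' * ‖z - z1‖ ^ 2 := by
  let _ : MeasurableSpace Z := borel Z
  have _ : BorelSpace Z := ⟨rfl⟩
  set μ : Measure Z := μH[Module.finrank ℝ Z] with hμ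
  set η := min ε (r / 3) with hη
  have hη0 : 0 < η := by positivity
  set κ := min ε (δ * η / 2) with hκ
  have hκ0 : 0 < κ := by positivity
  set K : Set Z := {z | z ∈ ball z0 η ∧ ∃ p, ‖p‖ < κ ∧ ∀ z' ∈ ball z0 r, w z' ≤ w z + ⟪p, z' - z⟫}
    with hKdef
  have hηr : η ≤ r / 3 := min_le_right _ _
  have hKr : ∀ z ∈ K, z ∈ ball z0 r := fun z hz => ball_subset_ball (by linarith) hz.1
  choose! P hPκ hP using fun z (hz : z ∈ K) => hz.2
  have hP2 : ∀ k ∈ K, ∀ z' ∈ ball z0 r, w k + ⟪P k, z' - k⟫ - C * ‖z' - k‖ ^ 2 ≤ w z' := by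
    intro k hk
    obtain ⟨a, ha⟩ := hsc k (hKr k hk)
    have := touch_slope isOpen_ball (hKr k hk) (hP k hk) ha
    rwa [this] at ha
  have hLip : LipschitzOnWith (Real.toNNReal (2 * C)) P K := by
    refine LipschitzOnWith.of_dist_le_mul fun z1 hz1 z2 hz2 => ?_
    rw [Real.coe_toNNReal _ (by positivity), dist_comm, dist_comm z1, dist_eq_norm, dist_eq_norm]
    by_cases hne : P z1 = P z2
    · rw [hne, sub_self, norm_zero]; positivity
    · have hz : z1 ≠ z2 := fun h => hne (by rw [h])
      exact touch_lipschitz (ball_subset_ball hηr hz1.1) (ball_subset_ball hηr hz2.1)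
        (hP z1 hz1) (hP2 z1 hz1) (hP2 z2 hz2) hne hz
  have hsurj : ball (0:Z) κ ⊆ P '' K := by
    intro p hp
    rw [mem_ball_zero_iff] at hp
    obtain ⟨z, hz, hzmax⟩ := (isCompact_closedBall z0 r).exists_isMaxOn
      ⟨z0, mem_closedBall_self hr.le⟩
      (hcont.sub (f := w) (g := fun z => ⟪p, z⟫) (by fun_prop))
    have hzmax' : ∀ y ∈ closedBall z0 r, w y - ⟪p, y⟫ ≤ w z - ⟪p, z⟫ := fun y hy => hzmax hy
    have h1 := hzmax' z0 (mem_closedBall_self hr.le)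
    have h2 := hmax z hz
    have h3 : ⟪p, z0⟫ - ⟪p, z⟫ ≤ ‖p‖ * ‖z - z0‖ := by
      rw [← inner_sub_right, norm_sub_rev]; exact real_inner_le_norm _ _
    have h5 : κ ≤ δ * η / 2 := min_le_right _ _
    have h4 : ‖z - z0‖ < η := by
      by_contra hcon
      push Not at hcon
      have : δ * ‖z - z0‖ ^ 2 ≤ ‖p‖ * ‖z - z0‖ := by linarith
      have h6 : 0 < ‖z - z0‖ := by linarith
      have : δ * ‖z - z0‖ ≤ ‖p‖ := by nlinarith
      nlinarith
    have hzK : z ∈ K := by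
      refine ⟨by rwa [mem_ball, dist_eq_norm], p, hp, fun z' hz' => ?_⟩
      have := hzmax' z' (ball_subset_closedBall hz')
      rw [inner_sub_right]; linarith
    refine ⟨z, hzK, ?_⟩
    have hzr := hKr z hzK
    refine touch_slope isOpen_ball hzr (fun z' hz' => ?_) (hP2 z hzK)
    have := hzmax' z' (ball_subset_closedBall hz')
    rw [inner_sub_right]; linarith
  have hKpos : μ K ≠ 0 := by
    intro h0
    have h1 : μ (P '' K) ≤ _ := hLip.hausdorffMeasure_image_le (Nat.cast_nonneg _)
    rw [← hμ, h0, mul_zero] at h1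
    exact (measure_ball_pos μ (0:Z) hκ0).ne' (le_antisymm ((measure_mono hsurj).trans h1) bot_le)
  obtain ⟨g, hgL, hgK⟩ := hLip.extend_finite_dimension
  have hdiff : ∀ᵐ z ∂(μ.restrict K), DifferentiableAt ℝ g z :=
    ae_restrict_of_ae hgL.ae_differentiableAt
  have hdens := Besicovitch.ae_tendsto_measure_inter_div μ K
  obtain ⟨z1, hz1K, hz1d, hz1t⟩ : ∃ z ∈ K, DifferentiableAt ℝ g z ∧
      Tendsto (fun r => μ (K ∩ closedBall z r) / μ (closedBall z r)) (𝓝[>] 0) (𝓝 1) := by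
    by_contra hcon
    push Not at hcon
    have h1 := hdiff.and hdens
    have h2 : (μ.restrict K) K = 0 := by
      refine measure_mono_null (fun z hz => ?_) (ae_iff.1 h1)
      intro h
      exact hcon z hz h.1 h.2
    exact hKpos (by simpa using h2)
  have hexp := fun δ' hδ' => contact_expansion (w := w) (z0 := z0) (z1 := z1) (r := r) (C := C)
    (K := K) (g := g) (S := fderiv ℝ g z1) hC (hKr z1 hz1K)
    (fun k hk => by rw [← hgK hk]; exact hP k hk) (fun k hk => by rw [← hgK hk]; exact hP2 k hk)
    hz1d.hasFDerivAt (fun ε hε => density_net μ K z1 hz1t hε) (δ := δ') hδ'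
  rw [← hgK hz1K] at hexp
  refine ⟨z1, P z1, fderiv ℝ g z1, ?_, hKr z1 hz1K, ?_, ?_, hexp⟩
  · have := hz1K.1
    rw [mem_ball, dist_eq_norm] at this
    exact this.trans_le (min_le_left _ _)
  · exact (hPκ z1 hz1K).le.trans (min_le_left _ _)
  · intro ζ
    by_contra hpos
    push Not at hpos
    set S := fderiv ℝ g z1
    have hζ0 : ζ ≠ 0 := by rintro rfl; simp at hpos
    have hζn : 0 < ‖ζ‖ := norm_pos_iff.2 hζ0
    have h1 := hexp (⟪S ζ, ζ⟫ / (4 * ‖ζ‖ ^ 2)) (by positivity)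
    have h2 : ∀ᶠ z in 𝓝 z1, z ∈ ball z0 r := isOpen_ball.mem_nhds (hKr z1 hz1K)
    have hc : Tendsto (fun t : ℝ => z1 + t • ζ) (𝓝 0) (𝓝 z1) := by
      have : ContinuousAt (fun t : ℝ => z1 + t • ζ) 0 := by fun_prop
      simpa [ContinuousAt] using this
    have h3 := (hc.eventually (h1.and h2)).filter_mono
      (nhdsWithin_le_nhds : 𝓝[>] (0:ℝ) ≤ 𝓝 0)
    obtain ⟨t, ⟨ha, hb⟩, ht⟩ := (h3.and self_mem_nhdsWithin).exists
    have ht : 0 < t := ht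
    have hc := hP z1 hz1K _ hb
    simp only [add_sub_cancel_left, inner_smul_right, map_smul, inner_smul_left, norm_smul,
      Real.norm_eq_abs, abs_of_pos ht] at ha hc
    have h4 := (abs_le.1 ha).1
    have h5 : ⟪S ζ, ζ⟫ / (4 * ‖ζ‖ ^ 2) * (t * ‖ζ‖) ^ 2 = t ^ 2 * ⟪S ζ, ζ⟫ / 4 := by
      field_simp
    rw [h5] at h4
    simp only [conj_trivial] at h4
    nlinarith [mul_pos (pow_pos ht 2) hpos]

end Jensen

/-! ### Quadratic forms and ellipticity -/

open Filter Topology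

section Matrices

variable {n : ℕ}

/-- The continuous linear endomorphism of `ℝⁿ` given by a matrix. -/
abbrev toE (M : Matrix (Fin n) (Fin n) ℝ) : En n →L[ℝ] En n := Matrix.toEuclideanCLM (𝕜 := ℝ) M

/-- The quadratic form of a matrix. -/
def qf (M : Matrix (Fin n) (Fin n) ℝ) (x : En n) : ℝ := ⟪toE M x, x⟫

lemma qf_add (M N : Matrix (Fin n) (Fin n) ℝ) (x : En n) : qf (M + N) x = qf M x + qf N x := by
  simp [qf, toE, map_add, inner_add_left]

lemma qf_sub (M N : Matrix (Fin n) (Fin n) ℝ) (x : En n) : qf (M - N) x = qf M x - qf N x := by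
  simp [qf, toE, map_sub, inner_sub_left]

lemma qf_neg (M : Matrix (Fin n) (Fin n) ℝ) (x : En n) : qf (-M) x = - qf M x := by
  simp [qf, toE, map_neg, inner_neg_left]

lemma qf_smul (c : ℝ) (M : Matrix (Fin n) (Fin n) ℝ) (x : En n) : qf (c • M) x = c * qf M x := by
  simp [qf, toE, inner_smul_left]

lemma qf_one (x : En n) : qf (1 : Matrix (Fin n) (Fin n) ℝ) x = ‖x‖ ^ 2 := by
  simp [qf, toE]

lemma qf_smul_right (M : Matrix (Fin n) (Fin n) ℝ) (c : ℝ) (x : En n) :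
    qf M (c • x) = c ^ 2 * qf M x := by
  simp only [qf, map_smul, inner_smul_left, inner_smul_right, conj_trivial]; ring

lemma toE_symm {M : Matrix (Fin n) (Fin n) ℝ} (hM : M.IsSymm) (x y : En n) :
    ⟪toE M x, y⟫ = ⟪x, toE M y⟫ := by
  have h : star (toE M) = toE M := by
    rw [toE, ← map_star, Matrix.star_eq_conjTranspose,
      Matrix.conjTranspose_eq_transpose_of_trivial, hM.eq]
  rw [ContinuousLinearMap.star_eq_adjoint] at h
  conv_lhs => rw [← h]
  rw [ContinuousLinearMap.adjoint_inner_left]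

lemma qf_add_right {M : Matrix (Fin n) (Fin n) ℝ} (hM : M.IsSymm) (x y : En n) :
    qf M (x + y) = qf M x + 2 * ⟪toE M x, y⟫ + qf M y := by
  simp only [qf, map_add, inner_add_left, inner_add_right]
  rw [toE_symm hM y x, real_inner_comm (toE M x) y]
  ring

lemma qf_abs_le (M : Matrix (Fin n) (Fin n) ℝ) (x : En n) : |qf M x| ≤ ‖toE M‖ * ‖x‖ ^ 2 := by
  refine (abs_real_inner_le_norm _ _).trans ?_
  have := (toE M).le_opNorm x
  nlinarith [norm_nonneg x]

/-- The quadratic form as a double sum over coordinates. -/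
lemma qf_eq_dot (M : Matrix (Fin n) (Fin n) ℝ) (x : En n) :
    qf M x = (x : Fin n → ℝ) ⬝ᵥ M.mulVec x := by
  simp only [qf, toE, EuclideanSpace.inner_eq_star_dotProduct]
  simp

lemma posSemidef_of_qf {M : Matrix (Fin n) (Fin n) ℝ} (hM : M.IsSymm) (h : ∀ x, 0 ≤ qf M x) :
    M.PosSemidef := by
  refine Matrix.PosSemidef.of_dotProduct_mulVec_nonneg ?_ fun x => ?_
  · rw [Matrix.IsHermitian, Matrix.conjTranspose_eq_transpose_of_trivial]; exact hM
  · have := h (WithLp.toLp 2 x)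
    rw [qf_eq_dot] at this
    simpa using this

lemma qf_nonneg {M : Matrix (Fin n) (Fin n) ℝ} (h : M.PosSemidef) (x : En n) : 0 ≤ qf M x := by
  rw [qf_eq_dot]
  simpa using h.dotProduct_mulVec_nonneg (x : Fin n → ℝ)

/-- Every continuous quadratic form is the form of a symmetric matrix. -/
lemma exists_matrix (T : En n →L[ℝ] En n) :
    ∃ M : Matrix (Fin n) (Fin n) ℝ, M.IsSymm ∧ ∀ x, qf M x = ⟪T x, x⟫ := by
  set A := (Matrix.toEuclideanCLM (𝕜 := ℝ) (n := Fin n)).symm T with hA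
  refine ⟨(1 / 2 : ℝ) • (A + A.transpose), ?_, fun x => ?_⟩
  · rw [Matrix.IsSymm, Matrix.transpose_smul, Matrix.transpose_add, Matrix.transpose_transpose,
      add_comm]
  · have hT : toE A = T := by simp [hA, toE]
    have hT' : toE A.transpose = star T := by
      rw [← hT, toE, toE, ← map_star]; congr 1
    rw [qf_smul, qf_add, qf, qf, hT, hT', ContinuousLinearMap.star_eq_adjoint,
      ContinuousLinearMap.adjoint_inner_left, real_inner_comm]
    ring

open scoped MatrixOrder ComplexOrder in
lemma trace_mul_nonneg' {A P : Matrix (Fin n) (Fin n) ℝ} (hA : A.PosSemidef) (hP : P.PosSemidef) :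
    0 ≤ (A * P).trace := by
  obtain ⟨B, rfl⟩ : ∃ B : Matrix (Fin n) (Fin n) ℝ, P = B.conjTranspose * B :=
    CStarAlgebra.nonneg_iff_eq_star_mul_self.1 (Matrix.nonneg_iff_posSemidef.2 hP)
  rw [← Matrix.mul_assoc, Matrix.trace_mul_comm, ← Matrix.mul_assoc]
  exact (hA.mul_mul_conjTranspose_same B).trace_nonneg

lemma qf_single (M : Matrix (Fin n) (Fin n) ℝ) (i : Fin n) :
    qf M (EuclideanSpace.single i 1) = M i i := by
  rw [qf_eq_dot]; simp

lemma qf_single_add (M : Matrix (Fin n) (Fin n) ℝ) (i j : Fin n) (c : ℝ) :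
    qf M (EuclideanSpace.single i 1 + c • EuclideanSpace.single j 1) =
      M i i + c * M i j + c * M j i + c ^ 2 * M j j := by
  rw [qf_eq_dot]
  simp [Matrix.mulVec_add, Matrix.mulVec_smul, dotProduct_add, add_dotProduct]
  ring

/-- For a positive semidefinite matrix the largest entry is controlled by the trace. -/
lemma norm_le_trace {P : Matrix (Fin n) (Fin n) ℝ} (hP : P.PosSemidef) : ‖P‖ ≤ P.trace := by
  have hd : ∀ i, 0 ≤ P i i := fun i => by
    have := qf_nonneg hP (EuclideanSpace.single i 1)
    rwa [qf_single] at this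
  have htr : ∀ i, P i i ≤ P.trace := fun i =>
    Finset.single_le_sum (f := fun i => P i i) (fun i _ => hd i) (Finset.mem_univ i)
  have hsym : ∀ i j, P j i = P i j := fun i j => by
    have := hP.1
    rw [Matrix.IsHermitian, Matrix.conjTranspose_eq_transpose_of_trivial] at this
    exact congrFun (congrFun this i) j
  rw [Matrix.norm_le_iff hP.trace_nonneg]
  intro i j
  have h1 := qf_nonneg hP (EuclideanSpace.single i 1 + (1:ℝ) • EuclideanSpace.single j 1)
  have h2 := qf_nonneg hP (EuclideanSpace.single i 1 + (-1:ℝ) • EuclideanSpace.single j 1)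
  rw [qf_single_add, hsym i j] at h1 h2
  rw [Real.norm_eq_abs, abs_le]
  have := htr i
  have := htr j
  constructor <;> nlinarith

/-- The quadratic form on a unit vector is at most the trace. -/
lemma qf_le_trace {P : Matrix (Fin n) (Fin n) ℝ} (hP : P.PosSemidef) {e : En n} (he : ‖e‖ = 1) :
    qf P e ≤ P.trace := by
  -- `|e|² I - e eᵀ` is positive semidefinite by Cauchy-Schwarz
  set A : Matrix (Fin n) (Fin n) ℝ := 1 - Matrix.vecMulVec e e with hA
  have hAs : A.IsSymm := by
    rw [Matrix.IsSymm, hA, Matrix.transpose_sub, Matrix.transpose_one, Matrix.transpose_vecMulVec]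
  have hA0 : A.PosSemidef := by
    refine posSemidef_of_qf hAs fun x => ?_
    have h1 : qf (Matrix.vecMulVec (e : Fin n → ℝ) e) x = ⟪e, x⟫ ^ 2 := by
      rw [qf_eq_dot, Matrix.vecMulVec_mulVec, EuclideanSpace.inner_eq_star_dotProduct]
      simp [dotProduct_comm, sq]
    rw [hA, qf_sub, qf_one, h1]
    have := abs_real_inner_le_norm e x
    rw [he, one_mul] at this
    nlinarith [sq_abs ⟪e, x⟫, abs_nonneg ⟪e, x⟫, norm_nonneg x]
  have := trace_mul_nonneg' hA0 hP
  rw [hA, Matrix.sub_mul, Matrix.one_mul, Matrix.trace_sub, Matrix.vecMulVec_mul,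
    Matrix.trace_vecMulVec, dotProduct_comm, ← Matrix.dotProduct_mulVec, ← qf_eq_dot] at this
  linarith

end Matrices

section Ellipticity

variable {n : ℕ} {lam Lam : ℝ}

lemma pucci_set_nonempty (h : lam ≤ Lam) (M : Matrix (Fin n) (Fin n) ℝ) :
    { t | ∃ A : Matrix (Fin n) (Fin n) ℝ, A.IsSymm ∧
      (A - lam • (1 : Matrix (Fin n) (Fin n) ℝ)).PosSemidef ∧
      (Lam • (1 : Matrix (Fin n) (Fin n) ℝ) - A).PosSemidef ∧ t = (A * M).trace }.Nonempty := by
  refine ⟨_, lam • 1, ?_, ?_, ?_, rfl⟩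
  · simp [Matrix.IsSymm]
  · rw [sub_self]; exact Matrix.PosSemidef.zero
  · rw [← sub_smul]
    exact Matrix.PosSemidef.one.smul (by linarith)

lemma pucciMinus_ge (h : lam ≤ Lam) {P : Matrix (Fin n) (Fin n) ℝ} (hP : P.PosSemidef) :
    lam * P.trace ≤ pucciMinus lam Lam P := by
  refine le_csInf (pucci_set_nonempty h P) ?_
  rintro t ⟨A, -, h1, -, rfl⟩
  have := trace_mul_nonneg' h1 hP
  rw [Matrix.sub_mul, Matrix.trace_sub, Matrix.smul_mul, Matrix.one_mul, Matrix.trace_smul,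
    smul_eq_mul] at this
  linarith

lemma pucciPlus_le (h : lam ≤ Lam) {P : Matrix (Fin n) (Fin n) ℝ} (hP : P.PosSemidef) :
    pucciPlus lam Lam P ≤ Lam * P.trace := by
  rw [pucciPlus, neg_le]
  refine le_csInf (pucci_set_nonempty h _) ?_
  rintro t ⟨A, -, -, h1, rfl⟩
  have := trace_mul_nonneg' h1 hP
  rw [Matrix.sub_mul, Matrix.trace_sub, Matrix.smul_mul, Matrix.one_mul, Matrix.trace_smul,
    smul_eq_mul] at this
  rw [Matrix.mul_neg, Matrix.trace_neg]
  linarith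

lemma pucciMinus_smul {τ : ℝ} (hτ : 0 < τ) (M : Matrix (Fin n) (Fin n) ℝ) :
    pucciMinus lam Lam (τ • M) = τ * pucciMinus lam Lam M := by
  rw [pucciMinus, pucciMinus, ← smul_eq_mul, ← Real.sInf_smul_of_nonneg hτ.le]
  congr 1
  ext t
  rw [Set.mem_smul_set]
  constructor
  · rintro ⟨A, h1, h2, h3, rfl⟩
    exact ⟨_, ⟨A, h1, h2, h3, rfl⟩, by simp [Matrix.trace_smul]⟩
  · rintro ⟨_, ⟨A, h1, h2, h3, rfl⟩, rfl⟩
    exact ⟨A, h1, h2, h3, by simp [Matrix.trace_smul]⟩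

lemma pucciPlus_smul {τ : ℝ} (hτ : 0 < τ) (M : Matrix (Fin n) (Fin n) ℝ) :
    pucciPlus lam Lam (τ • M) = τ * pucciPlus lam Lam M := by
  rw [pucciPlus, pucciPlus, ← smul_neg, pucciMinus_smul hτ]; ring

variable {G : Matrix (Fin n) (Fin n) ℝ → ℝ}

lemma ell_add_psd (h : lam ≤ Lam) (hG : IsUnifEllipticConst lam Lam G)
    {M P : Matrix (Fin n) (Fin n) ℝ} (hM : M.IsSymm) (hP : P.PosSemidef) :
    lam * P.trace ≤ G (M + P) - G M ∧ G (M + P) - G M ≤ Lam * P.trace := by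
  have hPs : P.IsSymm := by
    have := hP.1
    rwa [Matrix.IsHermitian, Matrix.conjTranspose_eq_transpose_of_trivial] at this
  have := hG.1 (M + P) M (hM.add hPs) hM
  rw [add_sub_cancel_left] at this
  exact ⟨(pucciMinus_ge h hP).trans this.1, this.2.trans (pucciPlus_le h hP)⟩

lemma trace_smul_one (c : ℝ) : (c • (1 : Matrix (Fin n) (Fin n) ℝ)).trace = c * n := by
  simp [Matrix.trace_smul]

lemma isSymm_smul_one (c : ℝ) : (c • (1 : Matrix (Fin n) (Fin n) ℝ)).IsSymm := by
  simp [Matrix.IsSymm]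

lemma psd_smul_one {c : ℝ} (hc : 0 ≤ c) : (c • (1 : Matrix (Fin n) (Fin n) ℝ)).PosSemidef :=
  Matrix.PosSemidef.one.smul hc

lemma ell_nonneg (hl : 0 < lam) (h : lam ≤ Lam) (hG : IsUnifEllipticConst lam Lam G)
    {P : Matrix (Fin n) (Fin n) ℝ} (hP : P.PosSemidef) : 0 ≤ G P := by
  have := (ell_add_psd h hG (M := 0) Matrix.isSymm_zero hP).1
  rw [zero_add, hG.2, sub_zero] at this
  exact (mul_nonneg hl.le hP.trace_nonneg).trans this

/-- Ellipticity under multiples of the identity; this is the only continuity of `G` needed. -/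
lemma ell_add_one (h : lam ≤ Lam) (hG : IsUnifEllipticConst lam Lam G)
    {M : Matrix (Fin n) (Fin n) ℝ} (hM : M.IsSymm) {c : ℝ} (hc : 0 ≤ c) :
    G (M + c • 1) ≤ G M + Lam * (c * n) := by
  have := (ell_add_psd h hG hM (psd_smul_one hc)).2
  rw [trace_smul_one] at this
  linarith

/-- If `G (M + c I)` is bounded below along `c → 0⁺`, so is `G M`. -/
lemma ell_limit (hl : 0 < lam) (h : lam ≤ Lam) (hG : IsUnifEllipticConst lam Lam G)
    {M : Matrix (Fin n) (Fin n) ℝ} (hM : M.IsSymm) {m : ℝ}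
    (hm : ∀ c > (0:ℝ), m ≤ G (M + c • 1)) : m ≤ G M := by
  have hL : 0 < Lam := hl.trans_le h
  refine le_of_forall_pos_le_add fun ε hε => ?_
  have hc : 0 < ε / (Lam * (n + 1)) := by positivity
  refine (hm _ hc).trans ((ell_add_one h hG hM hc.le).trans ?_)
  gcongr
  have : Lam * (ε / (Lam * (n + 1)) * n) = ε * (n / (n + 1)) := by field_simp
  rw [this]
  have : (n:ℝ) / (n + 1) ≤ 1 := by rw [div_le_one (by positivity)]; linarith
  nlinarith

/-- A bound for `G M` depending only on `M`, `n` and the ellipticity constants. -/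
lemma ell_abs_le (hl : 0 < lam) (h : lam ≤ Lam) (hG : IsUnifEllipticConst lam Lam G)
    {M : Matrix (Fin n) (Fin n) ℝ} (hM : M.IsSymm) :
    |G M| ≤ Lam * |M.trace| + 2 * (Lam * (‖toE M‖ * n)) := by
  have hL : 0 < Lam := hl.trans_le h
  set c := ‖toE M‖
  have hc : 0 ≤ c := norm_nonneg _
  have hP : (M + c • 1).PosSemidef := by
    refine posSemidef_of_qf (hM.add (isSymm_smul_one c)) fun x => ?_
    rw [qf_add, qf_smul, qf_one]
    have := (abs_le.1 (qf_abs_le M x)).1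
    linarith
  have h1 := ell_nonneg hl h hG hP
  have h2 := (ell_add_psd h hG (M := 0) Matrix.isSymm_zero hP).2
  rw [zero_add, hG.2, sub_zero, Matrix.trace_add, trace_smul_one] at h2
  have h3 := ell_add_one h hG hM hc
  have h4 := (ell_add_psd h hG hM (psd_smul_one hc)).1
  rw [trace_smul_one] at h4
  have h5 : 0 ≤ lam * (c * n) := by positivity
  have h6 : M.trace ≤ |M.trace| := le_abs_self _
  have h7 := mul_le_mul_of_nonneg_left h6 hL.le
  have h8 : 0 ≤ Lam * |M.trace| := by positivity
  have h9 : 0 ≤ Lam * (c * n) := by positivity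
  rw [abs_le]
  constructor <;> linarith

lemma ell_reflect (hG : IsUnifEllipticConst lam Lam G) :
    IsUnifEllipticConst lam Lam (fun M => - G (-M)) := by
  refine ⟨fun M N hM hN => ?_, by simp [hG.2]⟩
  have := hG.1 (-N) (-M) hN.neg hM.neg
  rw [show -N - -M = M - N by abel] at this
  constructor <;> linarith [this.1, this.2]

lemma ell_scale {τ : ℝ} (hτ : 0 < τ) (hG : IsUnifEllipticConst lam Lam G) :
    IsUnifEllipticConst lam Lam (fun M => G (τ • M) / τ) := by
  refine ⟨fun M N hM hN => ?_, by simp [hG.2]⟩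
  have := hG.1 (τ • M) (τ • N) (hM.smul τ) (hN.smul τ)
  rw [← smul_sub, pucciMinus_smul hτ, pucciPlus_smul hτ] at this
  rw [← sub_div, le_div_iff₀ hτ, div_le_iff₀ hτ]
  constructor <;> linarith [this.1, this.2]

end Ellipticity

/-! ### Superjets and the scale-invariant class of solutions -/

open Filter Topology

section Jets

variable {n : ℕ}

/-- `(q, M)` is a second order superjet of `v` at `x0`. -/
def SupJet (v : En n → ℝ) (x0 q : En n) (M : Matrix (Fin n) (Fin n) ℝ) : Prop :=
  ∀ δ > (0:ℝ), ∀ᶠ x in 𝓝 x0,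
    v x ≤ v x0 + ⟪q, x - x0⟫ + 1 / 2 * qf M (x - x0) + δ * ‖x - x0‖ ^ 2

/-- After enlarging the Hessian, the superjet inequality is strict away from `x0`. -/
lemma SupJet.strict {v : En n → ℝ} {x0 q : En n} {M : Matrix (Fin n) (Fin n) ℝ}
    (h : SupJet v x0 q M) {δ : ℝ} (hδ : 0 < δ) :
    ∀ᶠ x in 𝓝 x0, v x ≤ v x0 + ⟪q, x - x0⟫ + 1 / 2 * qf (M + (4 * δ) • 1) (x - x0)
      - δ * ‖x - x0‖ ^ 2 := by
  filter_upwards [h δ hδ] with x hx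
  rw [qf_add, qf_smul, qf_one]
  linarith

/-- Touching by a quadratic polynomial centred at another point. -/
lemma supJet_of_max {v : En n → ℝ} {x0 x1 q : En n} {M : Matrix (Fin n) (Fin n) ℝ}
    (hM : M.IsSymm)
    (h : ∀ᶠ x in 𝓝 x1, v x - (⟪q, x - x0⟫ + 1 / 2 * qf M (x - x0)) ≤
      v x1 - (⟪q, x1 - x0⟫ + 1 / 2 * qf M (x1 - x0))) :
    SupJet v x1 (q + toE M (x1 - x0)) M := by
  intro δ hδ
  filter_upwards [h] with x hx
  have e1 : x - x0 = (x1 - x0) + (x - x1) := by abel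
  have e2 : qf M (x - x0) = qf M (x1 - x0) + 2 * ⟪toE M (x1 - x0), x - x1⟫ + qf M (x - x1) := by
    rw [e1, qf_add_right hM]
  have e3 : ⟪q, x - x0⟫ = ⟪q, x1 - x0⟫ + ⟪q, x - x1⟫ := by rw [e1, inner_add_right]
  rw [e2, e3] at hx
  rw [inner_add_left]
  have : 0 ≤ δ * ‖x - x1‖ ^ 2 := by positivity
  linarith

/-- Undoing the rescaling `v(x) = (u(r x) - c - ⟪Q, r x⟫) / a` at the level of superjets. -/
lemma SupJet.unscale {u v : En n → ℝ} {x0 q Q : En n} {M : Matrix (Fin n) (Fin n) ℝ}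
    {r a c : ℝ} (hr : 0 < r) (ha : 0 < a) (hv : ∀ x, v x = (u (r • x) - c - r * ⟪Q, x⟫) / a)
    (h : SupJet v x0 q M) :
    SupJet u (r • x0) ((a / r) • q + Q) ((a / r ^ 2) • M) := by
  intro δ hδ
  have hδ' : 0 < δ * r ^ 2 / a := by positivity
  have ht : Tendsto (fun y : En n => r⁻¹ • y) (𝓝 (r • x0)) (𝓝 x0) := by
    have : Tendsto (fun y : En n => r⁻¹ • y) (𝓝 (r • x0)) (𝓝 (r⁻¹ • r • x0)) :=
      (continuous_const_smul r⁻¹).tendsto _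
    rwa [inv_smul_smul₀ hr.ne'] at this
  filter_upwards [ht.eventually (h _ hδ')] with y hy
  obtain ⟨x, rfl⟩ : ∃ x, y = r • x := ⟨r⁻¹ • y, by rw [smul_inv_smul₀ hr.ne']⟩
  rw [inv_smul_smul₀ hr.ne', hv, hv] at hy
  rw [← smul_sub, inner_add_left, inner_smul_left, inner_smul_right, inner_smul_right, qf_smul,
    qf_smul_right, norm_smul, inner_sub_right Q]
  simp only [conj_trivial, Real.norm_eq_abs, abs_of_pos hr]
  have h3 := mul_le_mul_of_nonneg_left hy ha.le
  have e1 : a * ((u (r • x) - c - r * ⟪Q, x⟫) / a) = u (r • x) - c - r * ⟪Q, x⟫ := by field_simp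
  have e2 : a * ((u (r • x0) - c - r * ⟪Q, x0⟫) / a + ⟪q, x - x0⟫ + 1 / 2 * qf M (x - x0) +
      δ * r ^ 2 / a * ‖x - x0‖ ^ 2) = u (r • x0) - c - r * ⟪Q, x0⟫ + a * ⟪q, x - x0⟫ +
      1 / 2 * (a * qf M (x - x0)) + δ * r ^ 2 * ‖x - x0‖ ^ 2 := by field_simp
  have e3 : a / r * (r * ⟪q, x - x0⟫) = a * ⟪q, x - x0⟫ := by field_simp
  have e4 : a / r ^ 2 * (r ^ 2 * qf M (x - x0)) = a * qf M (x - x0) := by field_simp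
  rw [e1, e2] at h3
  rw [e3, e4, mul_pow]
  linarith

end Jets

section Solutions

variable {n : ℕ}

lemma matrix_norm_smul (c : ℝ) (M : Matrix (Fin n) (Fin n) ℝ) : ‖c • M‖ = |c| * ‖M‖ := by
  let _ : NormedSpace ℝ (Matrix (Fin n) (Fin n) ℝ) := Matrix.normedSpace
  exact norm_smul c M

/-- Viscosity subsolutions, in terms of superjets, of `|∇v - ξ|^γ F(x, D²v) ≥ -η` in `B₁`. -/
def SubSol (η γ : ℝ) (ξ : En n) (F : En n → Matrix (Fin n) (Fin n) ℝ → ℝ) (v : En n → ℝ) : Prop :=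
  ∀ x0 ∈ ball (0 : En n) 1, ∀ (q : En n) (M : Matrix (Fin n) (Fin n) ℝ), M.IsSymm →
    SupJet v x0 q M → -η ≤ ‖q - ξ‖ ^ γ * F x0 M

/-- The operator governing `-v` when `F` governs `v`. -/
def reflOp (F : En n → Matrix (Fin n) (Fin n) ℝ → ℝ) : En n → Matrix (Fin n) (Fin n) ℝ → ℝ :=
  fun x M => - F x (-M)

/-- The scale invariant class of normalized solutions of the shifted degenerate inequalities
`| |∇v - ξ|^γ F(x, D²v) | ≤ η` whose operator has coefficient oscillation at most `η`. The shift
`ξ` is arbitrary. -/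
structure Sol (lam Lam γ η : ℝ) (ξ : En n) (F : En n → Matrix (Fin n) (Fin n) ℝ → ℝ)
    (v : En n → ℝ) : Prop where
  ell : ∀ x ∈ ball (0 : En n) 1, IsUnifEllipticConst lam Lam (F x)
  osc : ∀ x ∈ ball (0 : En n) 1, ∀ M : Matrix (Fin n) (Fin n) ℝ, M.IsSymm →
    |F x M - F 0 M| ≤ η * (‖M‖ + 1)
  cont : ContinuousOn v (ball 0 1)
  bdd : ∀ x ∈ ball (0 : En n) 1, |v x| ≤ 1
  sub : SubSol η γ ξ F v
  sup : SubSol η γ (-ξ) (reflOp F) (fun x => - v x)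

variable {lam Lam γ η : ℝ} {ξ : En n} {F : En n → Matrix (Fin n) (Fin n) ℝ → ℝ} {v : En n → ℝ}

lemma reflOp_reflOp : reflOp (reflOp F) = F := by
  funext x M; simp [reflOp]

lemma Sol.neg (h : Sol lam Lam γ η ξ F v) :
    Sol lam Lam γ η (-ξ) (reflOp F) (fun x => - v x) where
  ell x hx := ell_reflect (h.ell x hx)
  osc x hx M hM := by
    have := h.osc x hx (-M) hM.neg
    rw [norm_neg] at this
    rw [reflOp, reflOp, ← abs_neg]
    convert this using 2
    ring
  cont := h.cont.neg
  bdd x hx := by rw [abs_neg]; exact h.bdd x hx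
  sub := h.sup
  sup := by
    have := h.sub
    simpa [reflOp_reflOp] using this

lemma SubSol.mono {η' : ℝ} (h : SubSol η γ ξ F v) (hη : η ≤ η') : SubSol η' γ ξ F v :=
  fun x0 hx0 q M hM hj => (neg_le_neg hη).trans (h x0 hx0 q M hM hj)

lemma Sol.mono {η' : ℝ} (h : Sol lam Lam γ η ξ F v) (hη : η ≤ η') : Sol lam Lam γ η' ξ F v where
  ell := h.ell
  osc x hx M hM := (h.osc x hx M hM).trans
    (mul_le_mul_of_nonneg_right hη (by positivity))
  cont := h.cont
  bdd := h.bdd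
  sub := h.sub.mono hη
  sup := h.sup.mono hη

/-- Scaling of one half of the equation. -/
lemma SubSol.scale {Q : En n} {r a c : ℝ} (h : SubSol η γ ξ F v) (hr : 0 < r)
    (hr1 : r ≤ 1) (ha : 0 < a) :
    SubSol (η * (r ^ 2 / a) * (r / a) ^ γ) γ ((r / a) • (ξ - Q))
      (fun x M => F (r • x) ((a / r ^ 2) • M) / (a / r ^ 2))
      (fun x => (v (r • x) - c - r * ⟪Q, x⟫) / a) := by
  intro x0 hx0 q M hM hj
  have h1 := hj.unscale (Q := Q) (c := c) hr ha (fun x => rfl)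
  have hb : r • x0 ∈ ball (0 : En n) 1 := by
    rw [mem_ball_zero_iff] at hx0 ⊢
    rw [norm_smul, Real.norm_of_nonneg hr.le]
    nlinarith [norm_nonneg x0]
  have h2 := h _ hb _ _ (hM.smul _) h1
  have e1 : (a / r) • q + Q - ξ = (a / r) • (q - (r / a) • (ξ - Q)) := by
    rw [smul_sub, smul_smul]
    have : a / r * (r / a) = 1 := by field_simp
    rw [this, one_smul]
    abel
  rw [e1, norm_smul, Real.norm_of_nonneg (by positivity : 0 ≤ a / r),
    Real.mul_rpow (by positivity) (norm_nonneg _)] at h2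
  set A := ‖q - (r / a) • (ξ - Q)‖ ^ γ
  set B := F (r • x0) ((a / r ^ 2) • M)
  have e2 : (a / r) ^ γ * (r / a) ^ γ = 1 := by
    rw [← Real.mul_rpow (by positivity) (by positivity)]
    have : a / r * (r / a) = 1 := by field_simp
    rw [this, Real.one_rpow]
  have h3 := mul_le_mul_of_nonneg_right h2 (by positivity : 0 ≤ (r ^ 2 / a) * (r / a) ^ γ)
  have e3 : (a / r) ^ γ * A * B * (r ^ 2 / a * (r / a) ^ γ) = A * (B / (a / r ^ 2)) := by
    calc _ = ((a / r) ^ γ * (r / a) ^ γ) * (A * (B * (r ^ 2 / a))) := by ring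
      _ = _ := by rw [e2, one_mul]; congr 1; field_simp
  rw [e3] at h3
  calc _ = -η * (r ^ 2 / a * (r / a) ^ γ) := by ring
    _ ≤ _ := h3

/-- The class of solutions is preserved by subtracting an affine function and zooming in. -/
lemma Sol.scale {Q : En n} {r a c η' : ℝ} (h : Sol lam Lam γ η ξ F v) (hr : 0 < r)
    (hr1 : r ≤ 1) (ha : 0 < a) (h1 : η * (r ^ 2 / a) * (r / a) ^ γ ≤ η') (h2 : η ≤ η')
    (h2' : η * (r ^ 2 / a) ≤ η')
    (hb : ∀ x ∈ ball (0 : En n) r, |v x - c - ⟪Q, x⟫| ≤ a) :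
    Sol lam Lam γ η' ((r / a) • (ξ - Q))
      (fun x M => F (r • x) ((a / r ^ 2) • M) / (a / r ^ 2))
      (fun x => (v (r • x) - c - r * ⟪Q, x⟫) / a) := by
  have hτ : 0 < a / r ^ 2 := by positivity
  have hmem : ∀ x ∈ ball (0 : En n) 1, r • x ∈ ball (0 : En n) r := fun x hx => by
    rw [mem_ball_zero_iff] at hx ⊢
    rw [norm_smul, Real.norm_of_nonneg hr.le]
    nlinarith [norm_nonneg x]
  have hmem1 : ∀ x ∈ ball (0 : En n) 1, r • x ∈ ball (0 : En n) 1 := fun x hx =>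
    ball_subset_ball hr1 (hmem x hx)
  refine ⟨fun x hx => ell_scale hτ (h.ell _ (hmem1 x hx)), fun x hx M hM => ?_, ?_, ?_,
    (h.sub.scale hr hr1 ha).mono h1, ?_⟩
  · have := h.osc _ (hmem1 x hx) _ (hM.smul (a / r ^ 2))
    rw [smul_zero, ← sub_div, abs_div, abs_of_pos hτ, div_le_iff₀ hτ]
    refine this.trans ?_
    rw [matrix_norm_smul, abs_of_pos hτ]
    have h3 : η * (a / r ^ 2 * ‖M‖) ≤ η' * (a / r ^ 2 * ‖M‖) :=
      mul_le_mul_of_nonneg_right h2 (by positivity)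
    have h4 : η ≤ η' * (a / r ^ 2) := by
      have := mul_le_mul_of_nonneg_right h2' hτ.le
      have e : η * (r ^ 2 / a) * (a / r ^ 2) = η := by field_simp
      rwa [e] at this
    linarith
  · have h5 : ContinuousOn (fun x => v (r • x)) (ball (0 : En n) 1) :=
      h.cont.comp (continuous_const_smul r).continuousOn hmem1
    have h6 : Continuous (fun x : En n => r * ⟪Q, x⟫) := by fun_prop
    exact ((h5.sub continuousOn_const).sub h6.continuousOn).div_const a
  · intro x hx
    rw [abs_div, abs_of_pos ha, div_le_one ha]
    have := hb _ (hmem x hx)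
    rwa [inner_smul_right] at this
  · have := (h.sup.scale (Q := -Q) (c := -c) hr hr1 ha).mono h1
    convert this using 1
    · rw [← smul_neg]; congr 1; abel
    · funext x M; simp only [reflOp, smul_neg, neg_div]
    · funext x; rw [inner_neg_left]; ring

end Solutions

/-! ### Test functions and superjets -/

open Filter Topology

section TestFunctions

variable {n : ℕ}

/-- The quadratic polynomial centred at `x0` with gradient `q` and Hessian `M` there. -/
def quadPoly (x0 q : En n) (M : Matrix (Fin n) (Fin n) ℝ) (x : En n) : ℝ :=
  ⟪q, x - x0⟫ + 1 / 2 * qf M (x - x0)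

lemma contDiff_quadPoly (x0 q : En n) (M : Matrix (Fin n) (Fin n) ℝ) :
    ContDiff ℝ 2 (quadPoly x0 q M) := by
  unfold quadPoly qf
  have h1 : ContDiff ℝ 2 (fun x : En n => toE M (x - x0)) :=
    (toE M).contDiff.comp (contDiff_id.sub contDiff_const)
  have h2 : ContDiff ℝ 2 (fun x : En n => x - x0) := contDiff_id.sub contDiff_const
  exact (contDiff_const.inner ℝ h2).add (contDiff_const.mul (h1.inner ℝ h2))

lemma hasFDerivAt_form {E : Type*} [NormedAddCommGroup E] [InnerProductSpace ℝ E] (x0 q : E)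
    (T : E →L[ℝ] E) (hT : ∀ x y : E, ⟪T x, y⟫ = ⟪x, T y⟫) (x : E) :
    HasFDerivAt (fun x => ⟪q, x - x0⟫ + 1 / 2 * ⟪T (x - x0), x - x0⟫)
      (innerSL ℝ q + innerSL ℝ (T (x - x0))) x := by
  have h2 : HasFDerivAt (fun x : E => x - x0) (ContinuousLinearMap.id ℝ E) x :=
    (hasFDerivAt_id x).sub_const x0
  have h1 : HasFDerivAt (fun x : E => T (x - x0)) T x :=
    (T.hasFDerivAt (x := x - x0)).comp x h2
  have h3 := ((hasFDerivAt_const q x).inner ℝ h2).add ((h1.inner ℝ h2).const_mul (1 / 2))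
  refine h3.congr_fderiv ?_
  ext y
  simp only [add_apply, smul_apply, ContinuousLinearMap.comp_apply, ContinuousLinearMap.prod_apply,
    fderivInnerCLM_apply, innerSL_apply_apply, ContinuousLinearMap.id_apply, zero_apply,
    inner_zero_left, smul_eq_mul, add_zero]
  rw [hT y, real_inner_comm (T (x - x0)) y]
  ring

lemma hasFDerivAt_quadPoly (x0 q : En n) {M : Matrix (Fin n) (Fin n) ℝ} (hM : M.IsSymm)
    (x : En n) :
    HasFDerivAt (quadPoly x0 q M) (innerSL ℝ q + innerSL ℝ (toE M (x - x0))) x :=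
  hasFDerivAt_form x0 q (toE M) (toE_symm hM) x

lemma gradient_quadPoly (x0 q : En n) {M : Matrix (Fin n) (Fin n) ℝ} (hM : M.IsSymm) :
    gradient (quadPoly x0 q M) x0 = q := by
  have h := hasFDerivAt_quadPoly x0 q hM x0
  rw [sub_self, map_zero, map_zero, add_zero] at h
  refine HasGradientAt.gradient ?_
  rw [hasGradientAt_iff_hasFDerivAt]
  refine h.congr_fderiv ?_
  ext y
  simp

lemma hessMat_apply (ψ : En n → ℝ) (x : En n) (i j : Fin n) :
    hessMat ψ x i j =
      fderiv ℝ (fderiv ℝ ψ) x (EuclideanSpace.single i 1) (EuclideanSpace.single j 1) := by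
  rw [hessMat, Matrix.of_apply, iteratedFDeriv_two_apply]
  simp

lemma hessMat_quadPoly (x0 q : En n) {M : Matrix (Fin n) (Fin n) ℝ} (hM : M.IsSymm) :
    hessMat (quadPoly x0 q M) x0 = M := by
  ext i j
  rw [hessMat_apply]
  have h1 : fderiv ℝ (quadPoly x0 q M) =
      fun x => innerSL ℝ q + innerSL ℝ (toE M (x - x0)) :=
    funext fun x => (hasFDerivAt_quadPoly x0 q hM x).fderiv
  have h2 : HasFDerivAt (fun x : En n => innerSL ℝ q + innerSL ℝ (toE M (x - x0)))
      ((innerSL ℝ (E := En n)).comp (toE M)) x0 := by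
    have h3 : HasFDerivAt (fun x : En n => x - x0) (ContinuousLinearMap.id ℝ (En n)) x0 :=
      (hasFDerivAt_id x0).sub_const x0
    exact (((innerSL ℝ (E := En n)).comp (toE M)).hasFDerivAt.comp x0 h3).const_add _
  rw [h1, h2.fderiv]
  have h4 := hM.apply i j
  rw [← h4, ContinuousLinearMap.comp_apply, innerSL_apply_apply, real_inner_comm,
    EuclideanSpace.inner_single_left]
  simp [toE]

lemma qf_hessMat (ψ : En n → ℝ) (x y : En n) :
    qf (hessMat ψ x) y = fderiv ℝ (fderiv ℝ ψ) x y y := by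
  set B := fderiv ℝ (fderiv ℝ ψ) x with hB
  have hy : y = ∑ i, y i • EuclideanSpace.single i (1:ℝ) := by
    ext j
    simp [Pi.single_apply]
  rw [qf_eq_dot]
  conv_rhs => rw [hy]
  simp only [map_sum, map_smul, sum_apply, smul_apply, smul_eq_mul,
    dotProduct, Matrix.mulVec, hessMat_apply, ← hB, Finset.mul_sum]
  rw [Finset.sum_comm]
  refine Finset.sum_congr rfl fun i _ => Finset.sum_congr rfl fun j _ => by ring

lemma hessMat_symm {ψ : En n → ℝ} (hψ : ContDiff ℝ 2 ψ) (x : En n) : (hessMat ψ x).IsSymm := by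
  ext i j
  rw [Matrix.transpose_apply, hessMat_apply, hessMat_apply]
  have : IsSymmSndFDerivAt ℝ ψ x := hψ.contDiffAt.isSymmSndFDerivAt (by simp)
  exact this _ _

/-- Second order Taylor expansion. -/
lemma taylor_two {ψ : En n → ℝ} (hψ : ContDiff ℝ 2 ψ) (x0 : En n) {δ : ℝ} (hδ : 0 < δ) :
    ∀ᶠ x in 𝓝 x0,
      |ψ x - ψ x0 - quadPoly x0 (gradient ψ x0) (hessMat ψ x0) x| ≤ δ * ‖x - x0‖ ^ 2 := by
  have hM := hessMat_symm hψ x0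
  set M := hessMat ψ x0 with hMdef
  have hd : Differentiable ℝ ψ := hψ.differentiable (by simp)
  have hd2 : DifferentiableAt ℝ (fderiv ℝ ψ) x0 :=
    (hψ.fderiv_right (m := 1) (by norm_num)).differentiable (by simp) x0
  have hT : fderiv ℝ (fderiv ℝ ψ) x0 = (innerSL ℝ (E := En n)).comp (toE M) := by
    have hs : IsSymmSndFDerivAt ℝ ψ x0 := hψ.contDiffAt.isSymmSndFDerivAt (by simp)
    ext a b
    have h1 := qf_hessMat ψ x0 (a + b)
    rw [← hMdef, qf_add_right hM, qf_hessMat, qf_hessMat] at h1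
    simp only [map_add, add_apply] at h1
    have h2 := hs a b
    simp only [ContinuousLinearMap.comp_apply, innerSL_apply_apply]
    linarith
  have ho := hd2.hasFDerivAt.isLittleO.def hδ
  obtain ⟨r, hr, hball⟩ := Metric.eventually_nhds_iff_ball.1 ho
  filter_upwards [ball_mem_nhds x0 hr] with x hx
  set g : En n → ℝ := fun y => ψ y - quadPoly x0 (gradient ψ x0) M y with hg
  have hgd : ∀ y, HasFDerivAt g (fderiv ℝ ψ y - fderiv ℝ ψ x0 -
      fderiv ℝ (fderiv ℝ ψ) x0 (y - x0)) y := fun y => by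
    have h1 := (hd y).hasFDerivAt.sub (hasFDerivAt_quadPoly x0 (gradient ψ x0) hM y)
    refine h1.congr_fderiv ?_
    have h2 : innerSL ℝ (gradient ψ x0) = fderiv ℝ ψ x0 := by
      ext z
      have := (hd x0).hasGradientAt.hasFDerivAt.fderiv
      rw [this]; simp
    rw [h2, hT, ContinuousLinearMap.comp_apply]
    abel
  have hle := (convex_closedBall x0 ‖x - x0‖).norm_image_sub_le_of_norm_hasFDerivWithin_le
    (f := g) (C := δ * ‖x - x0‖) (x := x0) (y := x)
    (fun y _ => (hgd y).hasFDerivWithinAt) (fun y hy => ?_) (by simp) (by simp [dist_eq_norm])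
  · have hq : quadPoly x0 (gradient ψ x0) M x0 = 0 := by simp [quadPoly, qf]
    rw [Real.norm_eq_abs] at hle
    simp only [hg, hq] at hle
    calc _ = |ψ x - quadPoly x0 (gradient ψ x0) M x - (ψ x0 - 0)| := by congr 1; ring
      _ ≤ _ := hle
      _ = _ := by ring
  · rw [mem_closedBall, dist_eq_norm] at hy
    have hy' : y ∈ ball x0 r := by
      rw [mem_ball, dist_eq_norm] at hx ⊢; linarith
    exact (hball y hy').trans (mul_le_mul_of_nonneg_left hy hδ.le)

lemma supJet_of_localMax {h ψ : En n → ℝ} (hψ : ContDiff ℝ 2 ψ) {x0 : En n}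
    (hmax : IsLocalMax (fun x => h x - ψ x) x0) :
    SupJet h x0 (gradient ψ x0) (hessMat ψ x0) := by
  intro δ hδ
  filter_upwards [taylor_two hψ x0 hδ, hmax] with x hx hx2
  have := (abs_le.1 hx).2
  rw [quadPoly] at this
  linarith

lemma hessMat_neg (ψ : En n → ℝ) (x : En n) : hessMat (fun y => - ψ y) x = - hessMat ψ x := by
  ext i j
  have : (fun y => - ψ y) = -ψ := rfl
  rw [hessMat, Matrix.of_apply, this, iteratedFDeriv_neg_apply]
  simp [hessMat]

lemma gradient_neg' (ψ : En n → ℝ) (x : En n) : gradient (fun y => - ψ y) x = - gradient ψ x := by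
  rw [gradient, gradient, fderiv_fun_neg, map_neg]

/-- Solutions in the sense of jets are viscosity solutions. -/
lemma viscosity_of_jets {Ω : Set (En n)} {G : Matrix (Fin n) (Fin n) ℝ → ℝ} {h : En n → ℝ}
    (h1 : ∀ x0 ∈ Ω, ∀ q M, M.IsSymm → SupJet h x0 q M → 0 ≤ G M)
    (h2 : ∀ x0 ∈ Ω, ∀ q M, M.IsSymm → SupJet (fun x => - h x) x0 q M → 0 ≤ - G (-M)) :
    IsViscositySolutionOn Ω (fun _ _ M => G M) (fun _ => 0) h := by
  refine ⟨fun ψ hψ x0 hx0 hmax => h1 x0 hx0 _ _ (hessMat_symm hψ x0) (supJet_of_localMax hψ hmax),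
    fun ψ hψ x0 hx0 hmin => ?_⟩
  have hmax : IsLocalMax (fun x => (- h x) - (- ψ x)) x0 := by
    filter_upwards [hmin] with x hx
    linarith
  have := h2 x0 hx0 _ _ (hessMat_symm hψ.neg x0) (supJet_of_localMax hψ.neg hmax)
  have e : hessMat (fun x => -ψ x) x0 = - hessMat ψ x0 := hessMat_neg ψ x0
  rw [e, neg_neg] at this
  show G _ ≤ 0
  linarith

variable {lam Lam tlam tLam γ : ℝ}

/-- One half of the passage from test functions to superjets. Where the gradient `q` vanishes the
claim is trivial because `0 ^ γ = 0`; elsewhere the degeneracy is divided out. -/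
lemma subSol_of_viscosity (hl : 0 < lam) (hL : lam ≤ Lam) (htl : 0 < tlam) (hγ : 0 < γ)
    {F : En n → Matrix (Fin n) (Fin n) ℝ → ℝ} {Dg : En n → En n → ℝ} {f u : En n → ℝ} {e : ℝ}
    (hF : ∀ x ∈ ball (0 : En n) 1, IsUnifEllipticConst lam Lam (F x))
    (hD : ∀ x ∈ ball (0 : En n) 1, ∀ b : En n, tlam * ‖b‖ ^ γ ≤ Dg x b)
    (hf : ∀ x ∈ ball (0 : En n) 1, |f x| ≤ e)
    (hu : ∀ ψ : En n → ℝ, ContDiff ℝ 2 ψ → ∀ x₀ ∈ ball (0 : En n) 1,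
      IsLocalMax (fun x => u x - ψ x) x₀ →
        f x₀ ≤ Dg x₀ (gradient ψ x₀) * F x₀ (hessMat ψ x₀)) :
    SubSol (e / tlam) γ 0 F u := by
  intro x0 hx0 q M hM hj
  have he : 0 ≤ e := (abs_nonneg _).trans (hf x0 hx0)
  rw [sub_zero]
  rcases eq_or_ne q 0 with rfl | hq
  · rw [norm_zero, Real.zero_rpow hγ.ne', zero_mul]
    have : 0 ≤ e / tlam := by positivity
    linarith
  have hA : 0 < ‖q‖ ^ γ := Real.rpow_pos_of_pos (norm_pos_iff.2 hq) _
  have key : -(e / tlam) / ‖q‖ ^ γ ≤ F x0 M := by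
    refine ell_limit hl hL (hF x0 hx0) hM fun c hc => ?_
    have hMc : (M + c • 1).IsSymm := hM.add (isSymm_smul_one c)
    have hmax : IsLocalMax (fun x => u x - quadPoly x0 q (M + c • 1) x) x0 := by
      filter_upwards [hj (c / 2) (by positivity)] with x hx
      have h0 : quadPoly x0 q (M + c • 1) x0 = 0 := by simp [quadPoly, qf]
      rw [h0, quadPoly, qf_add, qf_smul, qf_one]
      linarith
    have h1 := hu _ (contDiff_quadPoly x0 q _) x0 hx0 hmax
    rw [gradient_quadPoly x0 q hMc, hessMat_quadPoly x0 q hMc] at h1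
    have h2 := (abs_le.1 (hf x0 hx0)).1
    rw [div_le_iff₀ hA]
    rcases le_total 0 (F x0 (M + c • 1)) with hp | hp
    · have : 0 ≤ e / tlam := by positivity
      have := mul_nonneg hp hA.le
      linarith
    · have h3 := mul_le_mul_of_nonpos_right (hD x0 hx0 q) hp
      have h4 : -e ≤ tlam * ‖q‖ ^ γ * F x0 (M + c • 1) := by linarith
      rw [neg_div', div_le_iff₀ htl]
      linarith
  rw [div_le_iff₀ hA] at key
  linarith

lemma sol_of_viscosity (hl : 0 < lam) (hL : lam ≤ Lam) (htl : 0 < tlam) (hγ : 0 < γ)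
    {F : En n → Matrix (Fin n) (Fin n) ℝ → ℝ} {Dg : En n → En n → ℝ} {f u : En n → ℝ} {e₁ e₂ η : ℝ}
    (hF : IsUnifElliptic lam Lam F) (hD : IsDegeneracyLaw tlam tLam γ Dg)
    (hc : ContinuousOn u (ball 0 1)) (hb : ∀ x ∈ ball (0 : En n) 1, |u x| ≤ 1)
    (hu : IsViscositySolutionOn (ball (0 : En n) 1) (fun x p M => Dg x p * F x M) f u)
    (hosc : ∀ x ∈ ball (0 : En n) 1, ∀ M : Matrix (Fin n) (Fin n) ℝ, M.IsSymm →
            |F x M - F 0 M| ≤ e₁ * (‖M‖ + 1))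
    (hf : ∀ x ∈ ball (0 : En n) 1, |f x| ≤ e₂) (h1 : e₁ ≤ η) (h2 : e₂ / tlam ≤ η) :
    Sol lam Lam γ η 0 F u := by
  have hell : ∀ x ∈ ball (0 : En n) 1, IsUnifEllipticConst lam Lam (F x) := fun x hx =>
    ⟨hF.1 x hx, hF.2 x hx⟩
  refine ⟨hell, fun x hx M hM => (hosc x hx M hM).trans
    (mul_le_mul_of_nonneg_right h1 (by positivity)), hc, hb,
    (subSol_of_viscosity hl hL htl hγ hell (fun x hx b => (hD x hx b).1) hf hu.1).mono h2, ?_⟩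
  rw [neg_zero]
  refine (subSol_of_viscosity (Dg := fun x p => Dg x (-p)) (f := fun x => - f x) (e := e₂)
    hl hL htl hγ (fun x hx => ell_reflect (hell x hx)) (fun x hx b => ?_) (fun x hx => ?_)
    fun ψ hψ x0 hx0 hmax => ?_).mono h2
  · have := (hD x hx (-b)).1
    rwa [norm_neg] at this
  · rw [abs_neg]; exact hf x hx
  · have hmin : IsLocalMin (fun x => u x - (- ψ x)) x0 := by
      filter_upwards [hmax] with x hx
      linarith
    have := hu.2 _ hψ.neg x0 hx0 hmin
    have e : hessMat (fun x => -ψ x) x0 = - hessMat ψ x0 := hessMat_neg ψ x0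
    have e' : gradient (fun x => -ψ x) x0 = - gradient ψ x0 := gradient_neg' ψ x0
    simp only [e, e'] at this
    show -f x0 ≤ Dg x0 (- gradient ψ x0) * -F x0 (- hessMat ψ x0)
    linarith

end TestFunctions

/-! ### Theorem on sums and sup-convolutions -/

open Filter Topology

section QuadJensen

variable {Z : Type*} [NormedAddCommGroup Z] [InnerProductSpace ℝ Z]

lemma form_add (T : Z →L[ℝ] Z) (hT : ∀ x y : Z, ⟪T x, y⟫ = ⟪x, T y⟫) (x y : Z) :
    ⟪T (x + y), x + y⟫ = ⟪T x, x⟫ + 2 * ⟪T x, y⟫ + ⟪T y, y⟫ := by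
  simp only [map_add, inner_add_left, inner_add_right]
  rw [hT y x, real_inner_comm (T x) y]
  ring

/-- A semiconvex function touched from above by a quadratic polynomial at `z0` has, at points
arbitrarily close to `z0`, a genuine second order expansion with nearby gradient and with Hessian
below that of the polynomial, up to a small error. -/
lemma jensen_quad [FiniteDimensional ℝ Z] {w : Z → ℝ} (hw : Continuous w) {C r : ℝ} (hC : 0 ≤ C)
    (hr : 0 < r)
    (hsc : ∀ z, ∃ a, ∀ z', w z + ⟪a, z' - z⟫ - C * ‖z' - z‖ ^ 2 ≤ w z')
    (T : Z →L[ℝ] Z) (hT : ∀ x y : Z, ⟪T x, y⟫ = ⟪x, T y⟫) (z0 p0 : Z)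
    (hmax : ∀ z ∈ closedBall z0 r,
      w z ≤ w z0 + ⟪p0, z - z0⟫ + 1 / 2 * ⟪T (z - z0), z - z0⟫) {ε : ℝ} (hε : 0 < ε) :
    ∃ (z1 p : Z) (S : Z →L[ℝ] Z), ‖z1 - z0‖ < ε ∧ ‖p - p0‖ ≤ ε ∧
      (∀ ζ, ⟪S ζ, ζ⟫ ≤ ⟪T ζ, ζ⟫ + ε * ‖ζ‖ ^ 2) ∧
      ∀ δ' > (0:ℝ), ∀ᶠ z in 𝓝 z1,
        |w z - w z1 - ⟪p, z - z1⟫ - 1 / 2 * ⟪S (z - z1), z - z1⟫| ≤ δ' * ‖z - z1‖ ^ 2 := by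
  set δ := ε / 2 with hδdef
  have hδ : 0 < δ := by positivity
  set T' : Z →L[ℝ] Z := T + (2 * δ) • ContinuousLinearMap.id ℝ Z with hT'
  have hT'form : ∀ ζ, ⟪T' ζ, ζ⟫ = ⟪T ζ, ζ⟫ + 2 * δ * ‖ζ‖ ^ 2 := fun ζ => by
    simp [hT', inner_add_left, inner_smul_left]
  have hT's : ∀ x y : Z, ⟪T' x, y⟫ = ⟪x, T' y⟫ := fun x y => by
    simp [hT', inner_add_left, inner_smul_left, inner_add_right, inner_smul_right, hT]
  set g : Z → ℝ := fun z => w z - ⟪p0, z - z0⟫ - 1 / 2 * ⟪T' (z - z0), z - z0⟫ with hg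
  have hgz0 : g z0 = w z0 := by simp [hg]
  have hgadd : ∀ z h, g (z + h) = w (z + h) - ⟪p0, z - z0⟫ - 1 / 2 * ⟪T' (z - z0), z - z0⟫
      - ⟪p0 + T' (z - z0), h⟫ - 1 / 2 * ⟪T' h, h⟫ := fun z h => by
    simp only [hg]
    rw [show z + h - z0 = (z - z0) + h by abel, form_add T' hT's, inner_add_right, inner_add_left]
    ring
  have hgsub : ∀ z z', g z' = w z' - ⟪p0, z - z0⟫ - 1 / 2 * ⟪T' (z - z0), z - z0⟫
      - ⟪p0 + T' (z - z0), z' - z⟫ - 1 / 2 * ⟪T' (z' - z), z' - z⟫ := fun z z' => by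
    have := hgadd z (z' - z)
    rwa [add_sub_cancel] at this
  set εJ := ε / (‖T'‖ + 1) with hεJ
  have hden : 0 < ‖T'‖ + 1 := by positivity
  have hεJ0 : 0 < εJ := by positivity
  have hεJe : εJ * (‖T'‖ + 1) = ε := by rw [hεJ]; field_simp
  have hεJle : εJ ≤ ε := by nlinarith [norm_nonneg T']
  have hgcont : Continuous g := by
    have h1 : Continuous fun z : Z => ⟪p0, z - z0⟫ := by fun_prop
    have h2 : Continuous fun z : Z => ⟪T' (z - z0), z - z0⟫ := by fun_prop
    exact (hw.sub h1).sub (continuous_const.mul h2)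
  obtain ⟨z1, p, S, h1, -, h3, h4, h5⟩ := jensen_alexandrov (w := g) (z0 := z0) (r := r)
    (δ := δ) (C := C + 1 / 2 * ‖T'‖) hr hδ (by positivity) hgcont.continuousOn
    (fun z _ => by
      obtain ⟨a, ha⟩ := hsc z
      refine ⟨a - (p0 + T' (z - z0)), fun z' _ => ?_⟩
      rw [hgsub z z', inner_sub_left]
      have e1 : g z = w z - ⟪p0, z - z0⟫ - 1 / 2 * ⟪T' (z - z0), z - z0⟫ := rfl
      have h2 : ⟪T' (z' - z), z' - z⟫ ≤ ‖T'‖ * ‖z' - z‖ ^ 2 := by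
        refine (real_inner_le_norm _ _).trans ?_
        have := mul_le_mul_of_nonneg_right (T'.le_opNorm (z' - z)) (norm_nonneg (z' - z))
        linarith
      have h3 := ha z'
      rw [e1]
      linarith)
    (fun z hz => by
      have := hmax z hz
      rw [hgz0]
      simp only [hg, hT'form]
      linarith) hεJ0
  refine ⟨z1, p + (p0 + T' (z1 - z0)), S + T', h1.trans_le hεJle, ?_, fun ζ => ?_, fun δ' hδ' => ?_⟩
  · have e : p + (p0 + T' (z1 - z0)) - p0 = p + T' (z1 - z0) := by abel
    rw [e]
    calc _ ≤ ‖p‖ + ‖T'‖ * ‖z1 - z0‖ := (norm_add_le _ _).trans (by gcongr; exact T'.le_opNorm _)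
      _ ≤ εJ + ‖T'‖ * εJ := by gcongr
      _ = ε := by rw [← hεJe]; ring
  · rw [add_apply, inner_add_left, hT'form]
    have := h4 ζ
    have : 2 * δ = ε := by rw [hδdef]; ring
    rw [this]
    linarith
  · filter_upwards [h5 δ' hδ'] with z hz
    rw [hgsub z1 z] at hz
    have e1 : g z1 = w z1 - ⟪p0, z1 - z0⟫ - 1 / 2 * ⟪T' (z1 - z0), z1 - z0⟫ := rfl
    rw [e1] at hz
    have e2 : ⟪(S + T') (z - z1), z - z1⟫ = ⟪S (z - z1), z - z1⟫ + ⟪T' (z - z1), z - z1⟫ :=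
      inner_add_left _ _ _
    rw [inner_add_left p, e2]
    convert hz using 2
    ring

end QuadJensen

section Sums

variable {n : ℕ}

/-- **Theorem on sums** for semiconvex functions: if `V x + V' y` is touched from above at
`z0` by a quadratic polynomial on `ℝⁿ × ℝⁿ`, then `V` and `V'` have superjets at nearby points,
with nearby gradients and with Hessians jointly dominated by that of the polynomial. -/
lemma theorem_on_sums {V V' : En n → ℝ} (hV : Continuous V) (hV' : Continuous V') {C r : ℝ}
    (hC : 0 ≤ C) (hr : 0 < r)
    (hsc : ∀ z, ∃ a, ∀ z', V z + ⟪a, z' - z⟫ - C * ‖z' - z‖ ^ 2 ≤ V z')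
    (hsc' : ∀ z, ∃ a, ∀ z', V' z + ⟪a, z' - z⟫ - C * ‖z' - z‖ ^ 2 ≤ V' z')
    (T : WithLp 2 (En n × En n) →L[ℝ] WithLp 2 (En n × En n)) (hT : ∀ x y, ⟪T x, y⟫ = ⟪x, T y⟫)
    (z0 p0 : WithLp 2 (En n × En n))
    (hmax : ∀ z ∈ closedBall z0 r, V z.fst + V' z.snd ≤
      V z0.fst + V' z0.snd + ⟪p0, z - z0⟫ + 1 / 2 * ⟪T (z - z0), z - z0⟫) {ε : ℝ} (hε : 0 < ε) :
    ∃ (x y p p' : En n) (X Y : Matrix (Fin n) (Fin n) ℝ), ‖x - z0.fst‖ < ε ∧ ‖y - z0.snd‖ < ε ∧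
      ‖p - p0.fst‖ ≤ ε ∧ ‖p' - p0.snd‖ ≤ ε ∧ X.IsSymm ∧ Y.IsSymm ∧ SupJet V x p X ∧
      SupJet V' y p' Y ∧ ∀ a c : En n, qf X a + qf Y c ≤
        ⟪T (WithLp.toLp 2 (a, c)), WithLp.toLp 2 (a, c)⟫ + ε * (‖a‖ ^ 2 + ‖c‖ ^ 2) := by
  have hfst : ∀ z : WithLp 2 (En n × En n), ‖z.fst‖ ≤ ‖z‖ := fun z => by
    have := WithLp.prod_norm_sq_eq_of_L2 z
    exact abs_le_of_sq_le_sq' (by nlinarith [sq_nonneg ‖z.snd‖]) (norm_nonneg _) |>.2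
  have hsnd : ∀ z : WithLp 2 (En n × En n), ‖z.snd‖ ≤ ‖z‖ := fun z => by
    have := WithLp.prod_norm_sq_eq_of_L2 z
    exact abs_le_of_sq_le_sq' (by nlinarith [sq_nonneg ‖z.fst‖]) (norm_nonneg _) |>.2
  have hsum : ∀ a c : En n, ‖(WithLp.toLp 2 (a, c) : WithLp 2 (En n × En n))‖ ^ 2 =
      ‖a‖ ^ 2 + ‖c‖ ^ 2 := fun a c => WithLp.prod_norm_sq_eq_of_L2 _
  have hinner : ∀ (z : WithLp 2 (En n × En n)) (a c : En n),
      ⟪z, WithLp.toLp 2 (a, c)⟫ = ⟪z.fst, a⟫ + ⟪z.snd, c⟫ := fun z a c =>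
    WithLp.prod_inner_apply _ _
  obtain ⟨z1, p, S, h1, h2, h3, h4⟩ := jensen_quad (w := fun z => V z.fst + V' z.snd)
    (C := C) (r := r)
    ((hV.comp (WithLp.fstL 2 ℝ (En n) (En n)).continuous).add
      (hV'.comp (WithLp.sndL 2 ℝ (En n) (En n)).continuous)) hC hr
    (fun z => by
      obtain ⟨a, ha⟩ := hsc z.fst
      obtain ⟨c, hc⟩ := hsc' z.snd
      refine ⟨WithLp.toLp 2 (a, c), fun z' => ?_⟩
      rw [real_inner_comm, hinner, WithLp.prod_norm_sq_eq_of_L2, real_inner_comm,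
        real_inner_comm c]
      have h1 := ha z'.fst
      have h2 := hc z'.snd
      simp only [WithLp.sub_fst, WithLp.sub_snd]
      linarith) T hT z0 p0 hmax hε
  let il : En n →L[ℝ] WithLp 2 (En n × En n) :=
    ((WithLp.prodContinuousLinearEquiv 2 ℝ (En n) (En n)).symm : _ →L[ℝ] _).comp
      (ContinuousLinearMap.inl ℝ (En n) (En n))
  let ir : En n →L[ℝ] WithLp 2 (En n × En n) :=
    ((WithLp.prodContinuousLinearEquiv 2 ℝ (En n) (En n)).symm : _ →L[ℝ] _).comp
      (ContinuousLinearMap.inr ℝ (En n) (En n))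
  have hil : ∀ a, il a = WithLp.toLp 2 (a, 0) := fun a => rfl
  have hir : ∀ a, ir a = WithLp.toLp 2 (0, a) := fun a => rfl
  obtain ⟨X, hX, hXf⟩ := exists_matrix ((WithLp.fstL 2 ℝ (En n) (En n)).comp (S.comp il))
  obtain ⟨Y, hY, hYf⟩ := exists_matrix ((WithLp.sndL 2 ℝ (En n) (En n)).comp (S.comp ir))
  have hXf' : ∀ a, qf X a = ⟪S (WithLp.toLp 2 (a, 0)), WithLp.toLp 2 (a, 0)⟫ := fun a => by
    rw [hXf, hinner, inner_zero_right, add_zero]; rfl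
  have hYf' : ∀ a, qf Y a = ⟪S (WithLp.toLp 2 (0, a)), WithLp.toLp 2 (0, a)⟫ := fun a => by
    rw [hYf, hinner, inner_zero_right, zero_add]; rfl
  -- the separate expansions of `V` and `V'`
  have hl : ∀ δ' > (0:ℝ), ∀ᶠ x in 𝓝 z1.fst, |V x - V z1.fst - ⟪p.fst, x - z1.fst⟫ -
      1 / 2 * qf X (x - z1.fst)| ≤ δ' * ‖x - z1.fst‖ ^ 2 := fun δ' hδ' => by
    have ht : Tendsto (fun x => z1 + il (x - z1.fst)) (𝓝 z1.fst) (𝓝 z1) := by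
      have : Continuous (fun x => z1 + il (x - z1.fst)) := by fun_prop
      simpa using this.tendsto z1.fst
    filter_upwards [ht.eventually (h4 δ' hδ')] with x hx
    rw [add_sub_cancel_left, hil, hinner, inner_zero_right, hsum, norm_zero, ← hXf'] at hx
    simp only [WithLp.add_fst, WithLp.add_snd, WithLp.toLp_fst, WithLp.toLp_snd, add_zero,
      add_sub_cancel, ne_eq, OfNat.ofNat_ne_zero, not_false_eq_true, zero_pow] at hx
    convert hx using 2
    ring
  have hrr : ∀ δ' > (0:ℝ), ∀ᶠ x in 𝓝 z1.snd, |V' x - V' z1.snd - ⟪p.snd, x - z1.snd⟫ -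
      1 / 2 * qf Y (x - z1.snd)| ≤ δ' * ‖x - z1.snd‖ ^ 2 := fun δ' hδ' => by
    have ht : Tendsto (fun x => z1 + ir (x - z1.snd)) (𝓝 z1.snd) (𝓝 z1) := by
      have : Continuous (fun x => z1 + ir (x - z1.snd)) := by fun_prop
      simpa using this.tendsto z1.snd
    filter_upwards [ht.eventually (h4 δ' hδ')] with x hx
    rw [add_sub_cancel_left, hir, hinner, inner_zero_right, hsum, norm_zero, ← hYf'] at hx
    simp only [WithLp.add_fst, WithLp.add_snd, WithLp.toLp_fst, WithLp.toLp_snd, add_zero, zero_add,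
      add_sub_cancel, ne_eq, OfNat.ofNat_ne_zero, not_false_eq_true, zero_pow] at hx
    convert hx using 2
    ring
  refine ⟨z1.fst, z1.snd, p.fst, p.snd, X, Y, (hfst (z1 - z0)).trans_lt h1,
    (hsnd (z1 - z0)).trans_lt h1, (hfst (p - p0)).trans h2, (hsnd (p - p0)).trans h2, hX, hY,
    fun δ' hδ' => ?_, fun δ' hδ' => ?_, fun a c => ?_⟩
  · filter_upwards [hl δ' hδ'] with x hx
    linarith [(abs_le.1 hx).2]
  · filter_upwards [hrr δ' hδ'] with x hx
    linarith [(abs_le.1 hx).2]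
  -- the expansion along `(a, c)` is the sum of the separate ones
  have hS : qf X a + qf Y c ≤ ⟪S (WithLp.toLp 2 (a, c)), WithLp.toLp 2 (a, c)⟫ := by
    refine le_of_forall_pos_le_add fun κ hκ => ?_
    set m := ‖a‖ ^ 2 + ‖c‖ ^ 2 with hm
    have hm0 : 0 ≤ m := by positivity
    set δ' := κ / (4 * (m + 1)) with hδ'
    have hδ'0 : 0 < δ' := by positivity
    have t1 : Tendsto (fun s : ℝ => z1.fst + s • a) (𝓝[>] 0) (𝓝 z1.fst) := by
      have : Continuous (fun s : ℝ => z1.fst + s • a) := by fun_prop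
      simpa using (this.tendsto 0).mono_left nhdsWithin_le_nhds
    have t2 : Tendsto (fun s : ℝ => z1.snd + s • c) (𝓝[>] 0) (𝓝 z1.snd) := by
      have : Continuous (fun s : ℝ => z1.snd + s • c) := by fun_prop
      simpa using (this.tendsto 0).mono_left nhdsWithin_le_nhds
    have t3 : Tendsto (fun s : ℝ => z1 + s • (WithLp.toLp 2 (a, c) : WithLp 2 (En n × En n)))
        (𝓝[>] 0) (𝓝 z1) := by
      have : Continuous
          (fun s : ℝ => z1 + s • (WithLp.toLp 2 (a, c) : WithLp 2 (En n × En n))) := by fun_prop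
      simpa using (this.tendsto 0).mono_left nhdsWithin_le_nhds
    obtain ⟨s, ⟨⟨hs1, hs2⟩, hs3⟩, hs⟩ := (((t1.eventually (hl δ' hδ'0)).and
      (t2.eventually (hrr δ' hδ'0))).and (t3.eventually (h4 δ' hδ'0))).and
        self_mem_nhdsWithin |>.exists
    have hs : 0 < s := hs
    rw [add_sub_cancel_left, inner_smul_right, qf_smul_right, norm_smul, mul_pow,
      Real.norm_eq_abs, sq_abs] at hs1 hs2
    rw [add_sub_cancel_left, inner_smul_right, map_smul, inner_smul_left, inner_smul_right,
      hinner, norm_smul, mul_pow, Real.norm_eq_abs, sq_abs, hsum] at hs3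
    simp only [WithLp.add_fst, WithLp.add_snd, WithLp.smul_fst, WithLp.smul_snd, WithLp.toLp_fst,
      WithLp.toLp_snd, conj_trivial] at hs3
    have k1 := (abs_le.1 hs1).1
    have k2 := (abs_le.1 hs2).1
    have k3 := (abs_le.1 hs3).2
    have key : s ^ 2 * (qf X a + qf Y c) ≤
        s ^ 2 * (⟪S (WithLp.toLp 2 (a, c)), WithLp.toLp 2 (a, c)⟫ + 4 * δ' * m) := by
      rw [hm]
      linarith
    have key2 := le_of_mul_le_mul_left key (by positivity)
    have : 4 * δ' * m ≤ κ := by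
      have : 4 * δ' * m = κ * (m / (m + 1)) := by rw [hδ']; field_simp
      rw [this]
      have : m / (m + 1) ≤ 1 := by rw [div_le_one (by positivity)]; linarith
      nlinarith
    linarith
  have := h3 (WithLp.toLp 2 (a, c))
  rw [hsum] at this
  linarith

end Sums

section SupConvolution

variable {n : ℕ}

/-- The sup-convolution `V` of `v` over a compact set, with a selection `s` of maximizers. -/
lemma exists_supConv {K : Set (En n)} (hK : IsCompact K) (hne : K.Nonempty) {v : En n → ℝ}
    (hv : ContinuousOn v K) (N : ℝ) :
    ∃ (V : En n → ℝ) (s : En n → En n), ∀ x, s x ∈ K ∧ V x = v (s x) - N * ‖x - s x‖ ^ 2 ∧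
      ∀ y ∈ K, v y - N * ‖x - y‖ ^ 2 ≤ V x := by
  have : ∀ x, ∃ y ∈ K, ∀ y' ∈ K, v y' - N * ‖x - y'‖ ^ 2 ≤ v y - N * ‖x - y‖ ^ 2 := fun x => by
    have hc : ContinuousOn (fun y => v y - N * ‖x - y‖ ^ 2) K :=
      hv.sub (Continuous.continuousOn (by fun_prop))
    obtain ⟨y, hy, hmax⟩ := hK.exists_isMaxOn hne hc
    exact ⟨y, hy, fun y' hy' => hmax hy'⟩
  choose s hs hs' using this
  exact ⟨fun x => v (s x) - N * ‖x - s x‖ ^ 2, s, fun x => ⟨hs x, rfl, hs' x⟩⟩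

variable {K : Set (En n)} {v V : En n → ℝ} {s : En n → En n} {N : ℝ}

lemma supConv_semiconvex (h : ∀ x, s x ∈ K ∧ V x = v (s x) - N * ‖x - s x‖ ^ 2 ∧
      ∀ y ∈ K, v y - N * ‖x - y‖ ^ 2 ≤ V x) (x x' : En n) :
    V x + ⟪(-(2 * N)) • (x - s x), x' - x⟫ - N * ‖x' - x‖ ^ 2 ≤ V x' := by
  have h1 := (h x').2.2 _ (h x).1
  have e : x' - s x = (x - s x) + (x' - x) := by abel
  rw [e, norm_add_sq_real] at h1
  rw [(h x).2.1, inner_smul_left]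
  simp only [conj_trivial]
  linarith

lemma supConv_continuous (hN : 0 ≤ N) {R : ℝ} (hR : ∀ y ∈ K, ‖y‖ ≤ R)
    (h : ∀ x, s x ∈ K ∧ V x = v (s x) - N * ‖x - s x‖ ^ 2 ∧
      ∀ y ∈ K, v y - N * ‖x - y‖ ^ 2 ≤ V x) : Continuous V := by
  have key : ∀ x x', V x - V x' ≤ 2 * N * (‖x‖ + R) * ‖x' - x‖ + N * ‖x' - x‖ ^ 2 := fun x x' => by
    have h1 := supConv_semiconvex h x x'
    rw [inner_smul_left] at h1
    simp only [conj_trivial] at h1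
    have h2 := real_inner_le_norm (x - s x) (x' - x)
    have h3 : ‖x - s x‖ ≤ ‖x‖ + R := (norm_sub_le _ _).trans (by gcongr; exact hR _ (h x).1)
    have h4 := h2.trans (mul_le_mul_of_nonneg_right h3 (norm_nonneg (x' - x)))
    have h5 := mul_le_mul_of_nonneg_left h4 (by positivity : 0 ≤ 2 * N)
    linarith
  rw [continuous_iff_continuousAt]
  intro x0
  have hb : ∀ x, |V x - V x0| ≤ 2 * N * (‖x‖ + R) * ‖x - x0‖ + 2 * N * (‖x0‖ + R) * ‖x - x0‖ +
      N * ‖x - x0‖ ^ 2 := fun x => by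
    have k1 := key x x0
    have k2 := key x0 x
    rw [norm_sub_rev] at k1
    have hR0 : 0 ≤ R := (norm_nonneg _).trans (hR _ (h x).1)
    have p1 : 0 ≤ 2 * N * (‖x‖ + R) * ‖x - x0‖ := by positivity
    have p2 : 0 ≤ 2 * N * (‖x0‖ + R) * ‖x - x0‖ := by positivity
    rw [abs_le]
    constructor <;> linarith
  have ht : Tendsto (fun x => 2 * N * (‖x‖ + R) * ‖x - x0‖ + 2 * N * (‖x0‖ + R) * ‖x - x0‖ +
      N * ‖x - x0‖ ^ 2) (𝓝 x0) (𝓝 0) := by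
    have : Continuous (fun x => 2 * N * (‖x‖ + R) * ‖x - x0‖ + 2 * N * (‖x0‖ + R) * ‖x - x0‖ +
      N * ‖x - x0‖ ^ 2) := by fun_prop
    simpa using this.tendsto x0
  rw [ContinuousAt, tendsto_iff_dist_tendsto_zero]
  exact squeeze_zero (fun _ => dist_nonneg) (fun x => by rw [Real.dist_eq]; exact hb x) ht

/-- Superjets of the sup-convolution are superjets of the function at the maximizer. -/
lemma supConv_jet (h : ∀ x, s x ∈ K ∧ V x = v (s x) - N * ‖x - s x‖ ^ 2 ∧
      ∀ y ∈ K, v y - N * ‖x - y‖ ^ 2 ≤ V x) {x p : En n} {X : Matrix (Fin n) (Fin n) ℝ}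
    (hx : K ∈ 𝓝 (s x)) (hj : SupJet V x p X) : SupJet v (s x) p X := by
  intro δ hδ
  have ht : Tendsto (fun y => x + (y - s x)) (𝓝 (s x)) (𝓝 x) := by
    have : Continuous (fun y => x + (y - s x)) := by fun_prop
    simpa using this.tendsto (s x)
  filter_upwards [hx, ht.eventually (hj δ hδ)] with y hy hyj
  have h1 := (h (x + (y - s x))).2.2 y hy
  rw [show x + (y - s x) - y = x - s x by abel] at h1
  rw [add_sub_cancel_left, (h x).2.1] at hyj
  linarith

end SupConvolution

/-! ### Second-order bounds for the modulus of continuity -/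

open Filter Topology

section Modulus

lemma sqrt_taylor {t s : ℝ} (ht : 0 < t) (hs : 0 ≤ s) (hX : |s ^ 2 / t ^ 2 - 1| ≤ 1 / 25) :
    √s ≤ √t * (1 + (s ^ 2 / t ^ 2 - 1) / 4 - (s ^ 2 / t ^ 2 - 1) ^ 2 / 12) := by
  set y := √(s / t) with hy
  have hy0 : 0 ≤ y := Real.sqrt_nonneg _
  have hy2 : y ^ 2 = s / t := Real.sq_sqrt (by positivity)
  have hy4 : s ^ 2 / t ^ 2 = y ^ 4 := by
    rw [show y ^ 4 = (y ^ 2) ^ 2 by ring, hy2, div_pow]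
  have hsy : √s = √t * y := by
    rw [hy, ← Real.sqrt_mul ht.le, mul_div_cancel₀ _ ht.ne']
  rw [hsy, hy4]
  rw [hy4] at hX
  refine mul_le_mul_of_nonneg_left ?_ (Real.sqrt_nonneg _)
  obtain ⟨h1, h2⟩ := abs_le.1 hX
  -- `y - 1 = (y⁴ - 1) / ((y + 1) (y² + 1))` is at most `1/25` in absolute value
  have hd1 : y ≤ 26 / 25 := by
    by_contra hc
    push Not at hc
    nlinarith [sq_nonneg (y ^ 2 - 1), sq_nonneg y]
  have hd2 : 24 / 25 ≤ y := by
    by_contra hc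
    push Not at hc
    have : y ^ 2 ≤ y := by nlinarith
    nlinarith [sq_nonneg y]
  clear_value y
  obtain ⟨d, rfl⟩ : ∃ d, y = 1 + d := ⟨y - 1, by ring⟩
  have e : 1 + ((1 + d) ^ 4 - 1) / 4 - ((1 + d) ^ 4 - 1) ^ 2 / 12 - (1 + d) =
      d ^ 2 * (3 / 2 + d + d ^ 2 / 4 - (4 + 6 * d + 4 * d ^ 2 + d ^ 3) ^ 2 / 12) := by ring
  have hd3 : -(1 / 25) ≤ d := by linarith
  have hd4 : d ≤ 1 / 25 := by linarith
  have hq : 0 ≤ 3 / 2 + d + d ^ 2 / 4 - (4 + 6 * d + 4 * d ^ 2 + d ^ 3) ^ 2 / 12 := by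
    have hdd : d ^ 2 ≤ 1 / 625 := by nlinarith
    have hc : |d ^ 3| ≤ 1 / 10000 := by
      rw [abs_pow, show |d| ^ 3 = |d| * d ^ 2 by rw [← sq_abs d]; ring]
      have : |d| ≤ 1 / 25 := abs_le.2 ⟨by linarith, by linarith⟩
      nlinarith [abs_nonneg d, sq_nonneg d]
    obtain ⟨c1, c2⟩ := abs_le.1 hc
    set u := 4 * d ^ 2 + d ^ 3 with hu
    have hu1 : u ≤ 1 / 100 := by nlinarith
    have hu2 : -(1 / 100) ≤ u := by nlinarith [sq_nonneg d]
    have e2 : 4 + 6 * d + 4 * d ^ 2 + d ^ 3 = (4 + u) + 6 * d := by rw [hu]; ring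
    rw [e2]
    nlinarith [sq_nonneg d]
  nlinarith [mul_nonneg (sq_nonneg d) hq]

/-- Second order upper bound for `√|z|`: concave with a definite rate in the radial direction. -/
lemma sqrt_quad {t s h m : ℝ} (ht : 0 < t) (hs : 0 ≤ s) (he : s ^ 2 = t ^ 2 * (1 + 2 * h + m))
    (hh : |h| ≤ 1 / 100) (hm : 0 ≤ m) (hm1 : m ≤ 1 / 10000) :
    √s ≤ √t * (1 + h / 2 + 7 / 24 * m - h ^ 2 / 3) := by
  have hX : s ^ 2 / t ^ 2 - 1 = 2 * h + m := by rw [he]; field_simp; ring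
  obtain ⟨h1, h2⟩ := abs_le.1 hh
  have := sqrt_taylor ht hs (by rw [hX, abs_le]; constructor <;> linarith)
  rw [hX] at this
  refine this.trans (mul_le_mul_of_nonneg_left ?_ (Real.sqrt_nonneg _))
  nlinarith [mul_nonneg hm (by linarith : 0 ≤ h + 1 / 100), sq_nonneg m]

variable {E : Type*} [NormedAddCommGroup E] [InnerProductSpace ℝ E]

/-- Quadratic upper bound for the modulus `L √|z| + α |z|` near `z = τ² e`, with a strictly negative
second derivative in the radial direction `e`. -/
lemma modulus_bound {L α τ : ℝ} (hL : 0 ≤ L) (hα : 0 ≤ α) (hτ : 0 < τ) {e ζ : E} (he : ‖e‖ = 1)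
    (hζ : ‖ζ‖ ≤ τ ^ 2 / 100) (hαb : α / (2 * τ ^ 2) ≤ L / τ ^ 3 / 96) :
    L * √‖τ ^ 2 • e + ζ‖ + α * ‖τ ^ 2 • e + ζ‖ ≤ L * τ + α * τ ^ 2 + (L / (2 * τ) + α) * ⟪e, ζ⟫ +
      L / τ ^ 3 / 96 * (29 * ‖ζ‖ ^ 2 - 32 * ⟪e, ζ⟫ ^ 2) := by
  have ht : 0 < τ ^ 2 := by positivity
  set s := ‖τ ^ 2 • e + ζ‖ with hs
  have hs2 : s ^ 2 = τ ^ 4 + 2 * (τ ^ 2 * ⟪e, ζ⟫) + ‖ζ‖ ^ 2 := by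
    rw [hs, norm_add_sq_real, norm_smul, inner_smul_left, he, Real.norm_of_nonneg ht.le]
    simp only [conj_trivial]; ring
  set h := ⟪e, ζ⟫ / τ ^ 2 with hh
  set m := ‖ζ‖ ^ 2 / τ ^ 4 with hm
  have hhe : ⟪e, ζ⟫ = h * τ ^ 2 := by rw [hh]; field_simp
  have hme : ‖ζ‖ ^ 2 = m * τ ^ 4 := by rw [hm]; field_simp
  have hin : |⟪e, ζ⟫| ≤ τ ^ 2 / 100 := by
    have := abs_real_inner_le_norm e ζ
    rw [he, one_mul] at this
    exact this.trans hζ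
  have h1 : |h| ≤ 1 / 100 := by
    rw [hh, abs_div, abs_of_pos ht, div_le_iff₀ ht]; linarith
  have h2 : m ≤ 1 / 10000 := by
    rw [hm, div_le_iff₀ (by positivity)]
    have := pow_le_pow_left₀ (norm_nonneg ζ) hζ 2
    calc _ ≤ _ := this
      _ = _ := by ring
  have hm0 : 0 ≤ m := by positivity
  have hsq := sqrt_quad (t := τ ^ 2) (s := s) (h := h) (m := m) ht (norm_nonneg _)
    (by rw [hs2, hhe, hme]; ring) h1 hm0 h2
  rw [Real.sqrt_sq hτ.le] at hsq
  have h3 := mul_le_mul_of_nonneg_left hsq hL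
  -- `s ≤ (s² + t²) / (2 t)`
  have h4 : s ≤ τ ^ 2 + ⟪e, ζ⟫ + ‖ζ‖ ^ 2 / (2 * τ ^ 2) := by
    have : τ ^ 2 + ⟪e, ζ⟫ + ‖ζ‖ ^ 2 / (2 * τ ^ 2) - s = (s - τ ^ 2) ^ 2 / (2 * τ ^ 2) := by
      have : (s - τ ^ 2) ^ 2 = (τ ^ 4 + 2 * (τ ^ 2 * ⟪e, ζ⟫) + ‖ζ‖ ^ 2) - 2 * s * τ ^ 2 + τ ^ 4 := by
        rw [← hs2]; ring
      rw [this]; field_simp; ring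
    have : 0 ≤ (s - τ ^ 2) ^ 2 / (2 * τ ^ 2) := by positivity
    linarith
  have h5 := mul_le_mul_of_nonneg_left h4 hα
  have h6 := mul_le_mul_of_nonneg_right hαb (sq_nonneg ‖ζ‖)
  have e1 : α * (‖ζ‖ ^ 2 / (2 * τ ^ 2)) = α / (2 * τ ^ 2) * ‖ζ‖ ^ 2 := by ring
  have e2 : L * (τ * (1 + h / 2 + 7 / 24 * m - h ^ 2 / 3)) = L * τ + L / (2 * τ) * ⟪e, ζ⟫ +
      L / τ ^ 3 / 96 * (28 * ‖ζ‖ ^ 2 - 32 * ⟪e, ζ⟫ ^ 2) := by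
    rw [hhe, hme]; field_simp; ring
  rw [e2] at h3
  rw [mul_add, mul_add, e1] at h5
  linarith

end Modulus

section MatrixContradiction

variable {n : ℕ} {lam Lam : ℝ}

lemma norm_one_le : ‖(1 : Matrix (Fin n) (Fin n) ℝ)‖ ≤ 1 := by
  rw [Matrix.norm_le_iff zero_le_one]
  intro i j
  rw [Matrix.one_apply]
  split_ifs <;> simp

/-- A matrix bounded above by `b` on which the operator is not too negative is bounded. -/
lemma norm_le_of_upper (hl : 0 < lam) (hL : lam ≤ Lam) {G : Matrix (Fin n) (Fin n) ℝ → ℝ}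
    (hG : IsUnifEllipticConst lam Lam G) {X : Matrix (Fin n) (Fin n) ℝ} (hX : X.IsSymm) {b η : ℝ}
    (hb : 1 ≤ b) (hη : η ≤ 1) (hXb : ∀ a, qf X a ≤ b * ‖a‖ ^ 2) (hGX : -η ≤ G X) :
    ‖X‖ ≤ (1 + (Lam * n + 1) / lam) * b := by
  have hb0 : 0 ≤ b := by linarith
  have hPs : (b • 1 - X).IsSymm := (isSymm_smul_one b).sub hX
  have hP : (b • 1 - X).PosSemidef := posSemidef_of_qf hPs fun a => by
    rw [qf_sub, qf_smul, qf_one]; linarith [hXb a]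
  have h1 := (ell_add_psd hL hG hX hP).1
  rw [add_sub_cancel] at h1
  have h2 := (ell_add_psd hL hG Matrix.isSymm_zero (psd_smul_one (n := n) hb0)).2
  rw [zero_add, hG.2, trace_smul_one] at h2
  have h3 : (b • 1 - X).trace ≤ (Lam * n + 1) / lam * b := by
    rw [div_mul_eq_mul_div, le_div_iff₀ hl]
    linarith
  have h4 : ‖X‖ ≤ ‖b • (1 : Matrix (Fin n) (Fin n) ℝ)‖ + ‖b • 1 - X‖ := by
    have := norm_sub_le (b • (1 : Matrix (Fin n) (Fin n) ℝ)) (b • 1 - X)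
    rwa [sub_sub_cancel] at this
  rw [matrix_norm_smul, abs_of_nonneg hb0] at h4
  have h5 := norm_le_trace hP
  have h6 := mul_le_mul_of_nonneg_left (norm_one_le (n := n)) hb0
  linarith

/-- The incompatibility between the equations and the strictly concave direction produced by the
doubling of variables. -/
lemma matrix_contra (hl : 0 < lam) (hL : lam ≤ Lam)
    {F : En n → Matrix (Fin n) (Fin n) ℝ → ℝ} {η b : ℝ}
    (hell : ∀ x ∈ ball (0 : En n) 1, IsUnifEllipticConst lam Lam (F x))
    (hosc : ∀ x ∈ ball (0 : En n) 1, ∀ M : Matrix (Fin n) (Fin n) ℝ, M.IsSymm →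
      |F x M - F 0 M| ≤ η * (‖M‖ + 1))
    {x y e : En n} (hx : x ∈ ball (0 : En n) 1) (hy : y ∈ ball (0 : En n) 1)
    {X Y : Matrix (Fin n) (Fin n) ℝ} (hX : X.IsSymm) (hY : Y.IsSymm) (he : ‖e‖ = 1)
    (hb : 1 ≤ b) (hη0 : 0 ≤ η) (hη1 : η ≤ 1)
    (hXb : ∀ a, qf X a ≤ b * ‖a‖ ^ 2) (hYb : ∀ a, - qf Y a ≤ b * ‖a‖ ^ 2)
    (hXY : ∀ a, qf X a - qf Y a ≤ 262 * ‖a‖ ^ 2) (hXYe : qf X e - qf Y e ≤ 262 - b / 4)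
    (hFX : -η ≤ F x X) (hFY : F y Y ≤ η)
    (hηs : η * (4 + 2 * (1 + (Lam * n + 1) / lam)) ≤ lam / 8)
    (hbig : 262 * (Lam * n) < lam * b / 8) : False := by
  set C := 1 + (Lam * n + 1) / lam with hC
  have hXn := norm_le_of_upper hl hL (hell x hx) hX hb hη1 hXb hFX
  have hYn := norm_le_of_upper hl hL (ell_reflect (hell y hy)) hY.neg hb hη1
    (fun a => by rw [qf_neg]; exact hYb a) (by rw [neg_neg]; linarith)
  rw [norm_neg] at hYn
  rw [← hC] at hXn hYn
  have o1 := (abs_le.1 (hosc x hx X hX)).2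
  have o2 := (abs_le.1 (hosc y hy Y hY)).1
  have m1 := mul_le_mul_of_nonneg_left (by linarith : ‖X‖ + 1 ≤ C * b + 1) hη0
  have m2 := mul_le_mul_of_nonneg_left (by linarith : ‖Y‖ + 1 ≤ C * b + 1) hη0
  have h0 := hell 0 (mem_ball_self one_pos)
  have hRs : ((262:ℝ) • 1 - (X - Y)).IsSymm := (isSymm_smul_one 262).sub (hX.sub hY)
  have hR : ((262:ℝ) • 1 - (X - Y)).PosSemidef := posSemidef_of_qf hRs fun a => by
    rw [qf_sub, qf_sub, qf_smul, qf_one]; linarith [hXY a]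
  have u1 := (ell_add_psd hL h0 hX hR).1
  have u2 := ell_add_one hL h0 hY (by norm_num : (0:ℝ) ≤ 262)
  rw [show X + ((262:ℝ) • 1 - (X - Y)) = Y + (262:ℝ) • 1 by abel] at u1
  have u3 := qf_le_trace hR he
  rw [qf_sub, qf_sub, qf_smul, qf_one, he] at u3
  have u4 : b / 4 ≤ ((262:ℝ) • 1 - (X - Y)).trace := by linarith
  have u5 := mul_le_mul_of_nonneg_left u4 hl.le
  have u6 := mul_le_mul_of_nonneg_right hηs (by linarith : 0 ≤ b)
  have u7 : η ≤ η * b := le_mul_of_one_le_right hη0 hb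
  nlinarith

end MatrixContradiction

/-! ### Doubling of variables -/

open Filter Topology

section Doubling

variable {n : ℕ}

/-- The theorem on sums for a radially concave quadratic polynomial in `x - y` plus a quadratic
localization in `x`. -/
lemma doubling_jets {V V' : En n → ℝ} (hV : Continuous V) (hV' : Continuous V') {C r : ℝ}
    (hC : 0 ≤ C) (hr : 0 < r)
    (hsc : ∀ z, ∃ a, ∀ z', V z + ⟪a, z' - z⟫ - C * ‖z' - z‖ ^ 2 ≤ V z')
    (hsc' : ∀ z, ∃ a, ∀ z', V' z + ⟪a, z' - z⟫ - C * ‖z' - z‖ ^ 2 ≤ V' z')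
    (x0 y0 e g : En n) (σ b : ℝ)
    (hmax : ∀ h k : En n, ‖h‖ ≤ r → ‖k‖ ≤ r → V (x0 + h) + V' (y0 + k) ≤
      V x0 + V' y0 + σ * ⟪e, h - k⟫ + ⟪g, h⟫ +
        b / 96 * (29 * ‖h - k‖ ^ 2 - 32 * ⟪e, h - k⟫ ^ 2) + 130 * ‖h‖ ^ 2) {ε : ℝ} (hε : 0 < ε) :
    ∃ (x y p p' : En n) (X Y : Matrix (Fin n) (Fin n) ℝ), ‖x - x0‖ < ε ∧ ‖y - y0‖ < ε ∧
      ‖p - (σ • e + g)‖ ≤ ε ∧ ‖p' + σ • e‖ ≤ ε ∧ X.IsSymm ∧ Y.IsSymm ∧ SupJet V x p X ∧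
      SupJet V' y p' Y ∧ ∀ a c : En n, qf X a + qf Y c ≤
        b / 48 * (29 * ‖a - c‖ ^ 2 - 32 * ⟪e, a - c⟫ ^ 2) + 260 * ‖a‖ ^ 2 +
          ε * (‖a‖ ^ 2 + ‖c‖ ^ 2) := by
  have hfst : ∀ z : WithLp 2 (En n × En n), ‖z.fst‖ ≤ ‖z‖ := fun z => by
    have := WithLp.prod_norm_sq_eq_of_L2 z
    exact abs_le_of_sq_le_sq' (by nlinarith [sq_nonneg ‖z.snd‖]) (norm_nonneg _) |>.2
  have hsnd : ∀ z : WithLp 2 (En n × En n), ‖z.snd‖ ≤ ‖z‖ := fun z => by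
    have := WithLp.prod_norm_sq_eq_of_L2 z
    exact abs_le_of_sq_le_sq' (by nlinarith [sq_nonneg ‖z.fst‖]) (norm_nonneg _) |>.2
  let fs : WithLp 2 (En n × En n) →L[ℝ] En n := WithLp.fstL 2 ℝ (En n) (En n)
  let sn : WithLp 2 (En n × En n) →L[ℝ] En n := WithLp.sndL 2 ℝ (En n) (En n)
  let B : En n →L[ℝ] En n := (29 * b / 48) • ContinuousLinearMap.id ℝ (En n) -
    (32 * b / 48) • (innerSL ℝ e).smulRight e
  let T : WithLp 2 (En n × En n) →L[ℝ] WithLp 2 (En n × En n) :=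
    (fs - sn).adjoint ∘L B ∘L (fs - sn) + (260 : ℝ) • (fs.adjoint ∘L fs)
  have hTi : ∀ z w : WithLp 2 (En n × En n), ⟪T z, w⟫ =
      b / 48 * (29 * ⟪z.fst - z.snd, w.fst - w.snd⟫ -
        32 * (⟪e, z.fst - z.snd⟫ * ⟪e, w.fst - w.snd⟫)) + 260 * ⟪z.fst, w.fst⟫ := fun z w => by
    have h1 : ⟪T z, w⟫ = ⟪B (z.fst - z.snd), w.fst - w.snd⟫ + 260 * ⟪z.fst, w.fst⟫ := by
      simp only [T, add_apply, smul_apply,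
        ContinuousLinearMap.comp_apply, inner_add_left, inner_smul_left,
        ContinuousLinearMap.adjoint_inner_left]
      simp [fs, sn]
    rw [h1]
    simp only [B, sub_apply, smul_apply,
      ContinuousLinearMap.id_apply, ContinuousLinearMap.smulRight_apply, innerSL_apply_apply,
      inner_sub_left (𝕜 := ℝ) (E := En n) ((29 * b / 48) • (z.fst - z.snd)), inner_smul_left,
      conj_trivial]
    ring
  have hTs : ∀ z w, ⟪T z, w⟫ = ⟪z, T w⟫ := fun z w => by
    rw [real_inner_comm (T w) z, hTi, hTi, real_inner_comm (z.fst - z.snd) (w.fst - w.snd),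
      real_inner_comm z.fst w.fst]
    ring
  have hin : ∀ z w : WithLp 2 (En n × En n), ⟪z, w⟫ = ⟪z.fst, w.fst⟫ + ⟪z.snd, w.snd⟫ :=
    fun z w => WithLp.prod_inner_apply _ _
  obtain ⟨x, y, p, p', X, Y, h1, h2, h3, h4, h5, h6, h7, h8, h9⟩ := theorem_on_sums hV hV' hC hr
    hsc hsc' T hTs (WithLp.toLp 2 (x0, y0)) (WithLp.toLp 2 (σ • e + g, -(σ • e))) (fun z hz => by
      rw [mem_closedBall, dist_eq_norm] at hz
      have e1 := hmax _ _ ((hfst _).trans hz) ((hsnd _).trans hz)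
      rw [hTi, hin]
      simp only [WithLp.sub_fst, WithLp.sub_snd, WithLp.toLp_fst, WithLp.toLp_snd,
        add_sub_cancel, real_inner_self_eq_norm_sq] at e1 ⊢
      rw [inner_neg_left, inner_add_left, inner_smul_left, inner_smul_left]
      rw [inner_sub_right e (z.fst - x0)] at *
      simp only [conj_trivial]
      nlinarith [e1]) hε
  refine ⟨x, y, p, p', X, Y, h1, h2, h3, ?_, h5, h6, h7, h8, fun a c => ?_⟩
  · simpa using h4
  · have := h9 a c
    rw [hTi] at this
    simp only [WithLp.toLp_fst, WithLp.toLp_snd, real_inner_self_eq_norm_sq] at this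
    linarith

/-- The degenerate factor can be dropped from the inequality once it is at least `1`. -/
lemma le_of_le_rpow_mul {A γ η f : ℝ} (hA : 1 ≤ A) (hγ : 0 ≤ γ) (hη : 0 ≤ η)
    (h : -η ≤ A ^ γ * f) : -η ≤ f := by
  rcases le_total 0 f with hf | hf
  · linarith
  · have := mul_le_mul_of_nonpos_right (Real.one_le_rpow hA hγ) hf
    linarith

/-- In the closed ball of radius `31/32`, the point realizing the sup-convolution of a normalized
function is close. -/
lemma supConv_close {v V : En n → ℝ} {s : En n → En n} {N : ℝ} (hN : 8192 ≤ N)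
    (hb : ∀ x ∈ ball (0 : En n) 1, |v x| ≤ 1)
    (h : ∀ x, s x ∈ closedBall (0 : En n) (31 / 32) ∧ V x = v (s x) - N * ‖x - s x‖ ^ 2 ∧
      ∀ y ∈ closedBall (0 : En n) (31 / 32), v y - N * ‖x - y‖ ^ 2 ≤ V x) {x : En n}
    (hx : ‖x‖ ≤ 31 / 32) : N * ‖x - s x‖ ^ 2 ≤ 2 ∧ ‖x - s x‖ ≤ 1 / 64 := by
  have hK : closedBall (0 : En n) (31 / 32) ⊆ ball 0 1 := closedBall_subset_ball (by norm_num)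
  have hxK : x ∈ closedBall (0 : En n) (31 / 32) := mem_closedBall_zero_iff.2 hx
  have h1 := (h x).2.2 x hxK
  rw [(h x).2.1, sub_self, norm_zero] at h1
  have h2 := (abs_le.1 (hb x (hK hxK))).1
  have h3 := (abs_le.1 (hb _ (hK (h x).1))).2
  have h4 : N * ‖x - s x‖ ^ 2 ≤ 2 := by linarith
  refine ⟨h4, ?_⟩
  by_contra hc
  push Not at hc
  have h5 : (1 / 64 : ℝ) ^ 2 < ‖x - s x‖ ^ 2 := pow_lt_pow_left₀ hc (by norm_num) two_ne_zero
  have h6 := mul_le_mul_of_nonneg_right hN (sq_nonneg ‖x - s x‖)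
  linarith

variable {lam Lam γ η : ℝ} {ξ : En n} {F : En n → Matrix (Fin n) (Fin n) ℝ → ℝ} {v : En n → ℝ}

/-- The doubling function cannot attain an interior maximum off the diagonal when the slope of the
modulus is far from `|ξ|`, the only slope at which the equation degenerates. -/
lemma holder_core (hl : 0 < lam) (hL : lam ≤ Lam) (hγ : 0 ≤ γ) (hη0 : 0 ≤ η) (hη1 : η ≤ 1)
    (hηs : η * (4 + 2 * (1 + (Lam * n + 1) / lam)) ≤ lam / 8) (hS : Sol lam Lam γ η ξ F v)
    {L α τ N : ℝ} {x0 y0 z0 : En n} {V V' : En n → ℝ} {s s' : En n → En n}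
    (hL1 : 82 ≤ L) (hL2 : 16768 * (Lam * n) ≤ lam * L) (hα0 : 0 ≤ α) (hα : α ≤ 70)
    (hτ : 0 < τ) (hτL : L * τ < 2) (hN : 8192 ≤ N)
    (hV : ∀ x, s x ∈ closedBall (0 : En n) (31 / 32) ∧ V x = v (s x) - N * ‖x - s x‖ ^ 2 ∧
      ∀ y ∈ closedBall (0 : En n) (31 / 32), v y - N * ‖x - y‖ ^ 2 ≤ V x)
    (hV' : ∀ x, s' x ∈ closedBall (0 : En n) (31 / 32) ∧
      V' x = - v (s' x) - N * ‖x - s' x‖ ^ 2 ∧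
      ∀ y ∈ closedBall (0 : En n) (31 / 32), - v y - N * ‖x - y‖ ^ 2 ≤ V' x)
    (hz0 : ‖z0‖ ≤ 3 / 4) (hx0 : ‖x0 - z0‖ < 1 / 8) (hy0 : ‖y0 - z0‖ < 3 / 16)
    (hxy : ‖x0 - y0‖ = τ ^ 2) (hslope : 35 ≤ |L / (2 * τ) + α - ‖ξ‖|)
    (hmax : ∀ x y : En n, ‖x - z0‖ ≤ 1 / 8 → ‖y - z0‖ ≤ 3 / 16 →
      V x + V' y - (L * √‖x - y‖ + α * ‖x - y‖) - 130 * ‖x - z0‖ ^ 2 ≤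
      V x0 + V' y0 - (L * √‖x0 - y0‖ + α * ‖x0 - y0‖) - 130 * ‖x0 - z0‖ ^ 2) : False := by
  have ht : 0 < τ ^ 2 := by positivity
  set e : En n := (τ ^ 2)⁻¹ • (x0 - y0) with he
  have hen : ‖e‖ = 1 := by
    rw [he, norm_smul, hxy, norm_inv, Real.norm_of_nonneg ht.le, inv_mul_cancel₀ ht.ne']
  have hte : τ ^ 2 • e = x0 - y0 := by rw [he, smul_inv_smul₀ ht.ne']
  set σ := L / (2 * τ) + α with hσ
  set b := L / τ ^ 3 with hb
  have hLp : 0 < L := by linarith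
  have hL4 : lam * L ≤ lam * L ^ 4 := by
    have : L ≤ L ^ 4 := le_self_pow₀ (by linarith) (by norm_num)
    exact mul_le_mul_of_nonneg_left this hl.le
  have hbL : L ^ 4 < 8 * b := by
    rw [hb, mul_div_assoc', lt_div_iff₀ (by positivity)]
    have : (L * τ) ^ 3 < 2 ^ 3 := pow_lt_pow_left₀ hτL (by positivity) (by norm_num)
    calc L ^ 4 * τ ^ 3 = L * (L * τ) ^ 3 := by ring
      _ < L * 2 ^ 3 := mul_lt_mul_of_pos_left this hLp
      _ = 8 * L := by ring
  have hbig : 262 * (Lam * n) < lam * b / 8 := by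
    have := mul_lt_mul_of_pos_left hbL hl
    linarith
  have hb2 : 672 ≤ b := by
    have : (82 : ℝ) ^ 4 ≤ L ^ 4 := pow_le_pow_left₀ (by norm_num) hL1 4
    norm_num at this
    linarith
  have hαb : α / (2 * τ ^ 2) ≤ L / τ ^ 3 / 96 := by
    rw [div_div, div_le_div_iff₀ (by positivity) (by positivity)]
    have h1 : 3360 * τ ≤ L := by nlinarith
    have h2 : α * 48 * τ ≤ L := by nlinarith
    calc α * (τ ^ 3 * 96) = (α * 48 * τ) * (2 * τ ^ 2) := by ring
      _ ≤ L * (2 * τ ^ 2) := mul_le_mul_of_nonneg_right h2 (by positivity)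
  set r := min (τ ^ 2 / 200) (min (1 / 8 - ‖x0 - z0‖) (3 / 16 - ‖y0 - z0‖)) with hr
  have hr1 : r ≤ τ ^ 2 / 200 := min_le_left _ _
  have hr2 : r ≤ 1 / 8 - ‖x0 - z0‖ := (min_le_right _ _).trans (min_le_left _ _)
  have hr3 : r ≤ 3 / 16 - ‖y0 - z0‖ := (min_le_right _ _).trans (min_le_right _ _)
  have hr0 : 0 < r := lt_min (by positivity) (lt_min (by linarith) (by linarith))
  have hR : ∀ y ∈ closedBall (0 : En n) (31 / 32), ‖y‖ ≤ 31 / 32 := fun y hy =>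
    mem_closedBall_zero_iff.1 hy
  have hN0 : 0 ≤ N := by linarith
  obtain ⟨x, y, p, p', X, Y, h1, h2, h3, h4, h5, h6, h7, h8, h9⟩ := doubling_jets
    (supConv_continuous hN0 hR hV) (supConv_continuous (v := fun x => - v x) hN0 hR hV') hN0 hr0
    (fun z => ⟨_, fun z' => supConv_semiconvex hV z z'⟩)
    (fun z => ⟨_, fun z' => supConv_semiconvex (v := fun x => - v x) hV' z z'⟩)
    x0 y0 e ((260 : ℝ) • (x0 - z0)) σ b (fun h k hh hk => by
      have e1 : x0 + h - z0 = (x0 - z0) + h := by abel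
      have e2 : y0 + k - z0 = (y0 - z0) + k := by abel
      have e3 : x0 + h - (y0 + k) = τ ^ 2 • e + (h - k) := by rw [hte]; abel
      have m := hmax (x0 + h) (y0 + k)
        (by rw [e1]; exact (norm_add_le _ _).trans (by linarith))
        (by rw [e2]; exact (norm_add_le _ _).trans (by linarith))
      have hhk : ‖h - k‖ ≤ τ ^ 2 / 100 := (norm_sub_le _ _).trans (by linarith)
      have mb := modulus_bound hLp.le hα0 hτ hen hhk hαb
      rw [← hσ, ← hb] at mb
      rw [e3, hxy, Real.sqrt_sq hτ.le, e1, norm_add_sq_real] at m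
      rw [real_inner_smul_left (x0 - z0)]
      linarith) (ε := 1 / 128) (by norm_num)
  have hxn : ‖x‖ ≤ 31 / 32 - 1 / 64 - 1 / 128 := by
    have e1 : x = (x - x0) + ((x0 - z0) + z0) := by abel
    have a1 := norm_add_le (x - x0) ((x0 - z0) + z0)
    have a2 := norm_add_le (x0 - z0) z0
    rw [← e1] at a1
    linarith
  have hyn : ‖y‖ ≤ 31 / 32 - 1 / 64 - 1 / 256 := by
    have e1 : y = (y - y0) + ((y0 - z0) + z0) := by abel
    have a1 := norm_add_le (y - y0) ((y0 - z0) + z0)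
    have a2 := norm_add_le (y0 - z0) z0
    rw [← e1] at a1
    linarith
  have hcx := (supConv_close hN hS.bdd hV (x := x) (by linarith)).2
  have hcy := (supConv_close (v := fun x => - v x) hN (fun x hx => by
    rw [abs_neg]; exact hS.bdd x hx) hV' (x := y) (by linarith)).2
  have hsx : ‖s x‖ < 31 / 32 := by
    have := norm_sub_le x (x - s x)
    rw [sub_sub_cancel] at this
    linarith
  have hsy : ‖s' y‖ < 31 / 32 := by
    have := norm_sub_le y (y - s' y)
    rw [sub_sub_cancel] at this
    linarith
  have hnb : ∀ z : En n, ‖z‖ < 31 / 32 → closedBall (0 : En n) (31 / 32) ∈ 𝓝 z := fun z hz =>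
    mem_of_superset (isOpen_ball.mem_nhds (mem_ball_zero_iff.2 hz)) ball_subset_closedBall
  have hb1 : ∀ z : En n, ‖z‖ < 31 / 32 → z ∈ ball (0 : En n) 1 := fun z hz =>
    mem_ball_zero_iff.2 (hz.trans (by norm_num))
  have j1 := hS.sub _ (hb1 _ hsx) p X h5 (supConv_jet hV (hnb _ hsx) h7)
  have j2 := hS.sup _ (hb1 _ hsy) p' Y h6
    (supConv_jet (v := fun x => - v x) hV' (hnb _ hsy) h8)
  have hse : 35 ≤ ‖σ • e - ξ‖ := by
    have hσ0 : 0 ≤ σ := by positivity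
    have := abs_norm_sub_norm_le (σ • e) ξ
    rw [norm_smul, hen, mul_one, Real.norm_of_nonneg hσ0] at this
    exact hslope.trans this
  have g1 : 1 ≤ ‖p - ξ‖ := by
    have e1 : σ • e - ξ = (p - ξ) - ((p - (σ • e + (260 : ℝ) • (x0 - z0))) +
      (260 : ℝ) • (x0 - z0)) := by abel
    have a1 := norm_sub_le (p - ξ) ((p - (σ • e + (260 : ℝ) • (x0 - z0))) +
      (260 : ℝ) • (x0 - z0))
    have a2 := norm_add_le (p - (σ • e + (260 : ℝ) • (x0 - z0))) ((260 : ℝ) • (x0 - z0))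
    rw [norm_smul, Real.norm_of_nonneg (by norm_num)] at a2
    rw [← e1] at a1
    linarith
  have g2 : 1 ≤ ‖p' - -ξ‖ := by
    have e1 : σ • e - ξ = (p' + σ • e) - (p' - -ξ) := by abel
    have a1 := norm_sub_le (p' + σ • e) (p' - -ξ)
    rw [← e1] at a1
    linarith
  have k1 := le_of_le_rpow_mul g1 hγ hη0 j1
  have k2 := le_of_le_rpow_mul g2 hγ hη0 j2
  simp only [reflOp] at k2
  refine matrix_contra hl hL hS.ell hS.osc (hb1 _ hsx) (hb1 _ hsy) h5 h6.neg hen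
    (b := b) (by linarith) hη0 hη1 (fun a => ?_) (fun a => ?_) (fun a => ?_) ?_ k1 (by linarith) hηs hbig
  · have := h9 a 0
    have q0 : qf Y 0 = 0 := by simp [qf]
    rw [q0, sub_zero, norm_zero] at this
    have n1 : 0 ≤ b / 48 * (32 * ⟪e, a⟫ ^ 2) := by positivity
    have n2 := mul_le_mul_of_nonneg_right hb2 (sq_nonneg ‖a‖)
    linarith [sq_nonneg ‖a‖]
  · have := h9 0 a
    have q0 : qf X 0 = 0 := by simp [qf]
    rw [q0, zero_sub, norm_zero, norm_neg] at this
    rw [qf_neg, neg_neg]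
    have n1 : 0 ≤ b / 48 * (32 * ⟪e, -a⟫ ^ 2) := by positivity
    have n2 := mul_le_mul_of_nonneg_right hb2 (sq_nonneg ‖a‖)
    linarith [sq_nonneg ‖a‖]
  · have := h9 a a
    rw [sub_self, norm_zero, inner_zero_right] at this
    rw [qf_neg]
    linarith [sq_nonneg ‖a‖]
  · have := h9 e (-e)
    have q0 : qf Y (-e) = qf Y e := by simp [qf]
    have e1 : e - -e = (2 : ℝ) • e := by rw [two_smul]; abel
    rw [q0, e1, norm_smul, inner_smul_right, real_inner_self_eq_norm_sq, norm_neg, hen,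
      Real.norm_of_nonneg (by norm_num)] at this
    rw [qf_neg]
    linarith

end Doubling

/-! ### Interior Hölder estimate -/

open Filter Topology

section HolderEstimate

/-- Choice of the modulus `L √t + 70 min(t, t*)`: its slope jumps across `X`, staying at distance
at least `35` from it. -/
lemma exists_break {L X : ℝ} (hL : 82 ≤ L) :
    ∃ T : ℝ, 0 ≤ T ∧ ∀ τ : ℝ, 0 < τ → L * τ < 2 → ∃ α c : ℝ, 0 ≤ α ∧ α ≤ 70 ∧
      35 ≤ |L / (2 * τ) + α - X| ∧ (∀ s, 70 * min s T ≤ α * s + c) ∧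
      70 * min (τ ^ 2) T = α * τ ^ 2 + c := by
  have hL0 : 0 < L := by linarith
  rcases le_or_gt X 35 with hX | hX
  · refine ⟨0, le_rfl, fun τ hτ hLτ => ⟨0, 0, le_rfl, by norm_num, ?_, fun s => ?_, ?_⟩⟩
    · have : 70 ≤ L / (2 * τ) := by
        rw [le_div_iff₀ (by positivity)]
        nlinarith
      exact le_trans (by linarith) (le_abs_self _)
    · have := min_le_right s 0
      linarith
    · rw [min_eq_right (sq_nonneg τ)]; ring
  · have hd : 0 < X - 35 := by linarith
    set R := L / (2 * (X - 35)) with hR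
    have hR0 : 0 < R := by positivity
    have hRd : L / (2 * R) = X - 35 := by rw [hR]; field_simp
    refine ⟨R ^ 2, sq_nonneg R, fun τ hτ hLτ => ?_⟩
    rcases le_or_gt τ R with h | h
    · refine ⟨70, 0, by norm_num, le_rfl, ?_, fun s => ?_, ?_⟩
      · have : L / (2 * R) ≤ L / (2 * τ) := by gcongr
        exact le_trans (by linarith) (le_abs_self _)
      · have := min_le_left s (R ^ 2)
        linarith
      · rw [min_eq_left (by gcongr)]; ring
    · refine ⟨0, 70 * R ^ 2, le_rfl, by norm_num, ?_, fun s => ?_, ?_⟩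
      · have : L / (2 * τ) ≤ L / (2 * R) := by gcongr
        exact le_trans (by linarith) (neg_le_abs _)
      · have := min_le_right s (R ^ 2)
        linarith
      · rw [min_eq_right (by gcongr)]; ring

variable {n : ℕ} {lam Lam γ : ℝ}

set_option maxHeartbeats 800000 in
/-- Interior Hölder estimate with exponent `1/2`, uniform in the shift `ξ` of the gradient
(Ishii–Lions doubling of variables). -/
lemma holder_one_sided (hl : 0 < lam) (hL : lam ≤ Lam) (hγ : 0 ≤ γ) :
    ∃ η0 Lh : ℝ, 0 < η0 ∧ 0 ≤ Lh ∧ ∀ (ξ : En n) (F : En n → Matrix (Fin n) (Fin n) ℝ → ℝ)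
      (v : En n → ℝ), Sol lam Lam γ η0 ξ F v → ∀ z0 y1 : En n, ‖z0‖ ≤ 3 / 4 →
        ‖y1 - z0‖ ≤ 3 / 16 → v z0 - v y1 ≤ Lh * √‖z0 - y1‖ := by
  have hLam : 0 < Lam := hl.trans_le hL
  set D := 4 + 2 * (1 + (Lam * n + 1) / lam) with hD
  have hD0 : 0 < D := by positivity
  set L := 82 + 16768 * (Lam * n) / lam with hLdef
  have hL1 : 82 ≤ L := by
    have : 0 ≤ 16768 * (Lam * n) / lam := by positivity
    linarith
  have hL0 : 0 < L := by linarith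
  have hL2 : 16768 * (Lam * n) ≤ lam * L := by
    have : lam * L = lam * 82 + 16768 * (Lam * n) := by rw [hLdef]; field_simp
    rw [this]; linarith
  refine ⟨min 1 (lam / 8 / D), L + 70, lt_min one_pos (by positivity), by linarith, ?_⟩
  intro ξ F v hS z0 y1 hz0 hy1
  set η := min 1 (lam / 8 / D) with hη
  have hη0 : 0 ≤ η := (lt_min one_pos (by positivity)).le
  have hη1 : η ≤ 1 := min_le_left _ _
  have hηs : η * D ≤ lam / 8 := by
    rw [← le_div_iff₀ hD0]; exact min_le_right _ _
  obtain ⟨T, hT0, hT⟩ := exists_break (X := ‖ξ‖) hL1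
  set ω : ℝ → ℝ := fun t => L * √t + 70 * min t T with hω
  have hω0 : ∀ t, 0 ≤ t → 0 ≤ ω t := fun t ht => by
    have : 0 ≤ min t T := le_min ht hT0
    simp only [hω]; positivity
  have hωc : Continuous ω := by
    simp only [hω]
    exact (continuous_const.mul Real.continuous_sqrt).add
      (continuous_const.mul (continuous_id.min continuous_const))
  suffices hmain : v z0 - v y1 ≤ ω ‖z0 - y1‖ by
    refine hmain.trans ?_
    have h1 : ‖z0 - y1‖ ≤ 1 := by rw [norm_sub_rev]; linarith
    have h2 : ‖z0 - y1‖ ≤ √‖z0 - y1‖ := Real.le_sqrt_of_sq_le (by nlinarith [norm_nonneg (z0 - y1)])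
    have h3 := min_le_left ‖z0 - y1‖ T
    simp only [hω]
    linarith
  by_contra hcon
  push Not at hcon
  set m := v z0 - v y1 - ω ‖z0 - y1‖ with hm
  have hm0 : 0 < m := by linarith
  have hKsub : closedBall (0 : En n) (31 / 32) ⊆ ball 0 1 := closedBall_subset_ball (by norm_num)
  have hvK : ContinuousOn v (closedBall (0 : En n) (31 / 32)) := hS.cont.mono hKsub
  have hKc : IsCompact (closedBall (0 : En n) (31 / 32)) := isCompact_closedBall _ _
  have hKne : (closedBall (0 : En n) (31 / 32)).Nonempty := ⟨0, mem_closedBall_self (by norm_num)⟩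
  obtain ⟨δ, hδ, hδv⟩ := Metric.uniformContinuousOn_iff.1
    (hKc.uniformContinuousOn_of_continuous hvK) m hm0
  set N := max 8192 (16 / δ ^ 2) with hN
  have hN1 : 8192 ≤ N := le_max_left _ _
  have hN2 : 16 / δ ^ 2 ≤ N := le_max_right _ _
  have hN0 : 0 ≤ N := by linarith
  have hclose : ∀ {a : ℝ}, 0 ≤ a → N * a ^ 2 ≤ 2 → a < δ / 2 := fun {a} ha h => by
    by_contra hc
    push Not at hc
    have h1 : (δ / 2) ^ 2 ≤ a ^ 2 := by gcongr
    have h2 := mul_le_mul hN2 h1 (by positivity) hN0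
    have h3 : 16 / δ ^ 2 * (δ / 2) ^ 2 = 4 := by field_simp; norm_num
    linarith
  obtain ⟨V, s, hV⟩ := exists_supConv hKc hKne hvK N
  obtain ⟨V', s', hV'⟩ := exists_supConv hKc hKne hvK.neg N
  have hR : ∀ y ∈ closedBall (0 : En n) (31 / 32), ‖y‖ ≤ 31 / 32 := fun y hy =>
    mem_closedBall_zero_iff.1 hy
  have hVc := supConv_continuous hN0 hR hV
  have hVc' := supConv_continuous hN0 hR hV'
  have hV1 : ∀ x, V x ≤ 1 := fun x => by
    have h1 := (abs_le.1 (hS.bdd _ (hKsub (hV x).1))).2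
    have h2 : 0 ≤ N * ‖x - s x‖ ^ 2 := by positivity
    rw [(hV x).2.1]; linarith
  have hV1' : ∀ x, V' x ≤ 1 := fun x => by
    have h1 := (abs_le.1 (hS.bdd _ (hKsub (hV' x).1))).1
    have h2 : 0 ≤ N * ‖x - s' x‖ ^ 2 := by positivity
    have h3 := (hV' x).2.1
    simp only [Pi.neg_apply] at h3
    linarith
  have hΦc : Continuous (fun z : En n × En n =>
      V z.1 + V' z.2 - ω ‖z.1 - z.2‖ - 130 * ‖z.1 - z0‖ ^ 2) := by
    have : Continuous (fun z : En n × En n => ω ‖z.1 - z.2‖) := hωc.comp (by fun_prop)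
    fun_prop
  obtain ⟨⟨x0, y0⟩, ⟨hx0, hy0⟩, hmax⟩ := ((isCompact_closedBall z0 (1 / 8)).prod
    (isCompact_closedBall z0 (3 / 16))).exists_isMaxOn
    ⟨(z0, y1), by simp, by simpa [mem_closedBall, dist_eq_norm] using hy1⟩ hΦc.continuousOn
  have hmax' : ∀ x y : En n, ‖x - z0‖ ≤ 1 / 8 → ‖y - z0‖ ≤ 3 / 16 →
      V x + V' y - ω ‖x - y‖ - 130 * ‖x - z0‖ ^ 2 ≤
      V x0 + V' y0 - ω ‖x0 - y0‖ - 130 * ‖x0 - z0‖ ^ 2 := fun x y hx hy =>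
    hmax (a := (x, y)) (show (x, y) ∈ closedBall z0 (1 / 8) ×ˢ closedBall z0 (3 / 16) from
      ⟨by rwa [mem_closedBall, dist_eq_norm], by rwa [mem_closedBall, dist_eq_norm]⟩)
  simp only [mem_closedBall, dist_eq_norm] at hx0 hy0
  have hy1n : ‖y1‖ ≤ 31 / 32 := by
    have := norm_add_le (y1 - z0) z0
    rw [sub_add_cancel] at this
    linarith
  have hmle : m ≤ V x0 + V' y0 - ω ‖x0 - y0‖ - 130 * ‖x0 - z0‖ ^ 2 := by
    have h1 := hmax' z0 y1 (by simp) hy1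
    have h2 := (hV z0).2.2 z0 (mem_closedBall_zero_iff.2 (by linarith))
    have h3 := (hV' y1).2.2 y1 (mem_closedBall_zero_iff.2 hy1n)
    simp only [sub_self, norm_zero, Pi.neg_apply] at h1 h2 h3
    linarith
  have hx0n : ‖x0‖ ≤ 31 / 32 := by
    have := norm_add_le (x0 - z0) z0
    rw [sub_add_cancel] at this
    linarith
  have hω00 := hω0 _ (norm_nonneg (x0 - y0))
  have hx0' : ‖x0 - z0‖ < 1 / 8 := by
    have h1 := hV1 x0
    have h2 := hV1' y0
    by_contra hc
    push Not at hc
    have h3 : (1 / 8 : ℝ) ^ 2 ≤ ‖x0 - z0‖ ^ 2 := by gcongr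
    norm_num at h3
    linarith
  -- the maximum is off the diagonal, by the uniform continuity of `v`
  have hne : 0 < ‖x0 - y0‖ := by
    rw [norm_pos_iff, sub_ne_zero]
    intro heq
    rw [← heq] at hmle
    have hc := hclose (norm_nonneg _) (supConv_close hN1 hS.bdd hV hx0n).1
    have hc' := hclose (norm_nonneg _) (supConv_close (v := fun x => - v x) hN1 (fun x hx => by
      rw [abs_neg]; exact hS.bdd x hx) hV' hx0n).1
    have hd : dist (s x0) (s' x0) < δ := by
      have := dist_triangle_left (s x0) (s' x0) x0
      rw [dist_eq_norm, dist_eq_norm x0, dist_eq_norm x0] at this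
      rw [dist_eq_norm]; linarith
    have h1 := hδv _ (hV x0).1 _ (hV' x0).1 hd
    rw [Real.dist_eq] at h1
    have h2 := (abs_lt.1 h1).2
    have h3 := (hV' x0).2.1
    simp only [Pi.neg_apply] at h3
    rw [(hV x0).2.1, h3] at hmle
    have h4 := hω0 _ (norm_nonneg (x0 - x0))
    have h5 : 0 ≤ N * ‖x0 - s x0‖ ^ 2 := by positivity
    have h6 : 0 ≤ N * ‖x0 - s' x0‖ ^ 2 := by positivity
    have h7 : 0 ≤ 130 * ‖x0 - z0‖ ^ 2 := by positivity
    linarith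
  set τ := √‖x0 - y0‖ with hτ
  have hτ0 : 0 < τ := Real.sqrt_pos.2 hne
  have hτ2 : τ ^ 2 = ‖x0 - y0‖ := Real.sq_sqrt hne.le
  have hLτ : L * τ < 2 := by
    have h1 := hV1 x0
    have h2 := hV1' y0
    have h3 : 0 ≤ 130 * ‖x0 - z0‖ ^ 2 := by positivity
    have h4 : 0 ≤ min ‖x0 - y0‖ T := le_min hne.le hT0
    have h5 : ω ‖x0 - y0‖ = L * τ + 70 * min ‖x0 - y0‖ T := rfl
    linarith
  have hτs : τ ≤ 1 / 41 := by
    have := mul_le_mul_of_nonneg_right hL1 hτ0.le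
    linarith
  have hy0' : ‖y0 - z0‖ < 3 / 16 := by
    have h1 : ‖y0 - z0‖ ≤ ‖y0 - x0‖ + ‖x0 - z0‖ := norm_sub_le_norm_sub_add_norm_sub _ _ _
    rw [norm_sub_rev y0 x0, ← hτ2] at h1
    have h2 : τ ^ 2 ≤ (1 / 41) ^ 2 := by gcongr
    norm_num at h2
    linarith
  obtain ⟨α, c, hα0, hα, hsl, hle, heq⟩ := hT τ hτ0 hLτ
  refine holder_core hl hL hγ hη0 hη1 hηs hS hL1 hL2 hα0 hα hτ0 hLτ hN1 hV hV' hz0 hx0' hy0'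
    hτ2.symm hsl fun x y hx hy => ?_
  have h1 := hmax' x y hx hy
  have h2 := hle ‖x - y‖
  simp only [hω] at h1
  rw [hτ2] at heq
  linarith

lemma holder_est (hl : 0 < lam) (hL : lam ≤ Lam) (hγ : 0 ≤ γ) :
    ∃ η0 Lh : ℝ, 0 < η0 ∧ 0 ≤ Lh ∧ ∀ (ξ : En n) (F : En n → Matrix (Fin n) (Fin n) ℝ → ℝ)
      (v : En n → ℝ), Sol lam Lam γ η0 ξ F v → ∀ z0 y1 : En n, ‖z0‖ ≤ 3 / 4 →
        ‖y1 - z0‖ ≤ 3 / 16 → |v z0 - v y1| ≤ Lh * √‖z0 - y1‖ := by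
  obtain ⟨η0, Lh, h1, h2, h3⟩ := holder_one_sided (n := n) hl hL hγ
  refine ⟨η0, Lh, h1, h2, fun ξ F v hS z0 y1 hz hy => abs_le.2 ⟨?_, h3 _ _ _ hS _ _ hz hy⟩⟩
  have := h3 _ _ _ hS.neg _ _ hz hy
  linarith

end HolderEstimate

/-! ### Stability and removal of one exceptional gradient -/

open Filter Topology

section Removal

variable {n : ℕ} {lam Lam : ℝ}

/-- A single exceptional gradient `q0` does not matter for a subsolution of `G(D²h) = 0`: at a point
touched with gradient `q0` by a paraboloid of Hessian `M` with `G(M) < 0`, the matrix `M` has a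
negative direction `w`, and tilting by `ε |⟪M w, ·⟫|` produces touching with another gradient. -/
lemma jets_all (hl : 0 < lam) (hL : lam ≤ Lam) {G : Matrix (Fin n) (Fin n) ℝ → ℝ}
    (hG : IsUnifEllipticConst lam Lam G) {h : En n → ℝ} {Ω : Set (En n)} (hΩ : IsOpen Ω)
    (hc : ContinuousOn h Ω) (q0 : En n)
    (hs : ∀ x0 ∈ Ω, ∀ q, q ≠ q0 → ∀ M : Matrix (Fin n) (Fin n) ℝ, M.IsSymm →
      SupJet h x0 q M → 0 ≤ G M) :
    ∀ x0 ∈ Ω, ∀ q, ∀ M : Matrix (Fin n) (Fin n) ℝ, M.IsSymm → SupJet h x0 q M → 0 ≤ G M := by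
  intro x0 hx0 q M hM hj
  by_cases hq : q = q0
  swap
  · exact hs x0 hx0 q hq M hM hj
  subst hq
  refine ell_limit hl hL hG hM fun c hc0 => ?_
  have hδ : 0 < c / 4 := by positivity
  set δ := c / 4 with hδdef
  have hst := hj.strict hδ
  rw [show 4 * δ = c by rw [hδdef]; ring] at hst
  set M' := M + c • (1 : Matrix (Fin n) (Fin n) ℝ) with hM'
  have hMs : M'.IsSymm := hM.add (isSymm_smul_one c)
  by_contra hneg
  have hw : ∃ w, qf M' w < 0 := by
    by_contra hcon
    push Not at hcon
    exact hneg (ell_nonneg hl hL hG (posSemidef_of_qf hMs hcon))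
  obtain ⟨w, hw⟩ := hw
  set g := toE M' w with hg
  obtain ⟨r, hr, hball⟩ := Metric.nhds_basis_closedBall.eventually_iff.1
    (hst.and (hΩ.mem_nhds hx0))
  set ε := δ * r / (2 * (‖g‖ + 1)) with hε
  have hε0 : 0 < ε := by positivity
  have hεg : ε * ‖g‖ < δ * r := by
    have h1 : ε * (2 * (‖g‖ + 1)) = δ * r := by rw [hε]; field_simp
    nlinarith [norm_nonneg g]
  have hcont : ContinuousOn (fun x => h x - (⟪q, x - x0⟫ + 1 / 2 * qf M' (x - x0)) +
      ε * |⟪g, x - x0⟫|) (closedBall x0 r) := by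
    refine ((hc.mono fun x hx => (hball hx).2).sub (Continuous.continuousOn ?_)).add
      (Continuous.continuousOn ?_)
    · unfold qf; fun_prop
    · fun_prop
  obtain ⟨x1, hx1, hmax⟩ := (isCompact_closedBall x0 r).exists_isMaxOn
    ⟨x0, mem_closedBall_self hr.le⟩ hcont
  have hmax' : ∀ x ∈ closedBall x0 r, h x - (⟪q, x - x0⟫ + 1 / 2 * qf M' (x - x0)) +
      ε * |⟪g, x - x0⟫| ≤ h x1 - (⟪q, x1 - x0⟫ + 1 / 2 * qf M' (x1 - x0)) +
      ε * |⟪g, x1 - x0⟫| := fun x hx => hmax hx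
  have hx1ball : x1 ∈ ball x0 r := by
    rw [mem_ball, dist_eq_norm]
    rw [mem_closedBall, dist_eq_norm] at hx1
    refine lt_of_le_of_ne hx1 fun hrr => ?_
    have h1 := hmax' x0 (mem_closedBall_self hr.le)
    have h2 := (hball (x := x1) (by rw [mem_closedBall, dist_eq_norm]; exact hx1)).1
    simp only [sub_self, inner_zero_right, qf, map_zero, abs_zero] at h1
    simp only [qf] at h2
    have h3 := mul_le_mul_of_nonneg_left (abs_real_inner_le_norm g (x1 - x0)) hε0.le
    rw [hrr] at h2 h3
    have h4 := mul_lt_mul_of_pos_right hεg hr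
    linarith
  -- the sign of `⟪g, x1 - x0⟫` selects the active branch of the absolute value
  obtain ⟨s, hs1, hs2, hsle⟩ : ∃ s : ℝ, s * ⟪g, x1 - x0⟫ = |⟪g, x1 - x0⟫| ∧ s * s = 1 ∧
      ∀ t, s * t ≤ |t| := by
    rcases le_total 0 ⟪g, x1 - x0⟫ with h0 | h0
    · exact ⟨1, by rw [abs_of_nonneg h0, one_mul], by norm_num, fun t => by
        rw [one_mul]; exact le_abs_self t⟩
    · exact ⟨-1, by rw [abs_of_nonpos h0]; ring, by norm_num, fun t => by
        rw [neg_one_mul]; exact neg_le_abs t⟩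
  have hjet := supJet_of_max (v := h) (x0 := x0) (x1 := x1) (q := q - (ε * s) • g) hMs (by
    filter_upwards [isOpen_ball.mem_nhds hx1ball] with x hx
    have h1 := hmax' x (ball_subset_closedBall hx)
    rw [inner_sub_left, inner_sub_left, real_inner_smul_left, real_inner_smul_left]
    have h2 := mul_le_mul_of_nonneg_left (hsle ⟪g, x - x0⟫) hε0.le
    rw [← hs1] at h1
    linarith)
  refine hneg (hs x1 (hball (ball_subset_closedBall hx1ball)).2 _ (fun heq => ?_) M' hMs hjet)
  have h1 : toE M' (x1 - x0) = (ε * s) • g := by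
    have : q - (ε * s) • g + toE M' (x1 - x0) - q = 0 := by rw [heq, sub_self]
    rw [← sub_eq_zero]
    rw [← this]; abel
  have h2 := toE_symm hMs (x1 - x0) w
  rw [h1, real_inner_smul_left, ← hg, real_inner_comm] at h2
  have h3 : s * ⟪g, x1 - x0⟫ = ε * qf M' w := by
    rw [qf, ← hg, real_inner_comm (x1 - x0) g, ← h2, real_inner_comm w g]
    linear_combination (ε * ⟪w, g⟫) * hs2
  have h4 := mul_neg_of_pos_of_neg hε0 hw
  have h5 := abs_nonneg ⟪g, x1 - x0⟫
  linarith

end Removal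

section Stability

variable {n : ℕ} {lam Lam γ : ℝ} {ι : Type*} {l : Filter ι}

/-- Stability of subsolutions under uniform limits, for test gradients that stay away from the
degeneracy points `ξ k`. -/
lemma stability [l.NeBot] (hl : 0 < lam) (hL : lam ≤ Lam) (hγ : 0 ≤ γ) {η : ι → ℝ} {ξ : ι → En n}
    {F : ι → En n → Matrix (Fin n) (Fin n) ℝ → ℝ} {v : ι → En n → ℝ}
    (hS : ∀ k, Sol lam Lam γ (η k) (ξ k) (F k) (v k)) (hη : Tendsto η l (𝓝 0))
    {G : Matrix (Fin n) (Fin n) ℝ → ℝ} (hG : IsUnifEllipticConst lam Lam G)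
    (hF : ∀ M : Matrix (Fin n) (Fin n) ℝ, M.IsSymm → Tendsto (fun k => F k 0 M) l (𝓝 (G M)))
    {h : En n → ℝ}
    (hv : ∀ ε > (0:ℝ), ∀ᶠ k in l, ∀ x ∈ ball (0 : En n) (3 / 4), |v k x - h x| ≤ ε)
    {q : En n} {c : ℝ} (hc : 0 < c) (hq : ∀ᶠ k in l, c ≤ ‖ξ k - q‖) {x0 : En n}
    (hx0 : x0 ∈ ball (0 : En n) (3 / 4)) {M : Matrix (Fin n) (Fin n) ℝ} (hM : M.IsSymm)
    (hj : SupJet h x0 q M) : 0 ≤ G M := by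
  refine ell_limit hl hL hG hM fun c' hc0 => ?_
  have hδ : 0 < c' / 4 := by positivity
  set δ := c' / 4 with hδdef
  have hst := hj.strict hδ
  rw [show 4 * δ = c' by rw [hδdef]; ring] at hst
  set M' := M + c' • (1 : Matrix (Fin n) (Fin n) ℝ) with hM'
  have hMs : M'.IsSymm := hM.add (isSymm_smul_one c')
  obtain ⟨r0, hr0, hball0⟩ := Metric.nhds_basis_closedBall.eventually_iff.1
    (hst.and (isOpen_ball.mem_nhds hx0))
  set r := min r0 (c / (2 * (‖toE M'‖ + 1))) with hr
  have hr0' : 0 < r := lt_min hr0 (by positivity)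
  have hball : ∀ x ∈ closedBall x0 r, h x ≤ h x0 + ⟪q, x - x0⟫ + 1 / 2 * qf M' (x - x0) -
      δ * ‖x - x0‖ ^ 2 ∧ x ∈ ball (0 : En n) (3 / 4) := fun x hx =>
    hball0 (closedBall_subset_closedBall (min_le_left _ _) hx)
  have hrM : ‖toE M'‖ * r ≤ c / 2 := by
    have h1 : r ≤ c / (2 * (‖toE M'‖ + 1)) := min_le_right _ _
    rw [le_div_iff₀ (by positivity)] at h1
    linarith
  have hev : ∀ᶠ k in l, -(η k / (c / 2) ^ γ) - η k * (‖M'‖ + 1) ≤ F k 0 M' := by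
    filter_upwards [hq, hv (δ * r ^ 2 / 4) (by positivity)] with k hqk hvk
    have hsub : ball (0 : En n) (3 / 4) ⊆ ball 0 1 := ball_subset_ball (by norm_num)
    have hcont : ContinuousOn (fun x => v k x - (⟪q, x - x0⟫ + 1 / 2 * qf M' (x - x0)))
        (closedBall x0 r) := by
      refine ((hS k).cont.mono fun x hx => hsub (hball x hx).2).sub (Continuous.continuousOn ?_)
      unfold qf; fun_prop
    obtain ⟨x1, hx1, hmax⟩ := (isCompact_closedBall x0 r).exists_isMaxOn
      ⟨x0, mem_closedBall_self hr0'.le⟩ hcont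
    have hmax' : ∀ x ∈ closedBall x0 r, v k x - (⟪q, x - x0⟫ + 1 / 2 * qf M' (x - x0)) ≤
      v k x1 - (⟪q, x1 - x0⟫ + 1 / 2 * qf M' (x1 - x0)) := fun x hx => hmax hx
    have hx1' := hx1
    rw [mem_closedBall, dist_eq_norm] at hx1'
    have hx1ball : x1 ∈ ball x0 r := by
      rw [mem_ball, dist_eq_norm]
      refine lt_of_le_of_ne hx1' fun hrr => ?_
      have h1 := hmax' x0 (mem_closedBall_self hr0'.le)
      have h2 := (hball x1 hx1).1
      simp only [sub_self, inner_zero_right, qf, map_zero] at h1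
      simp only [qf] at h2
      have h3 := (abs_le.1 (hvk x0 hx0)).1
      have h4 := (abs_le.1 (hvk x1 (hball x1 hx1).2)).2
      rw [hrr] at h2
      have h5 : 0 < δ * r ^ 2 := by positivity
      linarith
    have hjet := supJet_of_max (v := v k) (x0 := x0) (x1 := x1) (q := q) hMs (by
      filter_upwards [isOpen_ball.mem_nhds hx1ball] with x hx
      exact hmax' x (ball_subset_closedBall hx))
    have hx1b := hsub (hball x1 hx1).2
    have hsol := (hS k).sub x1 hx1b _ M' hMs hjet
    have hosc := (abs_le.1 ((hS k).osc x1 hx1b M' hMs)).2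
    have hgrad : c / 2 ≤ ‖q + toE M' (x1 - x0) - ξ k‖ := by
      have h1 : ‖toE M' (x1 - x0)‖ ≤ ‖toE M'‖ * r := ((toE M').le_opNorm _).trans (by gcongr)
      have h2 := norm_sub_le (toE M' (x1 - x0)) (q + toE M' (x1 - x0) - ξ k)
      rw [show toE M' (x1 - x0) - (q + toE M' (x1 - x0) - ξ k) = ξ k - q by abel] at h2
      linarith
    have hpow : (c / 2) ^ γ ≤ ‖q + toE M' (x1 - x0) - ξ k‖ ^ γ :=
      Real.rpow_le_rpow (by positivity) hgrad hγ
    have hp0 : 0 < (c / 2) ^ γ := by positivity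
    have hη0 : 0 ≤ η k := by
      have h1 := (hS k).osc 0 (mem_ball_self one_pos) 0 Matrix.isSymm_zero
      rw [sub_self, abs_zero, norm_zero, zero_add, mul_one] at h1
      exact h1
    have hkey : -(η k / (c / 2) ^ γ) ≤ F k x1 M' := by
      rw [← neg_div, div_le_iff₀ hp0]
      rcases le_total 0 (F k x1 M') with hf | hf
      · have : 0 ≤ F k x1 M' * (c / 2) ^ γ := by positivity
        linarith
      · have := mul_le_mul_of_nonpos_right hpow hf
        linarith
    linarith
  have hlim : Tendsto (fun k => -(η k / (c / 2) ^ γ) - η k * (‖M'‖ + 1)) l (𝓝 0) := by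
    have := ((hη.div_const ((c / 2) ^ γ)).neg).sub (hη.mul_const (‖M'‖ + 1))
    simpa using this
  exact le_of_tendsto_of_tendsto hlim (hF M' hMs) hev

/-- Along an ultrafilter at most one gradient is exceptional, so the limit is a subsolution. -/
lemma limit_sub (𝒰 : Ultrafilter ι) (hl : 0 < lam) (hL : lam ≤ Lam) (hγ : 0 ≤ γ) {η : ι → ℝ}
    {ξ : ι → En n} {F : ι → En n → Matrix (Fin n) (Fin n) ℝ → ℝ} {v : ι → En n → ℝ}
    (hS : ∀ k, Sol lam Lam γ (η k) (ξ k) (F k) (v k)) (hη : Tendsto η 𝒰 (𝓝 0))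
    {G : Matrix (Fin n) (Fin n) ℝ → ℝ} (hG : IsUnifEllipticConst lam Lam G)
    (hF : ∀ M : Matrix (Fin n) (Fin n) ℝ, M.IsSymm → Tendsto (fun k => F k 0 M) 𝒰 (𝓝 (G M)))
    {h : En n → ℝ} (hc : ContinuousOn h (ball (0 : En n) (3 / 4)))
    (hv : ∀ ε > (0:ℝ), ∀ᶠ k in (𝒰 : Filter ι), ∀ x ∈ ball (0 : En n) (3 / 4),
      |v k x - h x| ≤ ε) :
    ∀ x0 ∈ ball (0 : En n) (3 / 4), ∀ q, ∀ M : Matrix (Fin n) (Fin n) ℝ, M.IsSymm →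
      SupJet h x0 q M → 0 ≤ G M := by
  obtain ⟨q0, hq0⟩ : ∃ q0 : En n, ∀ q, q ≠ q0 →
      ∃ c > (0:ℝ), ∀ᶠ k in (𝒰 : Filter ι), c ≤ ‖ξ k - q‖ := by
    by_cases hex : ∃ q0, Tendsto ξ 𝒰 (𝓝 q0)
    · obtain ⟨q0, hq0⟩ := hex
      refine ⟨q0, fun q hq => ⟨‖q0 - q‖ / 2, by
        have := norm_pos_iff.2 (sub_ne_zero.2 hq.symm); positivity, ?_⟩⟩
      have h1 : Tendsto (fun k => ‖ξ k - q‖) 𝒰 (𝓝 ‖q0 - q‖) := (hq0.sub_const q).norm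
      refine h1.eventually_const_le ?_
      have := norm_pos_iff.2 (sub_ne_zero.2 hq.symm)
      linarith
    · push Not at hex
      refine ⟨0, fun q _ => ?_⟩
      have h1 := hex q
      rw [Metric.tendsto_nhds] at h1
      push Not at h1
      obtain ⟨c, hc, h2⟩ := h1
      refine ⟨c, hc, ?_⟩
      filter_upwards [h2] with k hk
      rwa [dist_eq_norm] at hk
  refine jets_all hl hL hG isOpen_ball hc q0 fun x0 hx0 q hq M hM hj => ?_
  obtain ⟨c, hc0, hck⟩ := hq0 q hq
  exact stability hl hL hγ hS hη hG hF hv hc0 hck hx0 hM hj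

end Stability

/-! ### Approximation by constant-coefficient solutions -/

open Filter Topology

section Approximation

variable {n : ℕ} {lam Lam γ : ℝ}

lemma exists_ultralim (𝒰 : Ultrafilter ℕ) {f : ℕ → ℝ} {C : ℝ} (h : ∀ k, |f k| ≤ C) :
    ∃ a, Tendsto f 𝒰 (𝓝 a) := by
  obtain ⟨a, -, ha⟩ := (isCompact_Icc (a := -C) (b := C)).ultrafilter_le_nhds (𝒰.map f)
    (by
      rw [le_principal_iff]
      exact Filter.mem_map.2 (Filter.univ_mem' fun k => abs_le.1 (h k)))
  exact ⟨a, ha⟩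

/-- The limiting problem: `h` is a normalized continuous viscosity solution, in the language of
superjets, of `G(D²h) = 0` in `B_{3/4}`. -/
structure HomSol (lam Lam : ℝ) (G : Matrix (Fin n) (Fin n) ℝ → ℝ) (h : En n → ℝ) : Prop where
  ell : IsUnifEllipticConst lam Lam G
  cont : ContinuousOn h (ball (0 : En n) (3 / 4))
  bdd : ∀ x ∈ ball (0 : En n) (3 / 4), |h x| ≤ 1
  sub : ∀ x0 ∈ ball (0 : En n) (3 / 4), ∀ q, ∀ M : Matrix (Fin n) (Fin n) ℝ, M.IsSymm →
    SupJet h x0 q M → 0 ≤ G M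
  sup : ∀ x0 ∈ ball (0 : En n) (3 / 4), ∀ q, ∀ M : Matrix (Fin n) (Fin n) ℝ, M.IsSymm →
    SupJet (fun x => - h x) x0 q M → 0 ≤ - G (-M)

/-- Approximation by solutions of constant coefficient homogeneous equations, uniformly in the
shift `ξ`. -/
lemma approximation (hl : 0 < lam) (hL : lam ≤ Lam) (hγ : 0 ≤ γ) {ε : ℝ} (hε : 0 < ε) :
    ∃ η > (0:ℝ), ∀ (ξ : En n) (F : En n → Matrix (Fin n) (Fin n) ℝ → ℝ) (v : En n → ℝ),
      Sol lam Lam γ η ξ F v → ∃ G h, HomSol lam Lam G h ∧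
        ∀ x ∈ ball (0 : En n) (3 / 4), |v x - h x| ≤ ε := by
  obtain ⟨η0, Lh, hη0, hLh, hold⟩ := holder_est (n := n) hl hL hγ
  by_contra hcon
  push Not at hcon
  have hpos : ∀ k : ℕ, 0 < η0 / ((k : ℝ) + 1) := fun k => by positivity
  choose ξ F v hS hno using fun k : ℕ => hcon _ (hpos k)
  set 𝒰 : Ultrafilter ℕ := hyperfilter ℕ with h𝒰
  have hη : Tendsto (fun k : ℕ => η0 / ((k : ℝ) + 1)) 𝒰 (𝓝 0) := by
    have h1 : Tendsto (fun k : ℕ => η0 / ((k : ℝ) + 1)) atTop (𝓝 0) :=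
      tendsto_const_nhds.div_atTop
        (tendsto_atTop_add_const_right _ _ tendsto_natCast_atTop_atTop)
    exact h1.mono_left Nat.hyperfilter_le_atTop
  have hS0 : ∀ k, Sol lam Lam γ η0 (ξ k) (F k) (v k) := fun k => (hS k).mono (by
    apply div_le_self hη0.le
    have : (0:ℝ) ≤ k := Nat.cast_nonneg k
    linarith)
  have hh : ∀ x, ∃ a, x ∈ ball (0 : En n) 1 → Tendsto (fun k => v k x) 𝒰 (𝓝 a) := fun x => by
    by_cases hx : x ∈ ball (0 : En n) 1
    · obtain ⟨a, ha⟩ := exists_ultralim 𝒰 (fun k => (hS k).bdd x hx)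
      exact ⟨a, fun _ => ha⟩
    · exact ⟨0, fun h => absurd h hx⟩
  choose h hh using hh
  have hGG : ∀ M : Matrix (Fin n) (Fin n) ℝ, ∃ a, M.IsSymm →
      Tendsto (fun k => F k 0 M) 𝒰 (𝓝 a) := fun M => by
    by_cases hM : M.IsSymm
    · obtain ⟨a, ha⟩ := exists_ultralim 𝒰
        (fun k => ell_abs_le hl hL ((hS k).ell 0 (mem_ball_self one_pos)) hM)
      exact ⟨a, fun _ => ha⟩
    · exact ⟨0, fun h => absurd h hM⟩
  choose G hG using hGG
  have hGell : IsUnifEllipticConst lam Lam G := by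
    refine ⟨fun M N hM hN => ?_, ?_⟩
    · have ht := (hG M hM).sub (hG N hN)
      exact ⟨ge_of_tendsto' ht fun k => (((hS k).ell 0 (mem_ball_self one_pos)).1 M N hM hN).1,
        le_of_tendsto' ht fun k => (((hS k).ell 0 (mem_ball_self one_pos)).1 M N hM hN).2⟩
    · have ht := hG 0 Matrix.isSymm_zero
      simp only [fun k => ((hS k).ell 0 (mem_ball_self one_pos)).2] at ht
      exact tendsto_nhds_unique ht tendsto_const_nhds
  have hsub : closedBall (0 : En n) (3 / 4) ⊆ ball 0 1 := closedBall_subset_ball (by norm_num)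
  have hhold : ∀ z y : En n, ‖z‖ ≤ 3 / 4 → ‖y - z‖ ≤ 3 / 16 → |h z - h y| ≤ Lh * √‖z - y‖ :=
    fun z y hz hy => by
    have hyb : y ∈ ball (0 : En n) 1 := by
      have := norm_add_le (y - z) z
      rw [sub_add_cancel] at this
      exact mem_ball_zero_iff.2 (by linarith)
    have ht := ((hh z (hsub (mem_closedBall_zero_iff.2 hz))).sub (hh y hyb)).abs
    exact le_of_tendsto' ht fun k => hold _ _ _ (hS0 k) z y hz hy
  have hsmall : ∀ ε' > (0:ℝ), ∃ δ > (0:ℝ), δ ≤ 3 / 16 ∧ ∀ a : ℝ, a < δ → Lh * √a ≤ ε' :=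
    fun ε' hε' => by
    have hp : 0 < (ε' / (Lh + 1)) ^ 2 := by positivity
    refine ⟨min (3 / 16) ((ε' / (Lh + 1)) ^ 2), lt_min (by norm_num) hp, min_le_left _ _,
      fun a ha => ?_⟩
    have h1 : √a ≤ ε' / (Lh + 1) :=
      Real.sqrt_le_iff.2 ⟨by positivity, (ha.trans_le (min_le_right _ _)).le⟩
    calc Lh * √a ≤ (Lh + 1) * (ε' / (Lh + 1)) := by gcongr; linarith
      _ = ε' := by field_simp
  have hhc : ContinuousOn h (ball (0 : En n) (3 / 4)) := by
    intro z hz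
    refine ContinuousAt.continuousWithinAt ?_
    rw [Metric.continuousAt_iff]
    intro ε' hε'
    obtain ⟨δ, hδ, hδ1, hδ2⟩ := hsmall (ε' / 2) (by positivity)
    refine ⟨δ, hδ, fun {y} hy => ?_⟩
    rw [dist_eq_norm] at hy
    have h1 := hhold z y (mem_ball_zero_iff.1 hz).le (hy.le.trans hδ1)
    have h2 := hδ2 ‖z - y‖ (by rwa [norm_sub_rev])
    rw [dist_comm, Real.dist_eq]
    linarith
  -- uniform convergence on `B_{3/4}`, from equicontinuity and a finite net
  have hunif : ∀ ε' > (0:ℝ), ∀ᶠ k in (𝒰 : Filter ℕ), ∀ x ∈ ball (0 : En n) (3 / 4),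
      |v k x - h x| ≤ ε' := fun ε' hε' => by
    obtain ⟨δ, hδ, hδ1, hδ2⟩ := hsmall (ε' / 3) (by positivity)
    obtain ⟨t, ht, htf, htc⟩ := (isCompact_closedBall (0 : En n) (3 / 4)).finite_cover_balls hδ
    have hev : ∀ᶠ k in (𝒰 : Filter ℕ), ∀ c ∈ t, |v k c - h c| ≤ ε' / 3 := by
      rw [htf.eventually_all]
      intro c hc
      have h1 := ((hh c (hsub (ht hc))).sub_const (h c)).abs
      rw [sub_self, abs_zero] at h1
      exact (h1.eventually_lt_const (by positivity)).mono fun k hk => hk.le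
    filter_upwards [hev] with k hk x hx
    obtain ⟨c, hc, hxc⟩ := mem_iUnion₂.1 (htc (ball_subset_closedBall hx))
    rw [mem_ball, dist_eq_norm] at hxc
    have hcn := mem_closedBall_zero_iff.1 (ht hc)
    have h1 := hold _ _ _ (hS0 k) c x hcn (hxc.le.trans hδ1)
    have h2 := hhold c x hcn (hxc.le.trans hδ1)
    have h3 := hδ2 ‖c - x‖ (by rwa [norm_sub_rev])
    have h4 := hk c hc
    rw [abs_le] at *
    constructor <;> linarith [h1.1, h1.2, h2.1, h2.2, h4.1, h4.2]
  have hsol : HomSol lam Lam G h := by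
    refine ⟨hGell, hhc, fun x hx => ?_, limit_sub 𝒰 hl hL hγ hS hη hGell hG hhc hunif,
      limit_sub 𝒰 hl hL hγ (fun k => (hS k).neg) hη (ell_reflect hGell)
        (fun M hM => (hG (-M) hM.neg).neg) hhc.neg fun ε' hε' => ?_⟩
    · have hx1 := hsub (ball_subset_closedBall hx)
      exact le_of_tendsto' (hh x hx1).abs fun k => (hS k).bdd x hx1
    · filter_upwards [hunif ε' hε'] with k hk x hx
      have := hk x hx
      rw [← abs_neg] at this
      convert this using 2
      ring
  obtain ⟨k, hk⟩ := (hunif ε hε).exists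
  obtain ⟨x, hx, hlt⟩ := hno k G h hsol
  exact absurd (hk x hx) (not_le.2 hlt)

end Approximation

/-! ### First-order expansion of homogeneous solutions -/

open Filter Topology

section Homogeneous

variable {n : ℕ} {lam Lam α₀ C₀ : ℝ}

lemma exists_small_rpow {a ε b : ℝ} (ha : 0 < a) (hε : 0 < ε) (hb : 0 < b) (C : ℝ) :
    ∃ r, 0 < r ∧ r ≤ b ∧ C * r ^ a ≤ ε := by
  have h1 : Tendsto (fun r : ℝ => C * r ^ a) (𝓝[>] 0) (𝓝 0) := by
    have : Tendsto (fun r : ℝ => C * r ^ a) (𝓝 0) (𝓝 (C * 0 ^ a)) :=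
      ((Real.continuousAt_rpow_const 0 a (Or.inr ha.le)).const_mul C)
    rw [Real.zero_rpow ha.ne', mul_zero] at this
    exact this.mono_left nhdsWithin_le_nhds
  obtain ⟨r, h2, h3, h4⟩ := ((h1.eventually_lt_const hε).and
    (Ioc_mem_nhdsGT hb)).exists
  exact ⟨r, h3, h4, h2.le⟩

/-- The junk value `gradient h 0 = 0` for a non-differentiable `h` is compatible with subtracting
the affine function with slope `gradient h 0`. -/
lemma gradient_sub_affine (h : En n → ℝ) (c κ : ℝ) (hκ : κ ≠ 0) :
    gradient (fun x => (h x - c - ⟪gradient h 0, x⟫) / κ) 0 = 0 := by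
  set p := gradient h 0 with hp
  by_cases hd : DifferentiableAt ℝ h 0
  · have h1 : HasFDerivAt h (innerSL ℝ p) 0 := by
      have := hd.hasGradientAt
      rw [← hp] at this
      exact this.hasFDerivAt
    have h2 : HasFDerivAt (fun x : En n => (h x - c - ⟪p, x⟫) / κ)
        (κ⁻¹ • (innerSL ℝ p - innerSL ℝ p)) 0 := by
      have h3 := ((h1.sub_const c).sub (innerSL ℝ p).hasFDerivAt).const_smul κ⁻¹
      refine h3.congr_of_eventuallyEq (Eventually.of_forall fun x => ?_)
      simp [div_eq_inv_mul]
    rw [sub_self, smul_zero] at h2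
    rw [gradient, h2.fderiv, map_zero]
  · have h2 : ¬ DifferentiableAt ℝ (fun x => (h x - c - ⟪p, x⟫) / κ) 0 := fun hw => hd (by
      have h3 : DifferentiableAt ℝ (fun x : En n => κ * ((h x - c - ⟪p, x⟫) / κ) + c + ⟪p, x⟫) 0 :=
        ((hw.const_mul κ).add_const c).add (innerSL ℝ p).differentiableAt
      refine h3.congr_of_eventuallyEq (Eventually.of_forall fun x => ?_)
      field_simp
      ring)
    rw [gradient, fderiv_zero_of_not_differentiableAt h2, map_zero]

/-- The interior estimate applied to `h` minus its linear part at the origin, normalized by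
`2 + ‖gradient h 0‖`. -/
lemma homSol_estimate (hap : InteriorC1AlphaEstimate n lam Lam α₀ C₀)
    {G : Matrix (Fin n) (Fin n) ℝ → ℝ} {h : En n → ℝ} (hh : HomSol lam Lam G h) {r : ℝ}
    (hr : 0 < r) (hr1 : r ≤ 1 / 2) {x : En n} (hx : x ∈ ball (0 : En n) r) :
    |h x - h 0 - ⟪gradient h 0, x⟫| ≤ C₀ * (2 + ‖gradient h 0‖) * r ^ (1 + α₀) := by
  set p := gradient h 0 with hp
  set κ := 2 + ‖p‖ with hκ
  have hκ0 : 0 < κ := by positivity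
  have h0 : (0 : En n) ∈ ball (0 : En n) (3 / 4) := mem_ball_self (by norm_num)
  have hell := ell_scale hκ0 hh.ell
  have hlin : Continuous fun x : En n => ⟪p, x⟫ := by fun_prop
  have hmain := hap _ hell (fun x => (h x - h 0 - ⟪p, x⟫) / κ)
    (((hh.cont.sub continuousOn_const).sub hlin.continuousOn).div_const κ)
    (viscosity_of_jets
      (fun x0 hx0 q M hM hj => by
        have h1 := SupJet.unscale (u := h) (Q := p) (r := 1) (a := κ) (c := h 0) one_pos hκ0
          (fun x => by rw [one_smul, one_mul]) hj
        rw [one_smul, div_one, one_pow, div_one] at h1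
        exact div_nonneg (hh.sub x0 hx0 _ _ (hM.smul κ) h1) hκ0.le)
      (fun x0 hx0 q M hM hj => by
        have h1 := SupJet.unscale (u := fun x => - h x) (Q := -p) (r := 1) (a := κ) (c := - h 0)
          one_pos hκ0 (fun x => by rw [one_smul, one_mul, inner_neg_left]; ring) hj
        rw [one_smul, div_one, one_pow, div_one] at h1
        have h2 := hh.sup x0 hx0 _ _ (hM.smul κ) h1
        rw [smul_neg, ← neg_div]
        exact div_nonneg h2 hκ0.le))
    (fun x hx => by
      rw [abs_div, abs_of_pos hκ0, div_le_one hκ0]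
      have h1 := abs_le.1 (hh.bdd x hx)
      have h2 := abs_le.1 (hh.bdd 0 h0)
      have h3 := abs_real_inner_le_norm p x
      have h4 : ‖p‖ * ‖x‖ ≤ ‖p‖ * 1 :=
        mul_le_mul_of_nonneg_left ((mem_ball_zero_iff.1 hx).le.trans (by norm_num)) (norm_nonneg _)
      have h5 := abs_le.1 h3
      rw [abs_le]
      constructor <;> linarith [h1.1, h1.2, h2.1, h2.2, h5.1, h5.2])
    (by simp) (gradient_sub_affine h (h 0) κ hκ0.ne') r hr hr1 x hx
  rw [abs_div, abs_of_pos hκ0, div_le_iff₀ hκ0] at hmain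
  linarith

/-- The slopes `gradient h 0` are bounded uniformly: at a small fixed radius the right-hand side of
`homSol_estimate` is absorbed. -/
lemma homSol_affine (hα : 0 < α₀) (hC₀ : 0 < C₀) (hap : InteriorC1AlphaEstimate n lam Lam α₀ C₀) :
    ∃ C1 > (0:ℝ), ∀ (G : Matrix (Fin n) (Fin n) ℝ → ℝ) (h : En n → ℝ), HomSol lam Lam G h →
      ∃ p : En n, ‖p‖ ≤ C1 ∧ ∀ r, 0 < r → r ≤ 1 / 2 → ∀ x ∈ ball (0 : En n) r,
        |h x - h 0 - ⟪p, x⟫| ≤ C1 * r ^ (1 + α₀) := by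
  obtain ⟨r, hr, hr1, hrC⟩ := exists_small_rpow (b := 1 / 2) hα
    (show (0:ℝ) < 1 / 4 by norm_num) (by norm_num) C₀
  refine ⟨(C₀ + 1) * (4 + 8 / r), by positivity, fun G h hh => ⟨gradient h 0, ?_⟩⟩
  set p := gradient h 0 with hp
  have hpb : ‖p‖ ≤ 2 + 8 / r := by
    by_cases hp0 : p = 0
    · rw [hp0, norm_zero]; positivity
    have hpn : 0 < ‖p‖ := norm_pos_iff.2 hp0
    set x := (r / 2 / ‖p‖) • p with hx
    have hxn : ‖x‖ = r / 2 := by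
      rw [hx, norm_smul, Real.norm_of_nonneg (by positivity)]; field_simp
    have hxr : x ∈ ball (0 : En n) r := mem_ball_zero_iff.2 (by rw [hxn]; linarith)
    have h1 := homSol_estimate hap hh hr hr1 hxr
    rw [← hp] at h1
    have h2 : ⟪p, x⟫ = r / 2 * ‖p‖ := by
      rw [hx, real_inner_smul_right, real_inner_self_eq_norm_sq]; field_simp
    have h3 : C₀ * (2 + ‖p‖) * r ^ (1 + α₀) ≤ (2 + ‖p‖) * r * (1 / 4) := by
      rw [Real.rpow_add hr, Real.rpow_one]
      calc C₀ * (2 + ‖p‖) * (r * r ^ α₀) = (2 + ‖p‖) * r * (C₀ * r ^ α₀) := by ring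
        _ ≤ _ := by gcongr
    have h4 := abs_le.1 (hh.bdd x (ball_subset_ball (by linarith) hxr))
    have h5 := abs_le.1 (hh.bdd 0 (mem_ball_self (by norm_num)))
    have h6 := (abs_le.1 h1).1
    have h7 : ‖p‖ * r ≤ 8 + 2 * r := by linarith [h4.1, h4.2, h5.1, h5.2]
    have h8 : 2 + 8 / r = (8 + 2 * r) / r := by field_simp; ring
    rw [h8, le_div_iff₀ hr]
    exact h7
  have h8 : 0 < 8 / r := by positivity
  refine ⟨?_, fun s hs hs1 x hx => (homSol_estimate hap hh hs hs1 hx).trans ?_⟩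
  · nlinarith
  · rw [← hp]
    have h9 : C₀ * (2 + ‖p‖) ≤ (C₀ + 1) * (4 + 8 / r) :=
      mul_le_mul (by linarith) (by linarith) (by positivity) (by positivity)
    exact mul_le_mul_of_nonneg_right h9 (by positivity)

end Homogeneous

/-! ### Gradient bound at the origin -/

open Filter Topology

section GradientBound

variable {n : ℕ} {lam Lam γ α₀ C₀ : ℝ}

/-- Members of the class are approximated at all scales by linear functions of bounded slope, up to
an error `2 * ε` that is small with `η`. -/
lemma affine_approx (hl : 0 < lam) (hL : lam ≤ Lam) (hγ : 0 ≤ γ) (hα : 0 < α₀) (hC₀ : 0 < C₀)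
    (hap : InteriorC1AlphaEstimate n lam Lam α₀ C₀) :
    ∃ C1 > (0:ℝ), ∀ ε > (0:ℝ), ∃ η > (0:ℝ), ∀ (ξ : En n)
      (F : En n → Matrix (Fin n) (Fin n) ℝ → ℝ) (v : En n → ℝ),
      Sol lam Lam γ η ξ F v → v 0 = 0 → ∃ p : En n, ‖p‖ ≤ C1 ∧
        ∀ r, 0 < r → r ≤ 1 / 2 → ∀ x ∈ ball (0 : En n) r,
          |v x - ⟪p, x⟫| ≤ C1 * r ^ (1 + α₀) + 2 * ε := by
  obtain ⟨C1, hC1, H⟩ := homSol_affine hα hC₀ hap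
  refine ⟨C1, hC1, fun ε hε => ?_⟩
  obtain ⟨η, hη, happ⟩ := approximation (n := n) hl hL hγ hε
  refine ⟨η, hη, fun ξ F v hv hv0 => ?_⟩
  obtain ⟨G, h, hh, hclose⟩ := happ ξ F v hv
  obtain ⟨p, hp, hpb⟩ := H G h hh
  refine ⟨p, hp, fun r hr hr1 x hx => ?_⟩
  have h1 := abs_le.1 (hclose x (ball_subset_ball (by linarith) hx))
  have h2 := abs_le.1 (hclose 0 (mem_ball_self (by norm_num)))
  have h3 := abs_le.1 (hpb r hr hr1 x hx)
  rw [hv0] at h2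
  rw [abs_le]
  constructor <;> linarith [h1.1, h1.2, h2.1, h2.2, h3.1, h3.2]

/-- Iteration of a one-step affine approximation over the scales `ρ ^ k`. The slopes stay bounded
because the increments form a geometric series with ratio `κ`. -/
lemma affine_iter {C1 ρ κ η : ℝ} (hρ : 0 < ρ) (hρ1 : ρ ≤ 1) (hκ : 0 < κ) (hκ1 : κ < 1)
    (hη : 0 ≤ η) (hC1 : 0 < C1) (hs1 : ρ / κ ≤ 1) (hs2 : ρ / κ * (1 / κ) ^ γ ≤ 1)
    (hstep : ∀ (ξ : En n) (F : En n → Matrix (Fin n) (Fin n) ℝ → ℝ) (v : En n → ℝ),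
      Sol lam Lam γ η ξ F v → v 0 = 0 → ∃ p : En n, ‖p‖ ≤ C1 ∧
        ∀ x ∈ ball (0 : En n) ρ, |v x - ⟪p, x⟫| ≤ ρ * κ) (k : ℕ) :
    ∀ (ξ : En n) (F : En n → Matrix (Fin n) (Fin n) ℝ → ℝ) (v : En n → ℝ),
      Sol lam Lam γ η ξ F v → v 0 = 0 → ∃ P : En n, ‖P‖ ≤ C1 / (1 - κ) ∧
        ∀ x ∈ ball (0 : En n) (ρ ^ k), |v x - ⟪P, x⟫| ≤ (ρ * κ) ^ k := by
  have hκ' : 0 < 1 - κ := by linarith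
  induction k with
  | zero =>
    intro ξ F v hv hv0
    refine ⟨0, by rw [norm_zero]; positivity, fun x hx => ?_⟩
    rw [pow_zero] at hx ⊢
    simpa using hv.bdd x hx
  | succ k ih =>
    intro ξ F v hv hv0
    obtain ⟨p, hp, hpb⟩ := hstep ξ F v hv hv0
    have ha : 0 < ρ * κ := by positivity
    have e1 : ρ ^ 2 / (ρ * κ) = ρ / κ := by field_simp
    have e2 : ρ / (ρ * κ) = 1 / κ := by field_simp
    have hv' := hv.scale (Q := p) (c := 0) (η' := η) hρ hρ1 ha
      (by rw [e1, e2, mul_assoc]; exact mul_le_of_le_one_right hη hs2) le_rfl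
      (by rw [e1]; exact mul_le_of_le_one_right hη hs1)
      (fun x hx => by rw [sub_zero]; exact hpb x hx)
    obtain ⟨P, hP, hPb⟩ := ih _ _ _ hv' (by simp [hv0])
    refine ⟨p + κ • P, ?_, fun x hx => ?_⟩
    · calc ‖p + κ • P‖ ≤ ‖p‖ + κ * ‖P‖ := by
            refine (norm_add_le _ _).trans_eq ?_
            rw [norm_smul, Real.norm_of_nonneg hκ.le]
        _ ≤ C1 + κ * (C1 / (1 - κ)) := by gcongr
        _ = C1 / (1 - κ) := by field_simp; ring
    · have hy : ρ⁻¹ • x ∈ ball (0 : En n) (ρ ^ k) := by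
        rw [mem_ball_zero_iff] at hx ⊢
        rw [norm_smul, norm_inv, Real.norm_of_nonneg hρ.le, inv_mul_lt_iff₀ hρ, ← pow_succ']
        exact hx
      have h1 := hPb _ hy
      rw [smul_inv_smul₀ hρ.ne', real_inner_smul_right, real_inner_smul_right] at h1
      have h2 : v x - ⟪p + κ • P, x⟫
          = ρ * κ * ((v x - 0 - ρ * (ρ⁻¹ * ⟪p, x⟫)) / (ρ * κ) - ρ⁻¹ * ⟪P, x⟫) := by
        rw [inner_add_left, real_inner_smul_left]
        field_simp
        ring
      rw [h2, abs_mul, abs_of_pos ha, pow_succ']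
      exact mul_le_mul_of_nonneg_left h1 ha.le

/-- A differentiable function that is `ρ ^ k`-close to linear functions of bounded slope on all the
balls `B_{ρ ^ k}` has a bounded gradient at the origin. -/
lemma gradient_le_of_affine {v : En n → ℝ} {ρ C : ℝ} (hρ : 0 < ρ) (hρ1 : ρ < 1) (hC : 0 ≤ C)
    (hv0 : v 0 = 0) {g : En n} (hg : HasGradientAt v g 0)
    (H : ∀ k : ℕ, ∃ P : En n, ‖P‖ ≤ C ∧ ∀ x ∈ ball (0 : En n) (ρ ^ k), |v x - ⟪P, x⟫| ≤ ρ ^ k) :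
    ‖g‖ ≤ C + 3 := by
  by_cases hg0 : g = 0
  · rw [hg0, norm_zero]; linarith
  have hgn : 0 < ‖g‖ := norm_pos_iff.2 hg0
  have h1 := (hasGradientAt_iff_isLittleO.1 hg).def one_pos
  obtain ⟨δ, hδ, hb⟩ := Metric.eventually_nhds_iff_ball.1 h1
  obtain ⟨k, hk⟩ := exists_pow_lt_of_lt_one hδ hρ1
  obtain ⟨P, hP, hPb⟩ := H k
  set s := ρ ^ k with hs
  have hs0 : 0 < s := by positivity
  set x := (s / 2 / ‖g‖) • g with hx
  have hxn : ‖x‖ = s / 2 := by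
    rw [hx, norm_smul, Real.norm_of_nonneg (by positivity)]; field_simp
  have h2 := abs_le.1 (hPb x (mem_ball_zero_iff.2 (by rw [hxn]; linarith)))
  have h3 := hb x (mem_ball_zero_iff.2 (by rw [hxn]; linarith))
  rw [hv0, sub_zero, sub_zero, one_mul, Real.norm_eq_abs, hxn] at h3
  have h3' := abs_le.1 h3
  have h4 : ⟪g, x⟫ = s / 2 * ‖g‖ := by
    rw [hx, real_inner_smul_right, real_inner_self_eq_norm_sq]; field_simp
  have h5 : ⟪P, x⟫ ≤ C * (s / 2) := by
    refine (real_inner_le_norm P x).trans ?_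
    rw [hxn]
    exact mul_le_mul_of_nonneg_right hP (by positivity)
  have h6 : s / 2 * ‖g‖ ≤ s / 2 * (C + 3) := by linarith [h2.1, h2.2, h3'.1, h3'.2]
  exact le_of_mul_le_mul_left h6 (by positivity)

/-- Uniform gradient bound at the origin, with no smallness assumption on the shift `ξ`. -/
lemma gradient_bound (hl : 0 < lam) (hL : lam ≤ Lam) (hγ : 0 ≤ γ) (hγ1 : γ ≤ 1) (hα : 0 < α₀)
    (hα1 : α₀ < 1) (hC₀ : 0 < C₀) (hap : InteriorC1AlphaEstimate n lam Lam α₀ C₀) :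
    ∃ C2 > (0:ℝ), ∃ η > (0:ℝ), ∀ (ξ : En n)
      (F : En n → Matrix (Fin n) (Fin n) ℝ → ℝ) (v : En n → ℝ),
      Sol lam Lam γ η ξ F v → v 0 = 0 → ∀ g : En n, HasGradientAt v g 0 → ‖g‖ ≤ C2 := by
  obtain ⟨C1, hC1, H⟩ := affine_approx hl hL hγ hα hC₀ hap
  -- The exponent `α₀ / 2` is below `α₀` and satisfies `α₀ / 2 * (1 + γ) ≤ 1`, so rescaling at
  -- order `1 + α₀ / 2` does not leave the class of solutions.
  obtain ⟨ρ, hρ, hρ1, hρC⟩ := exists_small_rpow (b := 1 / 2) (half_pos hα)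
    (show (0:ℝ) < 1 / 2 by norm_num) (by norm_num) C1
  set κ := ρ ^ (α₀ / 2) with hκd
  have hκ : 0 < κ := by positivity
  have hκ1 : κ < 1 := Real.rpow_lt_one hρ.le (by linarith) (by positivity)
  obtain ⟨η, hη, Hη⟩ := H (ρ * κ / 4) (by positivity)
  have hκ' : 0 < 1 - κ := by linarith
  have hs1 : ρ / κ = ρ ^ (1 - α₀ / 2) := by
    rw [Real.rpow_sub hρ, Real.rpow_one]
  have hit := affine_iter (n := n) (lam := lam) (Lam := Lam) (γ := γ) (C1 := C1) (ρ := ρ) (κ := κ)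
    (η := η) hρ (by linarith) hκ hκ1 hη.le hC1
    (by rw [hs1]; exact Real.rpow_le_one hρ.le (by linarith) (by linarith))
    (by
      have h1 : (1 / κ) ^ γ = ρ ^ (-(α₀ / 2 * γ)) := by
        rw [hκd, one_div, ← Real.rpow_neg hρ.le, ← Real.rpow_mul hρ.le, neg_mul]
      rw [hs1, h1, ← Real.rpow_add hρ]
      exact Real.rpow_le_one hρ.le (by linarith) (by nlinarith))
    (fun ξ F v hv hv0 => by
      obtain ⟨p, hp, hpb⟩ := Hη ξ F v hv hv0
      refine ⟨p, hp, fun x hx => (hpb ρ hρ hρ1 x hx).trans ?_⟩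
      have h1 : C1 * ρ ^ (1 + α₀) = ρ * κ * (C1 * κ) := by
        rw [Real.rpow_add hρ, Real.rpow_one, hκd]
        have : ρ ^ α₀ = ρ ^ (α₀ / 2) * ρ ^ (α₀ / 2) := by
          rw [← Real.rpow_add hρ]; ring_nf
        rw [this]; ring
      have h2 : ρ * κ * (C1 * κ) ≤ ρ * κ * (1 / 2) :=
        mul_le_mul_of_nonneg_left hρC (by positivity)
      linarith)
  refine ⟨C1 / (1 - κ) + 3, by positivity, η, hη, fun ξ F v hv hv0 g hg =>
    gradient_le_of_affine hρ (by linarith) (by positivity) hv0 hg fun k => ?_⟩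
  obtain ⟨P, hP, hPb⟩ := hit k ξ F v hv hv0
  refine ⟨P, hP, fun x hx => (hPb x hx).trans ?_⟩
  rw [mul_pow]
  exact mul_le_of_le_one_right (by positivity) (pow_le_one₀ hκ.le hκ1.le)

end GradientBound

/-! ### One-step decay -/

/-- **Discrete regularity.** There are universal `η* > 0` and `ρ ∈ (0,1/2)` such that
smallness of the gradient at `0`, of the coefficient oscillation and of the source
implies the one-step decay `sup_{B_ρ}|u| ≤ ρ^{1+β}`. -/
theorem discrete_regularity
    {n : ℕ} (lam Lam tlam tLam γ θ α₀ C₀ : ℝ)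
    (hlam : 0 < lam) (hlamLam : lam ≤ Lam)
    (htlam : 0 < tlam) (htlamLam : tlam ≤ tLam)
    (hγ : γ ∈ Set.Ioo (0:ℝ) 1) (hθ : θ ∈ Set.Ioo (0:ℝ) 1)
    (hα₀ : α₀ ∈ Set.Ioo (0:ℝ) 1) (hC₀ : 0 < C₀)
    (hapriori : InteriorC1AlphaEstimate n lam Lam α₀ C₀)
    (β : ℝ) (hβ0 : 0 < β) (hβα : β < α₀) (hβθ : β ≤ (1 + θ) / (1 + γ)) :
    ∃ ηs ρ : ℝ, 0 < ηs ∧ 0 < ρ ∧ ρ < 1/2 ∧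
      ∀ (Dg : En n → En n → ℝ) (F : En n → Matrix (Fin n) (Fin n) ℝ → ℝ) (f u : En n → ℝ),
        IsUnifElliptic lam Lam F →
        IsDegeneracyLaw tlam tLam γ Dg →
        ContinuousOn u (ball (0 : En n) 1) →
        (∀ x ∈ ball (0 : En n) 1, |u x| ≤ 1) →
        IsViscositySolutionOn (ball (0 : En n) 1) (fun x p M => Dg x p * F x M) f u →
        u 0 = 0 → DifferentiableAt ℝ u 0 →
        (∃ e₁ e₂ : ℝ,
          (∀ x ∈ ball (0 : En n) 1, ∀ M : Matrix (Fin n) (Fin n) ℝ, M.IsSymm →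
            |F x M - F 0 M| ≤ e₁ * (‖M‖ + 1)) ∧
          (∀ x ∈ ball (0 : En n) 1, |f x| ≤ e₂) ∧
          e₁ + e₂ < ηs) →
        ‖gradient u 0‖ < ηs →
        ∀ x ∈ ball (0 : En n) ρ, |u x| ≤ ρ ^ (1 + β) := by
  obtain ⟨C2, hC2, ηD, hηD, hgrad⟩ :=
    gradient_bound (n := n) hlam hlamLam hγ.1.le hγ.2.le hα₀.1 hα₀.2 hC₀ hapriori
  obtain ⟨C1, hC1, H⟩ := affine_approx hlam hlamLam hγ.1.le hα₀.1 hC₀ hapriori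
  obtain ⟨ρ, hρ, hρ1, hρC⟩ := exists_small_rpow (b := 1 / 4) (sub_pos.2 hβα)
    (show (0:ℝ) < 1 / 4 by norm_num) (by norm_num) C1
  obtain ⟨σ, hσd⟩ : ∃ σ, σ = ρ ^ β / 4 := ⟨_, rfl⟩
  have hσ : 0 < σ := by rw [hσd]; positivity
  obtain ⟨r, hr, hr1, hrC⟩ := exists_small_rpow (b := 1 / 2) hα₀.1
    (show (0:ℝ) < σ / 4 by positivity) (by norm_num) (C2 * C1)
  obtain ⟨ε, hεd⟩ : ∃ ε, ε = min (σ * r / (8 * (C2 + 1))) (ρ ^ (1 + β) / 8) := ⟨_, rfl⟩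
  have hε : 0 < ε := by rw [hεd]; exact lt_min (by positivity) (by positivity)
  have hε1 : ε * (8 * (C2 + 1)) ≤ σ * r := by
    rw [← le_div_iff₀ (by positivity), hεd]; exact min_le_left _ _
  have hε2 : ε ≤ ρ ^ (1 + β) / 8 := by rw [hεd]; exact min_le_right _ _
  obtain ⟨ηA, hηA, HA⟩ := H ε hε
  obtain ⟨a, had⟩ : ∃ a, a = C1 * r ^ (1 + α₀) + 2 * ε := ⟨_, rfl⟩
  have ha : 0 < a := by rw [had]; positivity
  have hCa : C2 * a ≤ σ / 2 * r := by
    have e1 : C2 * (C1 * r ^ (1 + α₀)) = C2 * C1 * r ^ α₀ * r := by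
      rw [Real.rpow_add hr, Real.rpow_one]; ring
    have e2 := mul_le_mul_of_nonneg_right hrC hr.le
    rw [had, mul_add, e1]
    linarith
  -- `m` is the factor by which rescaling from `B_r` with height `a` enlarges the smallness
  -- parameter of the class.
  obtain ⟨m, hmd⟩ : ∃ m, m = max 1 (max ((r ^ 2 / a) * (r / a) ^ γ) (r ^ 2 / a)) := ⟨_, rfl⟩
  have hm1 : 1 ≤ m := by rw [hmd]; exact le_max_left _ _
  have hm2 : (r ^ 2 / a) * (r / a) ^ γ ≤ m := by
    rw [hmd]; exact (le_max_left _ _).trans (le_max_right _ _)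
  have hm3 : r ^ 2 / a ≤ m := by
    rw [hmd]; exact (le_max_right _ _).trans (le_max_right _ _)
  have hm0 : 0 < m := by linarith
  obtain ⟨η, hηd⟩ : ∃ η, η = min ηA (ηD / m) := ⟨_, rfl⟩
  have hη : 0 < η := by rw [hηd]; exact lt_min hηA (by positivity)
  have hηA' : η ≤ ηA := by rw [hηd]; exact min_le_left _ _
  have hηm : η * m ≤ ηD := by rw [← le_div_iff₀ hm0, hηd]; exact min_le_right _ _
  refine ⟨min η (min (tlam * η) (σ / 2)), ρ,
    lt_min hη (lt_min (by positivity) (by positivity)), hρ, by linarith, ?_⟩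
  intro Dg F f u hF hD hc hb hu hu0 hdiff ⟨e₁, e₂, hosc, hf, he⟩ hg x hx
  have h0 : (0 : En n) ∈ ball (0 : En n) 1 := mem_ball_self one_pos
  have he₂ : 0 ≤ e₂ := (abs_nonneg _).trans (hf 0 h0)
  have he₁ : 0 ≤ e₁ := by
    have := (abs_nonneg _).trans (hosc 0 h0 0 (Matrix.isSymm_zero))
    rwa [norm_zero, zero_add, mul_one] at this
  have hlt1 : e₁ + e₂ < η := he.trans_le (min_le_left _ _)
  have hlt2 : e₁ + e₂ < tlam * η :=
    he.trans_le ((min_le_right _ _).trans (min_le_left _ _))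
  have hg' : ‖gradient u 0‖ ≤ σ / 2 :=
    hg.le.trans ((min_le_right _ _).trans (min_le_right _ _))
  have hb1 : e₁ ≤ η := by linarith
  have hb2 : e₂ / tlam ≤ η := by rw [div_le_iff₀ htlam]; linarith
  have hsol : Sol lam Lam γ η 0 F u :=
    sol_of_viscosity hlam hlamLam htlam hγ.1 hF hD hc hb hu hosc hf hb1 hb2
  have hsolA : Sol lam Lam γ ηA 0 F u :=
    sol_of_viscosity hlam hlamLam htlam hγ.1 hF hD hc hb hu hosc hf (hb1.trans hηA')
      (hb2.trans hηA')
  obtain ⟨p, -, hpb⟩ := HA 0 F u hsolA hu0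
  have hscale := hsol.scale (Q := p) (r := r) (a := a) (c := 0) (η' := ηD) hr (by linarith) ha
    (by rw [mul_assoc]; exact (mul_le_mul_of_nonneg_left hm2 hη.le).trans hηm)
    ((le_mul_of_one_le_right hη.le hm1).trans hηm)
    ((mul_le_mul_of_nonneg_left hm3 hη.le).trans hηm)
    (fun y hy => by rw [sub_zero, had]; exact hpb r hr hr1 y hy)
  have hder : HasGradientAt (fun y => (u (r • y) - 0 - r * ⟪p, y⟫) / a)
      ((r / a) • (gradient u 0 - p)) 0 := by
    have h1 : HasFDerivAt u (innerSL ℝ (gradient u 0)) (r • (0 : En n)) := by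
      rw [smul_zero]; exact hdiff.hasGradientAt.hasFDerivAt
    have h2 : HasFDerivAt (fun y : En n => r • y) (r • ContinuousLinearMap.id ℝ (En n)) 0 :=
      (hasFDerivAt_id (0 : En n)).const_smul r
    have h3 := ((h1.comp (0 : En n) h2).sub
      ((innerSL ℝ p).hasFDerivAt.const_smul r)).const_smul a⁻¹
    rw [hasGradientAt_iff_hasFDerivAt]
    refine (h3.congr_of_eventuallyEq (Filter.Eventually.of_forall fun y => ?_)).congr_fderiv ?_
    · simp [div_eq_inv_mul]
    · ext y
      simp
      field_simp
  have hgb := hgrad _ _ _ hscale (by simp [hu0]) _ hder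
  -- The gradient bound for the rescaled function forces the slope `p` to be small.
  have hgp : ‖gradient u 0 - p‖ ≤ σ / 2 := by
    rw [norm_smul, Real.norm_of_nonneg (by positivity), div_mul_eq_mul_div,
      div_le_iff₀ ha] at hgb
    have : r * ‖gradient u 0 - p‖ ≤ r * (σ / 2) := by linarith
    exact le_of_mul_le_mul_left this hr
  have hp : ‖p‖ ≤ σ := by
    have h1 : ‖p‖ ≤ ‖gradient u 0‖ + ‖gradient u 0 - p‖ := by
      have := norm_sub_le (gradient u 0) (gradient u 0 - p)
      rwa [sub_sub_cancel] at this
    linarith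
  have h1 := abs_le.1 (hpb ρ hρ (by linarith) x hx)
  have h2 : |⟪p, x⟫| ≤ σ * ρ :=
    (abs_real_inner_le_norm p x).trans
      (mul_le_mul hp (mem_ball_zero_iff.1 hx).le (norm_nonneg _) hσ.le)
  have h2' := abs_le.1 h2
  have h3 : σ * ρ = ρ ^ (1 + β) / 4 := by
    rw [hσd, Real.rpow_add hρ, Real.rpow_one]; ring
  have h4 : C1 * ρ ^ (1 + α₀) ≤ ρ ^ (1 + β) / 4 := by
    have h5 : ρ ^ (1 + α₀) = ρ ^ (1 + β) * ρ ^ (α₀ - β) := by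
      rw [← Real.rpow_add hρ]; ring_nf
    have h6 := mul_le_mul_of_nonneg_left hρC (Real.rpow_nonneg hρ.le (1 + β))
    rw [h5]
    linarith
  have h7 : 0 < ρ ^ (1 + β) := by positivity
  rw [abs_le]
  constructor <;> linarith [h1.1, h1.2, h2'.1, h2'.2]

end
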